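/- arXiv:1609.03914 — 3 statements merged into one kernel-verified Lean document; each statement's English description precedes it below -/
import Mathlib

section
/- Under Assumption B, the Hausdorff dimension of the attractor and of the self-affine measure satisfy dim_H(Λ) = dim_H(ν) = min(2, 1 + log(Nc)/(−log b)). -/
open MeasureTheory Filter Set Topology
open scoped ENNReal

noncomputable section

/-- One triangular affine map `S_i(x,y) = (c x + u_i, d_i x + b y + v_i)`. -/
def Smap {N : ℕ} (c b : ℝ) (u v d : Fin N → ℝ) (i : Fin N) (p : ℝ × ℝ) : ℝ × ℝ :=
  (c * p.1 + u i, d i * p.1 + b * p.2 + v i)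

/-- Composition along a finite word: `Sword [i₁,…,iₙ] = S_{i₁} ∘ ⋯ ∘ S_{iₙ}`. -/
def Sword {N : ℕ} (c b : ℝ) (u v d : Fin N → ℝ) : List (Fin N) → (ℝ × ℝ) → ℝ × ℝ
  | [] => id
  | i :: w => Smap c b u v d i ∘ Sword c b u v d w

/-- The closed unit square `[0,1]²`. -/
def unitSq : Set (ℝ × ℝ) := Set.Icc 0 1 ×ˢ Set.Icc 0 1

/-- The length-`n` prefix of an infinite word, as a list. -/
def prefixWord {N : ℕ} (i : ℕ → Fin N) (n : ℕ) : List (Fin N) :=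
  List.ofFn (fun k : Fin n => i k)

/-- The transversality condition: there is `c₃ > 0` such that for every `n` and all
`𝐢, 𝐣` with different first symbols, the projection to the `x`-axis of the intersection
of the two level-`n` cylinder parallelograms has diameter `< c₃ bⁿ`. -/
def Transversality (N : ℕ) (c b : ℝ) (u v d : Fin N → ℝ) : Prop :=
  ∃ c₃ > (0 : ℝ), ∀ (n : ℕ) (i j : ℕ → Fin N), i 0 ≠ j 0 →
    Metric.diam (Prod.fst '' (Sword c b u v d (prefixWord i n) '' unitSq ∩
      Sword c b u v d (prefixWord j n) '' unitSq)) < c₃ * b ^ n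

/-- `μ` is the uniform Bernoulli measure `(1/N,…,1/N)^ℕ` on the symbolic space. -/
def IsUniformBernoulli (N : ℕ) (μ : Measure (ℕ → Fin N)) : Prop :=
  IsProbabilityMeasure μ ∧ ∀ (n : ℕ) (w : Fin n → Fin N),
    μ {x | ∀ k : Fin n, x (k : ℕ) = w k} = (1 / (N : ℝ≥0∞)) ^ n

/-- `m` is absolutely continuous w.r.t. Lebesgue measure with an `L^q` density. -/
def HasLqDensity (m : Measure ℝ) (q : ℝ) : Prop :=
  ∃ φ : ℝ → ℝ≥0∞, m = MeasureTheory.volume.withDensity φ ∧ (∫⁻ t, φ t ^ q) < ⊤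

/-- The Hausdorff dimension of a measure: the infimum of Hausdorff dimensions
of sets of full measure. -/
def measureDimH {X : Type*} [EMetricSpace X] [MeasurableSpace X] (m : Measure X) : ℝ≥0∞ :=
  ⨅ (A : Set X) (_ : m Aᶜ = 0), dimH A

/-- The standing hypotheses (without transversality and the density hypothesis). -/
structure Sys (N : ℕ) (b c : ℝ) (u v d : Fin N → ℝ) (Pi : (ℕ → Fin N) → ℝ × ℝ)
    (μ : Measure (ℕ → Fin N)) : Prop where
  hN : 2 ≤ N
  hb0 : 0 < b
  hb1 : b < 1
  hc0 : 0 < c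
  hc1 : c < 1
  hbc : b < c
  hNc : 1 < (N : ℝ) * c
  hmaps : ∀ i, Smap c b u v d i '' unitSq ⊆ unitSq
  hPi : ∀ i, Tendsto (fun n => Sword c b u v d (prefixWord i n) 0) atTop (nhds (Pi i))
  hμ : IsUniformBernoulli N μ

/-- shift -/
def sh {N : ℕ} (m : ℕ) (i : ℕ → Fin N) : ℕ → Fin N := fun k => i (k + m)

/-- the off-diagonal coefficient -/
def dd {N : ℕ} (b c : ℝ) (d : Fin N → ℝ) : ℕ → (ℕ → Fin N) → ℝ
  | 0, _ => 0
  | m + 1, i => d (i 0) * c ^ m + b * dd b c d m (sh 1 i)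

theorem sh_sh {N : ℕ} (m n : ℕ) (i : ℕ → Fin N) : sh m (sh n i) = sh (m + n) i := by
  funext k; simp [sh, add_assoc]

theorem sh_zero {N : ℕ} (i : ℕ → Fin N) : sh 0 i = i := by
  funext k; simp [sh]

theorem prefixWord_zero {N : ℕ} (i : ℕ → Fin N) : prefixWord i 0 = [] := by
  simp [prefixWord]

theorem prefixWord_succ {N : ℕ} (i : ℕ → Fin N) (m : ℕ) :
    prefixWord i (m + 1) = i 0 :: prefixWord (sh 1 i) m := by
  simp [prefixWord, sh, List.ofFn_succ]

theorem prefixWord_congr {N : ℕ} {i j : ℕ → Fin N} {m : ℕ} (h : ∀ k < m, i k = j k) :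
    prefixWord i m = prefixWord j m := by
  unfold prefixWord
  congr 1
  funext k
  exact h k k.2

theorem dd_congr {N : ℕ} (b c : ℝ) (d : Fin N → ℝ) {m : ℕ} {i j : ℕ → Fin N} (h : ∀ k < m, i k = j k) :
    dd b c d m i = dd b c d m j := by
  induction m generalizing i j with
  | zero => rfl
  | succ m ih =>
    simp only [dd]
    rw [h 0 (by omega), ih (i := sh 1 i) (j := sh 1 j) (fun k hk => h _ (by omega))]

theorem Sword_formula {N : ℕ} (b c : ℝ) (u v d : Fin N → ℝ) (m : ℕ) (i : ℕ → Fin N) (p : ℝ × ℝ) :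
    Sword c b u v d (prefixWord i m) p =
      (c ^ m * p.1 + (Sword c b u v d (prefixWord i m) 0).1,
       dd b c d m i * p.1 + b ^ m * p.2 + (Sword c b u v d (prefixWord i m) 0).2) := by
  induction m generalizing i with
  | zero => simp [prefixWord_zero, Sword, dd]
  | succ m ih =>
    rw [prefixWord_succ]
    simp only [Sword, Function.comp]
    rw [ih (sh 1 i)]
    simp only [Smap, dd]
    ext <;> simp <;> ring

theorem Sword_mem {N : ℕ} {b c : ℝ} {u v d : Fin N → ℝ}
    (hmaps : ∀ i, Smap c b u v d i '' unitSq ⊆ unitSq) (l : List (Fin N)) {p : ℝ × ℝ}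
    (hp : p ∈ unitSq) : Sword c b u v d l p ∈ unitSq := by
  induction l with
  | nil => simpa [Sword] using hp
  | cons a l ih => exact hmaps a ⟨_, ih, rfl⟩

theorem unitSq_iff (p : ℝ × ℝ) : p ∈ unitSq ↔ (0 ≤ p.1 ∧ p.1 ≤ 1) ∧ (0 ≤ p.2 ∧ p.2 ≤ 1) := by
  unfold unitSq
  rw [Set.mem_prod, Set.mem_Icc, Set.mem_Icc]

theorem isClosed_unitSq : IsClosed unitSq := by
  unfold unitSq
  exact isClosed_Icc.prod isClosed_Icc

/-- bound for the shear -/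
def KK {N : ℕ} (b c : ℝ) (d : Fin N → ℝ) : ℝ := (∑ i, |d i|) / (c - b)

namespace Sys

variable {N : ℕ} {b c : ℝ} {u v d : Fin N → ℝ} {Pi : (ℕ → Fin N) → ℝ × ℝ}
    {μ : Measure (ℕ → Fin N)}

theorem KK_nonneg (H : Sys N b c u v d Pi μ) : 0 ≤ KK b c d :=
  div_nonneg (Finset.sum_nonneg fun _ _ => abs_nonneg _) (by linarith [H.hbc])

theorem dd_le' (H : Sys N b c u v d Pi μ) (m : ℕ) (i : ℕ → Fin N) :
    |dd b c d m i| ≤ KK b c d * (c ^ m - b ^ m) := by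
  induction m generalizing i with
  | zero => simp [dd]
  | succ m ih =>
    have h1 : |d (i 0)| ≤ KK b c d * (c - b) := by
      unfold KK
      rw [div_mul_cancel₀ _ (by linarith [H.hbc])]
      exact Finset.single_le_sum (f := fun i => |d i|) (fun _ _ => abs_nonneg _) (Finset.mem_univ _)
    simp only [dd]
    have hc := pow_nonneg H.hc0.le m
    calc _ ≤ |d (i 0) * c ^ m| + |b * dd b c d m (sh 1 i)| := abs_add_le _ _
      _ = |d (i 0)| * c ^ m + b * |dd b c d m (sh 1 i)| := by
        rw [abs_mul, abs_mul, abs_of_nonneg hc, abs_of_pos H.hb0]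
      _ ≤ (KK b c d * (c - b)) * c ^ m + b * (KK b c d * (c ^ m - b ^ m)) := by
        gcongr
        · exact H.hb0.le
        · exact ih _
      _ = _ := by ring

theorem dd_le (H : Sys N b c u v d Pi μ) (m : ℕ) (i : ℕ → Fin N) :
    |dd b c d m i| ≤ KK b c d * c ^ m := by
  refine (H.dd_le' m i).trans ?_
  have := pow_nonneg H.hb0.le m
  have := H.KK_nonneg
  nlinarith

theorem Pi_mem (H : Sys N b c u v d Pi μ) (i : ℕ → Fin N) : Pi i ∈ unitSq := by
  refine isClosed_unitSq.mem_of_tendsto (H.hPi i) (Eventually.of_forall fun n => ?_)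
  refine Sword_mem H.hmaps _ ?_
  rw [unitSq_iff]; simp

theorem Pi_succ (H : Sys N b c u v d Pi μ) (i : ℕ → Fin N) :
    Pi i = Smap c b u v d (i 0) (Pi (sh 1 i)) := by
  have h1 := (H.hPi i).comp (tendsto_add_atTop_nat 1)
  refine tendsto_nhds_unique h1 ?_
  have hcont : Continuous (Smap c b u v d (i 0)) := by
    unfold Smap; fun_prop
  refine ((hcont.tendsto _).comp (H.hPi (sh 1 i))).congr fun n => ?_
  simp only [Function.comp]
  rw [prefixWord_succ]
  rfl

theorem Pi_shift (H : Sys N b c u v d Pi μ) (m : ℕ) (i : ℕ → Fin N) :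
    Pi i = Sword c b u v d (prefixWord i m) (Pi (sh m i)) := by
  induction m generalizing i with
  | zero => simp [prefixWord_zero, Sword, sh_zero]
  | succ m ih =>
    rw [prefixWord_succ, H.Pi_succ i, ih (sh 1 i), sh_sh]
    rfl

theorem Pi_formula (H : Sys N b c u v d Pi μ) (m : ℕ) (i : ℕ → Fin N) :
    Pi i = (c ^ m * (Pi (sh m i)).1 + (Sword c b u v d (prefixWord i m) 0).1,
       dd b c d m i * (Pi (sh m i)).1 + b ^ m * (Pi (sh m i)).2
         + (Sword c b u v d (prefixWord i m) 0).2) := by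
  conv_lhs => rw [H.Pi_shift m i, Sword_formula]

theorem Pi_close (H : Sys N b c u v d Pi μ) {m : ℕ} {i j : ℕ → Fin N} (h : ∀ k < m, i k = j k) :
    |(Pi i).1 - (Pi j).1| ≤ c ^ m ∧ |(Pi i).2 - (Pi j).2| ≤ (KK b c d + 1) * c ^ m := by
  have hi := (unitSq_iff _).1 (H.Pi_mem (sh m i))
  have hj := (unitSq_iff _).1 (H.Pi_mem (sh m j))
  have hc := pow_nonneg H.hc0.le m
  have hb := pow_nonneg H.hb0.le m
  have hbc : b ^ m ≤ c ^ m := pow_le_pow_left₀ H.hb0.le H.hbc.le m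
  have h1 : |(Pi (sh m i)).1 - (Pi (sh m j)).1| ≤ 1 := by rw [abs_le]; constructor <;> linarith
  have h2 : |(Pi (sh m i)).2 - (Pi (sh m j)).2| ≤ 1 := by rw [abs_le]; constructor <;> linarith
  rw [H.Pi_formula m i, H.Pi_formula m j, prefixWord_congr h, dd_congr b c d h]
  constructor
  · have : |c ^ m * ((Pi (sh m i)).1 - (Pi (sh m j)).1)| ≤ c ^ m := by
      rw [abs_mul, abs_of_nonneg hc]; nlinarith
    convert this using 2
    simp; ring
  · have e : ∀ x y x' y' D V : ℝ, (D * x + b ^ m * y + V) - (D * x' + b ^ m * y' + V) =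
      D * (x - x') + b ^ m * (y - y') := by intros; ring
    simp only [e]
    refine (abs_add_le _ _).trans ?_
    rw [abs_mul, abs_mul, abs_of_nonneg hb]
    have := H.dd_le m j
    have := H.KK_nonneg
    have := mul_le_mul this h1 (abs_nonneg _) (by positivity)
    have := mul_le_mul (H.dd_le m j) h1 (abs_nonneg _) (by positivity)
    nlinarith

theorem continuous_Pi (H : Sys N b c u v d Pi μ) : Continuous Pi := by
  rw [continuous_iff_continuousAt]
  intro i
  rw [ContinuousAt, Metric.tendsto_nhds]
  intro ε hε
  have hK := H.KK_nonneg
  obtain ⟨m, hm⟩ := exists_pow_lt_of_lt_one (show 0 < ε / (KK b c d + 1) by positivity) H.hc1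
  rw [lt_div_iff₀ (by positivity)] at hm
  have : {j : ℕ → Fin N | ∀ k < m, i k = j k} ∈ 𝓝 i := by
    have : {j : ℕ → Fin N | ∀ k < m, i k = j k} = ⋂ k ∈ Finset.range m, {j | j k = i k} := by
      ext j; simp [eq_comm]
    rw [this]
    refine (Filter.biInter_finset_mem _).2 fun k _ => ?_
    have : IsOpen {j : ℕ → Fin N | j k = i k} :=
      (isOpen_discrete ({i k} : Set (Fin N))).preimage
        (continuous_apply (A := fun _ : ℕ => Fin N) k)
    exact this.mem_nhds rfl
  filter_upwards [this] with j hj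
  have hc := pow_nonneg H.hc0.le m
  obtain ⟨h1, h2⟩ := H.Pi_close hj
  rw [dist_comm, Prod.dist_eq, max_lt_iff, Real.dist_eq, Real.dist_eq]
  constructor <;> nlinarith

theorem measurable_Pi (H : Sys N b c u v d Pi μ) : Measurable Pi := H.continuous_Pi.measurable

end Sys

/-- cylinder sets -/
def cyl {N : ℕ} (m : ℕ) (w : Fin m → Fin N) : Set (ℕ → Fin N) := {x | ∀ k : Fin m, x (k : ℕ) = w k}

/-- prefix as a function -/
def pre {N : ℕ} (m : ℕ) (x : ℕ → Fin N) : Fin m → Fin N := fun k => x k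

theorem mem_cyl {N m : ℕ} {w : Fin m → Fin N} {x : ℕ → Fin N} : x ∈ cyl m w ↔ pre m x = w := by
  simp [cyl, pre, funext_iff]

theorem pre_eq_iff {N m : ℕ} {x y : ℕ → Fin N} : pre m x = pre m y ↔ ∀ k < m, x k = y k := by
  constructor
  · intro h k hk
    exact congrFun h ⟨k, hk⟩
  · intro h; funext k; exact h k k.2

theorem measurable_pre {N m : ℕ} : Measurable (pre m : (ℕ → Fin N) → _) :=
  measurable_pi_lambda _ fun k => measurable_pi_apply _

theorem measurable_sh {N m : ℕ} : Measurable (sh m : (ℕ → Fin N) → _) :=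
  measurable_pi_lambda _ fun k => measurable_pi_apply _

theorem cyl_eq_preimage {N m : ℕ} (w : Fin m → Fin N) : cyl m w = pre m ⁻¹' {w} := by
  ext x; simp [mem_cyl]

theorem measurableSet_cyl {N m : ℕ} (w : Fin m → Fin N) : MeasurableSet (cyl m w) := by
  rw [cyl_eq_preimage]
  exact measurable_pre (measurableSet_singleton _)

theorem isPiSystem_cyl {N : ℕ} : IsPiSystem {s : Set (ℕ → Fin N) | ∃ m, ∃ w : Fin m → Fin N, s = cyl m w} := by
  rintro _ ⟨m, w, rfl⟩ _ ⟨n, w', rfl⟩ ⟨x, hx1, hx2⟩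
  rcases le_total m n with h | h
  · refine ⟨n, w', ?_⟩
    apply Set.inter_eq_right.2
    intro y hy k
    have h1 := hx1 k
    have h2 := hx2 ⟨k, by omega⟩
    have h3 := hy ⟨k, by omega⟩
    simp only at h2 h3
    rw [h3, ← h2, h1]
  · refine ⟨m, w, ?_⟩
    apply Set.inter_eq_left.2
    intro y hy k
    have h1 := hx2 k
    have h2 := hx1 ⟨k, by omega⟩
    have h3 := hy ⟨k, by omega⟩
    simp only at h2 h3
    rw [h3, ← h2, h1]

theorem generate_cyl {N : ℕ} : (MeasurableSpace.pi : MeasurableSpace (ℕ → Fin N)) =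
    MeasurableSpace.generateFrom {s : Set (ℕ → Fin N) | ∃ m, ∃ w : Fin m → Fin N, s = cyl m w} := by
  apply le_antisymm
  · refine iSup_le fun k => ?_
    rintro _ ⟨t, -, rfl⟩
    have : (fun x : ℕ → Fin N => x k) ⁻¹' t =
        ⋃ w ∈ {w : Fin (k+1) → Fin N | w ⟨k, by omega⟩ ∈ t}, cyl (k+1) w := by
      ext x
      simp only [Set.mem_preimage, Set.mem_iUnion, mem_cyl, Set.mem_ofPred_eq, exists_prop]
      constructor
      · intro h; exact ⟨_, h, rfl⟩
      · rintro ⟨w, h, rfl⟩; exact h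
    rw [this]
    refine MeasurableSet.biUnion (Set.to_countable _) fun w _ => ?_
    exact MeasurableSpace.measurableSet_generateFrom ⟨_, w, rfl⟩
  · refine MeasurableSpace.generateFrom_le ?_
    rintro _ ⟨m, w, rfl⟩
    exact measurableSet_cyl w

theorem bern_shift {N : ℕ} {μ : Measure (ℕ → Fin N)} (hμ : IsUniformBernoulli N μ) (m : ℕ)
    (w : Fin m → Fin N) :
    (μ.restrict (cyl m w)).map (sh m) = ((1 / (N : ℝ≥0∞)) ^ m) • μ := by
  have := hμ.1
  have : IsFiniteMeasure ((μ.restrict (cyl m w)).map (sh m)) :=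
    Measure.isFiniteMeasure_map _ _
  refine ext_of_generate_finite _ generate_cyl isPiSystem_cyl ?_ ?_
  · rintro _ ⟨n, w', rfl⟩
    rw [Measure.map_apply measurable_sh (measurableSet_cyl _),
      Measure.restrict_apply (measurable_sh (measurableSet_cyl _))]
    have : sh m ⁻¹' cyl n w' ∩ cyl m w = {x | ∀ k : Fin (m + n), x (k : ℕ) = Fin.append w w' k} := by
      ext x
      simp only [Set.mem_inter_iff, Set.mem_preimage, cyl, Set.mem_ofPred_eq, sh]
      constructor
      · rintro ⟨h1, h2⟩ k
        refine Fin.addCases (fun k => ?_) (fun k => ?_) k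
        · rw [Fin.append_left]; exact h2 k
        · rw [Fin.append_right, ← h1 k]; simp [add_comm]
      · intro h
        refine ⟨fun k => ?_, fun k => ?_⟩
        · have := h (Fin.natAdd m k)
          rw [Fin.append_right] at this
          rw [← this]; simp [add_comm]
        · have := h (Fin.castAdd n k)
          rw [Fin.append_left] at this
          exact this
    rw [this, hμ.2, Measure.smul_apply, cyl, hμ.2, pow_add, smul_eq_mul]
  · rw [Measure.map_apply measurable_sh MeasurableSet.univ]
    simp only [Set.preimage_univ, Measure.restrict_apply MeasurableSet.univ, Set.univ_inter]
    rw [cyl, hμ.2]; simp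

theorem bern_shift_apply {N : ℕ} {μ : Measure (ℕ → Fin N)} (hμ : IsUniformBernoulli N μ) (m : ℕ)
    (w : Fin m → Fin N) {A : Set (ℕ → Fin N)} (hA : MeasurableSet A) :
    μ.real (cyl m w ∩ sh m ⁻¹' A) = ((N : ℝ) ^ m)⁻¹ * μ.real A := by
  have := congrArg (fun m : Measure _ => m A) (bern_shift hμ m w)
  rw [Measure.map_apply measurable_sh hA, Measure.restrict_apply (measurable_sh hA), Set.inter_comm]
    at this
  simp only [Measure.real, this, Measure.smul_apply, smul_eq_mul, ENNReal.toReal_mul]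
  simp

theorem bern_shift2 {N : ℕ} {μ : Measure (ℕ → Fin N)} (hμ : IsUniformBernoulli N μ) (m : ℕ)
    (w w' : Fin m → Fin N) {A : Set ((ℕ → Fin N) × (ℕ → Fin N))} (hA : MeasurableSet A) :
    (μ.prod μ).real ((cyl m w ×ˢ cyl m w') ∩ Prod.map (sh m) (sh m) ⁻¹' A) =
      ((N : ℝ) ^ m)⁻¹ * ((N : ℝ) ^ m)⁻¹ * (μ.prod μ).real A := by
  have := hμ.1
  have h := Measure.map_prod_map (μ.restrict (cyl m w)) (μ.restrict (cyl m w'))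
    (measurable_sh (m := m)) (measurable_sh (m := m))
  rw [Measure.prod_restrict, bern_shift hμ, bern_shift hμ, Measure.prod_smul_left,
    Measure.prod_smul_right] at h
  have h := congrArg (fun m : Measure _ => m A) h
  rw [Measure.map_apply (measurable_sh.prodMap measurable_sh) hA,
    Measure.restrict_apply ((measurable_sh.prodMap measurable_sh) hA), Set.inter_comm] at h
  simp only [Measure.real, ← h, Measure.smul_apply, smul_eq_mul, ENNReal.toReal_mul]
  simp [mul_assoc]

theorem bern_pair_cyl {N : ℕ} {μ : Measure (ℕ → Fin N)} (hμ : IsUniformBernoulli N μ) (m : ℕ)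
    (w w' : Fin m → Fin N) :
    (μ.prod μ).real (cyl m w ×ˢ cyl m w') = ((N : ℝ) ^ m)⁻¹ * ((N : ℝ) ^ m)⁻¹ := by
  have := hμ.1
  have := bern_shift2 hμ m w w' (A := Set.univ) MeasurableSet.univ
  simpa using this

/-- pairs with a common prefix of length at least `k` -/
theorem bern_common {N : ℕ} (hN : 2 ≤ N) {μ : Measure (ℕ → Fin N)} (hμ : IsUniformBernoulli N μ) (k : ℕ)
    {A E : Set ((ℕ → Fin N) × (ℕ → Fin N))} (hA : MeasurableSet A)
    (hE : ∀ p ∈ E, pre k p.1 = pre k p.2 ∧ (sh k p.1, sh k p.2) ∈ A) :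
    (μ.prod μ).real E ≤ ((N : ℝ) ^ k)⁻¹ * (μ.prod μ).real A := by
  have := hμ.1
  have hsub : E ⊆ ⋃ w ∈ (Finset.univ : Finset (Fin k → Fin N)),
      ((cyl k w ×ˢ cyl k w) ∩ Prod.map (sh k) (sh k) ⁻¹' A) := by
    intro p hp
    obtain ⟨h1, h2⟩ := hE p hp
    simp only [Finset.mem_univ, Set.iUnion_true, Set.mem_iUnion]
    exact ⟨pre k p.1, ⟨mem_cyl.2 rfl, mem_cyl.2 h1.symm⟩, h2⟩
  calc (μ.prod μ).real E ≤ _ := measureReal_mono hsub (measure_ne_top _ _)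
    _ ≤ ∑ w ∈ (Finset.univ : Finset (Fin k → Fin N)), _ := measureReal_biUnion_finset_le _ _
    _ = ∑ w ∈ (Finset.univ : Finset (Fin k → Fin N)),
        ((N : ℝ) ^ k)⁻¹ * ((N : ℝ) ^ k)⁻¹ * (μ.prod μ).real A := by
      refine Finset.sum_congr rfl fun w _ => bern_shift2 hμ k w w hA
    _ = _ := by
      have : (N : ℝ) ^ k ≠ 0 := by positivity
      simp
      field_simp

/-- arbitrary (measurable) form with a subset on the right of arbitrary nature -/
theorem bern_active {N : ℕ} {μ : Measure (ℕ → Fin N)} (hμ : IsUniformBernoulli N μ) (m : ℕ)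
    {E D : Set ((ℕ → Fin N) × (ℕ → Fin N))} (hmono : ∀ p ∈ E, ∀ q : (ℕ → Fin N) × (ℕ → Fin N),
      pre m q.1 = pre m p.1 → pre m q.2 = pre m p.2 → q ∈ D) (β : ℝ) (hβ : 0 ≤ β)
    (hcond : ∀ w w' : Fin m → Fin N, (μ.prod μ).real (E ∩ (cyl m w ×ˢ cyl m w')) ≤
      ((N : ℝ) ^ m)⁻¹ * ((N : ℝ) ^ m)⁻¹ * β) :
    (μ.prod μ).real E ≤ β * (μ.prod μ).real D := by
  classical
  have := hμ.1
  let T : Finset ((Fin m → Fin N) × (Fin m → Fin N)) :=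
    Finset.univ.filter fun ww => ∃ p ∈ E, pre m p.1 = ww.1 ∧ pre m p.2 = ww.2
  have hsub : E ⊆ ⋃ ww ∈ T, (E ∩ (cyl m ww.1 ×ˢ cyl m ww.2)) := by
    intro p hp
    simp only [Set.mem_iUnion]
    refine ⟨(pre m p.1, pre m p.2), ?_, hp, mem_cyl.2 rfl, mem_cyl.2 rfl⟩
    simp only [T, Finset.mem_filter, Finset.mem_univ, true_and]
    exact ⟨p, hp, rfl, rfl⟩
  have hD : ⋃ ww ∈ T, (cyl m ww.1 ×ˢ cyl m ww.2) ⊆ D := by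
    intro q hq
    simp only [Set.mem_iUnion] at hq
    obtain ⟨ww, hw, hq1, hq2⟩ := hq
    simp only [T, Finset.mem_filter, Finset.mem_univ, true_and] at hw
    obtain ⟨p, hp, h1, h2⟩ := hw
    exact hmono p hp q ((mem_cyl.1 hq1).trans h1.symm) ((mem_cyl.1 hq2).trans h2.symm)
  have hDm : (μ.prod μ).real (⋃ ww ∈ T, (cyl m ww.1 ×ˢ cyl m ww.2)) =
      ∑ ww ∈ T, ((N : ℝ) ^ m)⁻¹ * ((N : ℝ) ^ m)⁻¹ := by
    rw [measureReal_biUnion_finset]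
    · exact Finset.sum_congr rfl fun ww _ => bern_pair_cyl hμ m _ _
    · intro a _ a' _ haa
      refine Set.disjoint_left.2 fun q hq hq' => haa ?_
      exact Prod.ext ((mem_cyl.1 hq.1).symm.trans (mem_cyl.1 hq'.1))
        ((mem_cyl.1 hq.2).symm.trans (mem_cyl.1 hq'.2))
    · intro a _
      exact (measurableSet_cyl _).prod (measurableSet_cyl _)
  calc (μ.prod μ).real E ≤ _ := measureReal_mono hsub (measure_ne_top _ _)
    _ ≤ ∑ ww ∈ T, _ := measureReal_biUnion_finset_le _ _
    _ ≤ ∑ ww ∈ T, ((N : ℝ) ^ m)⁻¹ * ((N : ℝ) ^ m)⁻¹ * β := Finset.sum_le_sum fun ww _ => hcond _ _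
    _ = β * ∑ ww ∈ T, ((N : ℝ) ^ m)⁻¹ * ((N : ℝ) ^ m)⁻¹ := by
      rw [← Finset.sum_mul, mul_comm]
    _ ≤ _ := by
      rw [← hDm]
      exact mul_le_mul_of_nonneg_left (measureReal_mono hD (measure_ne_top _ _)) hβ

theorem frost_of_density (m : Measure ℝ) {q : ℝ} (hq : 1 < q) (h : HasLqDensity m q) :
    ∃ C : ℝ, 1 ≤ C ∧ ∀ a r : ℝ, 0 ≤ r → m (Set.Icc a (a + r)) ≤ ENNReal.ofReal (C * r ^ (1 - 1 / q)) := by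
  obtain ⟨φ, rfl, hφ⟩ := h
  set I := (∫⁻ t, φ t ^ q) with hI
  refine ⟨(I ^ (1 / q)).toReal + 1, by simp, fun a r hr => ?_⟩
  rw [withDensity_apply _ measurableSet_Icc]
  obtain ⟨g, hg, hgle, hgeq⟩ := exists_measurable_le_lintegral_eq (volume.restrict (Set.Icc a (a + r))) φ
  rw [hgeq]
  have hpq : q.HolderConjugate (q / (q - 1)) := Real.HolderConjugate.conjExponent hq
  have h1 := ENNReal.lintegral_mul_le_Lp_mul_Lq (volume.restrict (Set.Icc a (a + r))) hpq
    hg.aemeasurable (aemeasurable_const (b := (1 : ℝ≥0∞)))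
  have h2 : ∫⁻ t in Set.Icc a (a + r), g t ^ q ≤ I := by
    refine (setLIntegral_le_lintegral _ _).trans (lintegral_mono fun t => ?_)
    exact ENNReal.rpow_le_rpow (hgle t) (by linarith)
  have e : 1 / (q / (q - 1)) = 1 - 1 / q := by field_simp
  have e0 : 0 ≤ 1 - 1 / q := by rw [← e]; apply div_nonneg zero_le_one; apply div_nonneg <;> linarith
  have hne : I ^ (1 / q) ≠ ⊤ := ENNReal.rpow_ne_top_of_nonneg (by positivity) hφ.ne
  calc ∫⁻ t in Set.Icc a (a + r), g t
      ≤ (∫⁻ t in Set.Icc a (a + r), g t ^ q) ^ (1 / q) *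
        (∫⁻ t in Set.Icc a (a + r), (1 : ℝ≥0∞) ^ (q / (q - 1))) ^ (1 / (q / (q - 1))) := by
        simpa using h1
    _ ≤ I ^ (1 / q) * (ENNReal.ofReal r) ^ (1 - 1 / q) := by
        rw [e]
        gcongr
        simp
    _ ≤ ENNReal.ofReal ((I ^ (1 / q)).toReal + 1) * ENNReal.ofReal (r ^ (1 - 1 / q)) := by
        rw [ENNReal.ofReal_rpow_of_nonneg hr e0]
        gcongr
        rw [ENNReal.le_ofReal_iff_toReal_le hne (by positivity)]
        simp
    _ = _ := by rw [← ENNReal.ofReal_mul (by positivity)]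

theorem frost_exists {N : ℕ} {Pi : (ℕ → Fin N) → ℝ × ℝ} {μ : Measure (ℕ → Fin N)}
    (hPi : Measurable Pi) {θ : ℝ} (h0 : 0 < θ) (h1 : θ < 1)
    (h : HasLqDensity ((μ.map Pi).map Prod.fst) (1 / (1 - θ))) :
    ∃ C : ℝ, 1 ≤ C ∧ ∀ a r : ℝ, 0 ≤ r →
      μ.real {i | a ≤ (Pi i).1 ∧ (Pi i).1 ≤ a + r} ≤ C * r ^ θ := by
  obtain ⟨C, hC, hf⟩ := frost_of_density _ (by rw [lt_div_iff₀] <;> linarith) h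
  refine ⟨C, hC, fun a r hr => ?_⟩
  have := hf a r hr
  rw [Measure.map_map measurable_fst hPi, Measure.map_apply (measurable_fst.comp hPi) measurableSet_Icc]
    at this
  have e : 1 - 1 / (1 / (1 - θ)) = θ := by
    rw [one_div_one_div]; ring
  rw [e] at this
  exact ENNReal.toReal_le_of_le_ofReal (by positivity) this

theorem pair_bound {N : ℕ} {μ : Measure (ℕ → Fin N)} [IsProbabilityMeasure μ]
    {f : (ℕ → Fin N) → ℝ} (hf : Measurable f) {θ C : ℝ} (hC : 0 ≤ C)
    (hfr : ∀ a r : ℝ, 0 ≤ r → μ.real {i | a ≤ f i ∧ f i ≤ a + r} ≤ C * r ^ θ)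
    {a L κ ρ : ℝ} (hL : 0 ≤ L) (hρ : 0 ≤ ρ) :
    MeasurableSet {p : (ℕ → Fin N) × (ℕ → Fin N) | (a ≤ f p.2 ∧ f p.2 ≤ a + L) ∧ |f p.1 - f p.2 - κ| ≤ ρ} ∧
    (μ.prod μ).real {p : (ℕ → Fin N) × (ℕ → Fin N) | (a ≤ f p.2 ∧ f p.2 ≤ a + L) ∧ |f p.1 - f p.2 - κ| ≤ ρ}
      ≤ (C * L ^ θ) * (C * (2 * ρ) ^ θ) := by
  have hm : MeasurableSet {p : (ℕ → Fin N) × (ℕ → Fin N) |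
      (a ≤ f p.2 ∧ f p.2 ≤ a + L) ∧ |f p.1 - f p.2 - κ| ≤ ρ} := by
    have h1 : Measurable fun p : (ℕ → Fin N) × (ℕ → Fin N) => f p.1 := hf.comp measurable_fst
    have h2 : Measurable fun p : (ℕ → Fin N) × (ℕ → Fin N) => f p.2 := hf.comp measurable_snd
    refine ((measurableSet_le measurable_const h2).inter (measurableSet_le h2 measurable_const)).inter ?_
    exact measurableSet_le (((h1.sub h2).sub measurable_const).abs) measurable_const
  refine ⟨hm, ?_⟩
  refine ENNReal.toReal_le_of_le_ofReal (by positivity) ?_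
  rw [Measure.prod_apply_symm hm]
  set J := {i | a ≤ f i ∧ f i ≤ a + L} with hJ
  have hJm : MeasurableSet J :=
    (measurableSet_le measurable_const hf).inter (measurableSet_le hf measurable_const)
  calc _ ≤ ∫⁻ y, J.indicator (fun _ => ENNReal.ofReal (C * (2 * ρ) ^ θ)) y ∂μ := by
        refine lintegral_mono fun y => ?_
        by_cases hy : y ∈ J
        · rw [Set.indicator_of_mem hy]
          have := hfr (f y + κ - ρ) (2 * ρ) (by positivity)
          rw [Measure.real, ← ENNReal.le_ofReal_iff_toReal_le (measure_ne_top _ _) (by positivity)] at this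
          refine (measure_mono ?_).trans this
          rintro x ⟨_, hx⟩
          rw [abs_le] at hx
          simp only at hx
          constructor <;> linarith
        · rw [Set.indicator_of_notMem hy]
          refine le_of_eq ?_
          convert measure_empty (μ := μ)
          ext x
          simp only [Set.mem_preimage, Set.mem_ofPred_eq, Set.mem_empty_iff_false, iff_false]
          exact fun h => hy h.1
    _ = ENNReal.ofReal (C * (2 * ρ) ^ θ) * μ J := by
        rw [lintegral_indicator_const hJm]
    _ ≤ ENNReal.ofReal (C * (2 * ρ) ^ θ) * ENNReal.ofReal (C * L ^ θ) := by
        gcongr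
        rw [ENNReal.le_ofReal_iff_toReal_le (measure_ne_top _ _) (by positivity)]
        exact hfr a L hL
    _ = _ := by rw [← ENNReal.ofReal_mul (by positivity), mul_comm]

namespace Sys

variable {N : ℕ} {b c : ℝ} {u v d : Fin N → ℝ} {Pi : (ℕ → Fin N) → ℝ × ℝ}
    {μ : Measure (ℕ → Fin N)}

theorem isProb (H : Sys N b c u v d Pi μ) : IsProbabilityMeasure μ := H.hμ.1

theorem trans_mem (H : Sys N b c u v d Pi μ) {c₃ : ℝ}
    (hT : ∀ (n : ℕ) (i j : ℕ → Fin N), i 0 ≠ j 0 →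
    Metric.diam (Prod.fst '' (Sword c b u v d (prefixWord i n) '' unitSq ∩
      Sword c b u v d (prefixWord j n) '' unitSq)) < c₃ * b ^ n)
    {n : ℕ} {i j : ℕ → Fin N} (hij : i 0 ≠ j 0) {p q : ℝ × ℝ}
    (hp : p ∈ Sword c b u v d (prefixWord i n) '' unitSq) (hp' : p ∈ Sword c b u v d (prefixWord j n) '' unitSq)
    (hq : q ∈ Sword c b u v d (prefixWord i n) '' unitSq) (hq' : q ∈ Sword c b u v d (prefixWord j n) '' unitSq) :
    |p.1 - q.1| < c₃ * b ^ n := by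
  refine lt_of_le_of_lt ?_ (hT n i j hij)
  rw [← Real.dist_eq]
  refine Metric.dist_le_diam_of_mem ?_ ⟨p, ⟨hp, hp'⟩, rfl⟩ ⟨q, ⟨hq, hq'⟩, rfl⟩
  refine (Metric.isBounded_Icc (0 : ℝ) 1).subset ?_
  rintro _ ⟨x, ⟨⟨y, hy, rfl⟩, -⟩, rfl⟩
  exact ((unitSq_iff _).1 (Sword_mem H.hmaps _ hy)).1

theorem degenerate_false (H : Sys N b c u v d Pi μ) (hT : Transversality N c b u v d)
    (hd : ∀ i, d i = 0) (v0 : ℝ) (hv : ∀ i, v i = v0) : False := by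
  have := H.isProb
  obtain ⟨c₃, hc₃, hT⟩ := hT
  have hdd : ∀ m i, dd b c d m i = 0 := by
    intro m
    induction m with
    | zero => intro i; rfl
    | succ m ih => intro i; simp [dd, hd, ih]
  have hvv : ∀ m i j, (Sword c b u v d (prefixWord i m) 0).2 = (Sword c b u v d (prefixWord j m) 0).2 := by
    intro m
    induction m with
    | zero => intro i j; simp [prefixWord_zero]
    | succ m ih =>
      intro i j
      rw [prefixWord_succ, prefixWord_succ]
      simp [Sword, Smap, hd, hv, ih (sh 1 i) (sh 1 j)]
  have hu : ∀ m i, (Sword c b u v d (prefixWord i (m+1)) 0).1 =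
      c * (Sword c b u v d (prefixWord (sh 1 i) m) 0).1 + u (i 0) := by
    intro m i
    rw [prefixWord_succ]; simp [Sword, Smap]
  have key : ∀ m i j, i 0 ≠ j 0 → |(Sword c b u v d (prefixWord i m) 0).1 - (Sword c b u v d (prefixWord j m) 0).1| ≤ c ^ m / 2
      → c ^ m / 2 < c₃ * b ^ m := by
    intro m i j hij hle
    have hcm : 0 < c ^ m := pow_pos H.hc0 m
    have mem : ∀ (k l : ℕ → Fin N) (x : ℝ), (Sword c b u v d (prefixWord k m) 0).1 ≤ x →
        x ≤ (Sword c b u v d (prefixWord k m) 0).1 + c ^ m →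
        ((x, (Sword c b u v d (prefixWord l m) 0).2) : ℝ × ℝ) ∈ Sword c b u v d (prefixWord k m) '' unitSq := by
      intro k l x h1 h2
      refine ⟨((x - (Sword c b u v d (prefixWord k m) 0).1) / c ^ m, 0), ?_, ?_⟩
      · rw [unitSq_iff]
        refine ⟨⟨div_nonneg (by linarith) hcm.le, ?_⟩, le_rfl, zero_le_one⟩
        rw [div_le_one hcm]; linarith
      · rw [Sword_formula, hdd, hvv m k l]
        ext
        · simp; field_simp; ring
        · simp
    rw [abs_le] at hle
    set U := (Sword c b u v d (prefixWord i m) 0).1 with hU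
    set V := (Sword c b u v d (prefixWord j m) 0).1 with hV
    have := H.trans_mem hT hij (p := (max U V, (Sword c b u v d (prefixWord i m) 0).2))
      (q := (min U V + c ^ m, (Sword c b u v d (prefixWord i m) 0).2))
      (mem i i _ (le_max_left _ _) (max_le (by linarith) (by linarith)))
      (mem j i _ (le_max_right _ _) (max_le (by linarith) (by linarith)))
      (mem i i _ (by rcases min_choice U V with h | h <;> rw [h] <;> linarith) (by linarith [min_le_left U V]))
      (mem j i _ (by rcases min_choice U V with h | h <;> rw [h] <;> linarith) (by linarith [min_le_right U V]))
    refine lt_of_le_of_lt ?_ this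
    simp only
    rw [abs_sub_comm]
    refine le_trans ?_ (le_abs_self _)
    rcases le_total U V with h | h
    · rw [min_eq_left h, max_eq_right h]; linarith
    · rw [min_eq_right h, max_eq_left h]; linarith
  obtain ⟨m0, hm0⟩ : ∃ m0, ∀ m ≥ m0, c₃ * b ^ m ≤ c ^ m / 2 := by
    have hlim : Tendsto (fun m : ℕ => c₃ * (b / c) ^ m) atTop (𝓝 (c₃ * 0)) :=
      (tendsto_pow_atTop_nhds_zero_of_lt_one (div_nonneg H.hb0.le H.hc0.le)
        ((div_lt_one H.hc0).2 H.hbc)).const_mul _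
    rw [mul_zero] at hlim
    obtain ⟨m0, h⟩ := eventually_atTop.1 (hlim.eventually_lt_const (show (0:ℝ) < 1/2 by norm_num))
    refine ⟨m0, fun m hm => ?_⟩
    have := h m hm
    have hcm : 0 < c ^ m := pow_pos H.hc0 m
    rw [div_pow, ← mul_div_assoc, div_lt_iff₀ hcm] at this
    linarith
  have agree : ∀ s i j, |(Sword c b u v d (prefixWord i (m0 + s)) 0).1 - (Sword c b u v d (prefixWord j (m0 + s)) 0).1|
      ≤ c ^ (m0 + s) / 2 → ∀ k < s, i k = j k := by
    intro s
    induction s with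
    | zero => intro i j _ k hk; omega
    | succ s ih =>
      intro i j hle
      have h0 : i 0 = j 0 := by
        by_contra hne
        have := key _ i j hne hle
        have := hm0 (m0 + (s + 1)) (by omega)
        linarith
      have : |(Sword c b u v d (prefixWord (sh 1 i) (m0 + s)) 0).1 - (Sword c b u v d (prefixWord (sh 1 j) (m0 + s)) 0).1|
      ≤ c ^ (m0 + s) / 2 := by
        rw [← add_assoc, hu, hu, h0] at hle
        have e : ∀ x y z : ℝ, c * x + z - (c * y + z) = c * (x - y) := by intros; ring
        rw [e, abs_mul, abs_of_pos H.hc0, pow_succ] at hle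
        have := H.hc0
        refine le_of_mul_le_mul_left ?_ this
        linarith
      have h2 := ih _ _ this
      intro k hk
      rcases k with _ | k
      · exact h0
      · exact h2 k (by omega)
  have bound : ∀ s : ℕ, ((N : ℝ) * c) ^ s ≤ 3 / c ^ m0 := by
    intro s
    set m := m0 + s with hm
    have hcm : 0 < c ^ m := pow_pos H.hc0 m
    have hcm1 : c ^ m ≤ 1 := pow_le_one₀ H.hc0.le H.hc1.le
    have hNs : (0 : ℝ) < (N : ℝ) ^ s := by
      have := H.hN
      positivity
    let idx : (ℕ → Fin N) → ℕ := fun i => ⌊(Sword c b u v d (prefixWord i m) 0).1 * (2 / c ^ m)⌋₊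
    have hidx : ∀ i, idx i ∈ Finset.range (⌊2 / c ^ m⌋₊ + 1) := by
      intro i
      rw [Finset.mem_range, Nat.lt_succ_iff]
      apply Nat.floor_le_floor
      have := (unitSq_iff _).1 (Sword_mem H.hmaps (prefixWord i m) (p := 0) (by rw [unitSq_iff]; simp))
      have h2 : 0 < 2 / c ^ m := by positivity
      nlinarith
    have hcov : (Set.univ : Set (ℕ → Fin N)) ⊆ ⋃ k ∈ Finset.range (⌊2 / c ^ m⌋₊ + 1), {i | idx i = k} := by
      intro i _
      simp only [Set.mem_iUnion]
      exact ⟨idx i, hidx i, rfl⟩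
    have hbox : ∀ k, μ.real {i | idx i = k} ≤ ((N : ℝ) ^ s)⁻¹ := by
      intro k
      rcases Set.eq_empty_or_nonempty {i | idx i = k} with h | ⟨i0, hi0⟩
      · rw [h]; simp
      · have hsub : {i | idx i = k} ⊆ cyl s (pre s i0) := by
          intro i hi
          rw [mem_cyl, pre_eq_iff]
          apply agree
          have hi : idx i = k := hi
          have hi0 : idx i0 = k := hi0
          have hpos : ∀ i, 0 ≤ (Sword c b u v d (prefixWord i m) 0).1 * (2 / c ^ m) := by
            intro i
            have := (unitSq_iff _).1 (Sword_mem H.hmaps (prefixWord i m) (p := 0) (by rw [unitSq_iff]; simp))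
            exact mul_nonneg this.1.1 (by positivity)
          have a1 := Nat.floor_le (hpos i)
          have a2 := Nat.lt_floor_add_one ((Sword c b u v d (prefixWord i m) 0).1 * (2 / c ^ m))
          have a3 := Nat.floor_le (hpos i0)
          have a4 := Nat.lt_floor_add_one ((Sword c b u v d (prefixWord i0 m) 0).1 * (2 / c ^ m))
          simp only [idx] at hi hi0
          rw [hi] at a1 a2
          rw [hi0] at a3 a4
          have : |((Sword c b u v d (prefixWord i m) 0).1 - (Sword c b u v d (prefixWord i0 m) 0).1) * (2 / c ^ m)| ≤ 1 := by
            rw [abs_le]; constructor <;> linarith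
          rw [abs_mul, abs_of_pos (by positivity : 0 < 2 / c ^ m), ← mul_div_assoc, div_le_one hcm] at this
          linarith
        refine (measureReal_mono hsub (measure_ne_top _ _)).trans ?_
        have := bern_shift_apply H.hμ s (pre s i0) (A := Set.univ) MeasurableSet.univ
        simp at this
        rw [this]
    have h1 : (1 : ℝ) ≤ (⌊2 / c ^ m⌋₊ + 1) * ((N : ℝ) ^ s)⁻¹ := by
      calc (1 : ℝ) = μ.real Set.univ := by simp
        _ ≤ _ := measureReal_mono hcov (measure_ne_top _ _)
        _ ≤ _ := measureReal_biUnion_finset_le _ _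
        _ ≤ ∑ k ∈ Finset.range (⌊2 / c ^ m⌋₊ + 1), ((N : ℝ) ^ s)⁻¹ := Finset.sum_le_sum fun k _ => hbox k
        _ = _ := by simp
    have h2 : (⌊2 / c ^ m⌋₊ : ℝ) + 1 ≤ 3 / c ^ m := by
      have := Nat.floor_le (show 0 ≤ 2 / c ^ m by positivity)
      have h3 : 1 ≤ 1 / c ^ m := by rw [le_div_iff₀ hcm]; linarith
      have : 3 / c ^ m = 2 / c ^ m + 1 / c ^ m := by ring
      linarith
    rw [← div_eq_mul_inv, le_div_iff₀ hNs, one_mul] at h1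
    have h3 := h1.trans h2
    rw [le_div_iff₀ hcm, hm, pow_add] at h3
    rw [le_div_iff₀ (pow_pos H.hc0 _), mul_pow]
    linarith
  have ht := tendsto_pow_atTop_atTop_of_one_lt H.hNc
  obtain ⟨s, hs⟩ := (ht.eventually_gt_atTop (3 / c ^ m0)).exists
  linarith [bound s]

theorem interior (H : Sys N b c u v d Pi μ) (hT : Transversality N c b u v d)
    (hna : ∀ x : ℝ, μ {i | (Pi i).1 = x} = 0) :
    ∃ z, (0 < (Pi z).1 ∧ (Pi z).1 < 1) ∧ (0 < (Pi z).2 ∧ (Pi z).2 < 1) := by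
  have := H.isProb
  by_contra hcon
  push Not at hcon
  have hbd : ∀ z, ((Pi z).1 = 0 ∨ (Pi z).1 = 1) ∨ ((Pi z).2 = 0 ∨ (Pi z).2 = 1) := by
    intro z
    have := (unitSq_iff _).1 (H.Pi_mem z)
    by_contra hh
    push Not at hh
    have h1 := lt_of_le_of_ne this.1.1 (Ne.symm hh.1.1)
    have h2 := lt_of_le_of_ne this.1.2 hh.1.2
    have h3 := lt_of_le_of_ne this.2.1 (Ne.symm hh.2.1)
    have h4 := lt_of_le_of_ne this.2.2 hh.2.2
    have := hcon z ⟨h1, h2⟩ h3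
    linarith
  have hfin : ∀ F : Finset ℝ, μ {i | (Pi i).1 ∈ F} = 0 := by
    intro F
    have : {i | (Pi i).1 ∈ F} = ⋃ x ∈ (F : Set ℝ), {i | (Pi i).1 = x} := by
      ext i; simp
    rw [this, measure_biUnion_null_iff F.countable_toSet]
    exact fun x _ => hna x
  obtain ⟨y0, hy0, hpos⟩ : ∃ y0 : ℝ, (y0 = 0 ∨ y0 = 1) ∧ μ {i | (Pi i).2 = y0} ≠ 0 := by
    by_contra hh
    push Not at hh
    have h0 := hh 0 (Or.inl rfl)
    have h1 := hh 1 (Or.inr rfl)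
    have : (Set.univ : Set (ℕ → Fin N)) ⊆ ({i | (Pi i).1 = 0} ∪ {i | (Pi i).1 = 1}) ∪
        ({i | (Pi i).2 = 0} ∪ {i | (Pi i).2 = 1}) := fun z _ => hbd z
    have h2 := measure_mono_null this (measure_union_null (measure_union_null (hna 0) (hna 1))
      (measure_union_null h0 h1))
    simp at h2
  have hex : ∀ F : Finset ℝ, ∃ z, (Pi z).2 = y0 ∧ (Pi z).1 ∉ F := by
    intro F
    by_contra hh
    push Not at hh
    exact hpos (measure_mono_null (fun z hz => hh z hz) (hfin F))
  -- prepend a letter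
  let cons : Fin N → (ℕ → Fin N) → (ℕ → Fin N) := fun a z k => if k = 0 then a else z (k - 1)
  have hcons : ∀ a z, Pi (cons a z) = Smap c b u v d a (Pi z) := by
    intro a z
    rw [H.Pi_succ]
    have e1 : cons a z 0 = a := by simp [cons]
    have e2 : sh 1 (cons a z) = z := by funext k; simp [cons, sh]
    rw [e1, e2]
  have hd : ∀ a, d a = 0 := by
    intro a
    by_contra hda
    obtain ⟨z, hz1, hz2⟩ := hex {-u a / c, (1 - u a) / c, (-b * y0 - v a) / d a, (1 - b * y0 - v a) / d a}
    have hc := H.hc0.ne'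
    simp only [Finset.mem_insert, Finset.mem_singleton, not_or] at hz2
    have := hbd (cons a z)
    rw [hcons] at this
    simp only [Smap, hz1] at this
    obtain ⟨h1, h2, h3, h4⟩ := hz2
    rw [eq_div_iff (by assumption)] at h1 h2 h3 h4
    rcases this with (h | h) | (h | h)
    · exact h1 (by linarith)
    · exact h2 (by linarith)
    · exact h3 (by linarith)
    · exact h4 (by linarith)
  refine H.degenerate_false hT hd (y0 * (1 - b)) fun a => ?_
  obtain ⟨z, hz1, hz2⟩ := hex {-u a / c, (1 - u a) / c}
  have hc := H.hc0.ne'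
  simp only [Finset.mem_insert, Finset.mem_singleton, not_or] at hz2
  have := hbd (cons a z)
  rw [hcons] at this
  simp only [Smap, hz1, hd] at this
  obtain ⟨h1, h2⟩ := hz2
  rw [eq_div_iff (by assumption)] at h1 h2
  have hs0 := (unitSq_iff _).1 (H.hmaps a ⟨(0, 0), by rw [unitSq_iff]; simp, rfl⟩)
  have hs1 := (unitSq_iff _).1 (H.hmaps a ⟨(0, 1), by rw [unitSq_iff]; simp, rfl⟩)
  simp only [Smap, hd] at hs0 hs1
  have := H.hb0
  have := H.hb1
  rcases this with _
  rcases ‹(_ ∨ _) ∨ (_ ∨ _)› with (h | h) | (h | h)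
  · exact absurd (by linarith) h1
  · exact absurd (by linarith) h2
  · rcases hy0 with rfl | rfl <;> linarith [hs0.2.1, hs1.2.2]
  · rcases hy0 with rfl | rfl <;> linarith [hs0.2.1, hs1.2.2]

end Sys

/-- every window of length `h` in `[0,n]` contains the word `z|p`. -/
def Good {N : ℕ} (z : ℕ → Fin N) (p h n : ℕ) (i : ℕ → Fin N) : Prop :=
  ∀ q, h ≤ q → q ≤ n → ∃ l, q ≤ l + h ∧ l + p ≤ q ∧ ∀ k < p, i (l + k) = z k

theorem Good.congr {N : ℕ} {z : ℕ → Fin N} {p h n : ℕ} {i j : ℕ → Fin N} (hg : Good z p h n i)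
    (hij : ∀ k < n, i k = j k) : Good z p h n j := by
  intro q h1 h2
  obtain ⟨l, a1, a2, a3⟩ := hg q h1 h2
  exact ⟨l, a1, a2, fun k hk => by rw [← hij _ (by omega)]; exact a3 k hk⟩

theorem Good.mono {N : ℕ} {z : ℕ → Fin N} {p h n n' : ℕ} {i : ℕ → Fin N} (hg : Good z p h n i)
    (hn : n' ≤ n) : Good z p h n' i := fun q h1 h2 => hg q h1 (h2.trans hn)

theorem Good.shift {N : ℕ} {z : ℕ → Fin N} {p h n k : ℕ} {i : ℕ → Fin N} (hg : Good z p h n i)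
    (hk : k ≤ n) : Good z p h (n - k) (sh k i) := by
  intro q h1 h2
  obtain ⟨l, a1, a2, a3⟩ := hg (q + k) (by omega) (by omega)
  refine ⟨l - k, by omega, by omega, fun s hs => ?_⟩
  rw [← a3 s hs]
  unfold sh
  congr 1
  omega

/-- `z|p` is a word well inside the square -/
structure InnerWord {N : ℕ} (b c : ℝ) (d : Fin N → ℝ) (Pi : (ℕ → Fin N) → ℝ × ℝ)
    (z : ℕ → Fin N) (p : ℕ) (η : ℝ) : Prop where
  inner : ∀ i, (∀ k < p, i k = z k) →
    (η ≤ (Pi i).1 ∧ (Pi i).1 ≤ 1 - η) ∧ (η ≤ (Pi i).2 ∧ (Pi i).2 ≤ 1 - η)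
  small : 2 * (KK b c d + 1) * b ^ p ≤ η

/-- anisotropically close pairs -/
def TE {N : ℕ} (b c : ℝ) (d : Fin N → ℝ) (Pi : (ℕ → Fin N) → ℝ × ℝ)
    (z : ℕ → Fin N) (p h m : ℕ) (ρ : ℝ) : Set ((ℕ → Fin N) × (ℕ → Fin N)) :=
  {x | x.1 0 ≠ x.2 0 ∧ Good z p h m x.1 ∧ |(Pi x.1).1 - (Pi x.2).1| ≤ ρ ∧
    |(Pi x.1).2 - (Pi x.2).2| ≤ (KK b c d + 1) * b ^ m}

/-- close pairs -/
def DE {N : ℕ} (Pi : (ℕ → Fin N) → ℝ × ℝ)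
    (z : ℕ → Fin N) (p h m : ℕ) (r : ℝ) : Set ((ℕ → Fin N) × (ℕ → Fin N)) :=
  {x | x.1 0 ≠ x.2 0 ∧ Good z p h m x.1 ∧ |(Pi x.1).1 - (Pi x.2).1| ≤ r ∧
    |(Pi x.1).2 - (Pi x.2).2| ≤ r}

namespace Sys

variable {N : ℕ} {b c : ℝ} {u v d : Fin N → ℝ} {Pi : (ℕ → Fin N) → ℝ × ℝ}
    {μ : Measure (ℕ → Fin N)}

theorem exists_inner (H : Sys N b c u v d Pi μ) (hT : Transversality N c b u v d)
    (hna : ∀ x : ℝ, μ {i | (Pi i).1 = x} = 0) :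
    ∃ z p η, 1 ≤ p ∧ InnerWord b c d Pi z p η := by
  obtain ⟨z, ⟨h1, h2⟩, h3, h4⟩ := H.interior hT hna
  have hK := H.KK_nonneg
  obtain ⟨η, hη, e1, e2, e3, e4⟩ : ∃ η > 0, 2 * η ≤ (Pi z).1 ∧ (Pi z).1 ≤ 1 - 2 * η ∧
      2 * η ≤ (Pi z).2 ∧ (Pi z).2 ≤ 1 - 2 * η := by
    refine ⟨(min (min (Pi z).1 (1 - (Pi z).1)) (min (Pi z).2 (1 - (Pi z).2))) / 2, ?_, ?_, ?_, ?_, ?_⟩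
    · apply half_pos
      simp only [lt_min_iff]
      refine ⟨⟨h1, ?_⟩, h3, ?_⟩ <;> linarith
    · linarith [min_le_left (min (Pi z).1 (1 - (Pi z).1)) (min (Pi z).2 (1 - (Pi z).2)),
        min_le_left (Pi z).1 (1 - (Pi z).1)]
    · linarith [min_le_left (min (Pi z).1 (1 - (Pi z).1)) (min (Pi z).2 (1 - (Pi z).2)),
        min_le_right (Pi z).1 (1 - (Pi z).1)]
    · linarith [min_le_right (min (Pi z).1 (1 - (Pi z).1)) (min (Pi z).2 (1 - (Pi z).2)),
        min_le_left (Pi z).2 (1 - (Pi z).2)]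
    · linarith [min_le_right (min (Pi z).1 (1 - (Pi z).1)) (min (Pi z).2 (1 - (Pi z).2)),
        min_le_right (Pi z).2 (1 - (Pi z).2)]
  obtain ⟨p, hp⟩ := exists_pow_lt_of_lt_one (show 0 < η / (2 * (KK b c d + 1)) by positivity) H.hc1
  have hp' : c ^ (p + 1) ≤ η / (2 * (KK b c d + 1)) :=
    (pow_le_pow_of_le_one H.hc0.le H.hc1.le (by omega)).trans hp.le
  rw [le_div_iff₀ (by positivity)] at hp'
  have hcp := pow_pos H.hc0 (p + 1)
  refine ⟨z, p + 1, η, by omega, ⟨fun i hi => ?_, ?_⟩⟩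
  · obtain ⟨a1, a2⟩ := H.Pi_close hi
    have b1 : |(Pi i).1 - (Pi z).1| ≤ η := by nlinarith
    have b2 : |(Pi i).2 - (Pi z).2| ≤ η := by nlinarith
    rw [abs_le] at b1 b2
    refine ⟨⟨?_, ?_⟩, ?_, ?_⟩ <;> linarith
  · have : b ^ (p + 1) ≤ c ^ (p + 1) := pow_le_pow_left₀ H.hb0.le H.hbc.le _
    nlinarith

theorem mem_par (H : Sys N b c u v d Pi μ) {z : ℕ → Fin N} {p : ℕ} {η : ℝ} (hI : InnerWord b c d Pi z p η)
    {i j : ℕ → Fin N} {l m : ℕ} (hl : ∀ k < p, i (l + k) = z k) (hlm : l + p ≤ m)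
    (hx : |(Pi j).1 - (Pi i).1| ≤ b ^ m) (hy : |(Pi j).2 - (Pi i).2| ≤ (KK b c d + 1) * b ^ m) :
    Pi j ∈ Sword c b u v d (prefixWord i l) '' unitSq := by
  have hK := H.KK_nonneg
  have hcl := pow_pos H.hc0 l
  have hbl := pow_pos H.hb0 l
  have hbm := pow_pos H.hb0 m
  have hbcl : b ^ l ≤ c ^ l := pow_le_pow_left₀ H.hb0.le H.hbc.le _
  have ht := hI.inner (sh l i) (fun k hk => by rw [← hl k hk]; unfold sh; congr 1; omega)
  have hsm : 2 * (KK b c d + 1) * b ^ m ≤ η * b ^ l := by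
    have h1 : b ^ m ≤ b ^ p * b ^ l := by
      rw [← pow_add]; exact pow_le_pow_of_le_one H.hb0.le H.hb1.le (by omega)
    have h2 := hI.small
    calc 2 * (KK b c d + 1) * b ^ m ≤ 2 * (KK b c d + 1) * (b ^ p * b ^ l) := by gcongr
      _ = (2 * (KK b c d + 1) * b ^ p) * b ^ l := by ring
      _ ≤ _ := by gcongr
  set δx := (Pi j).1 - (Pi i).1 with hδx
  set δy := (Pi j).2 - (Pi i).2 with hδy
  have b1 : |δx / c ^ l| ≤ η := by
    have hη : 0 ≤ η := by
      have := mul_pos (show 0 < 2 * (KK b c d + 1) by positivity) hbm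
      by_contra hneg
      push Not at hneg
      nlinarith
    rw [abs_div, abs_of_pos hcl, div_le_iff₀ hcl]
    calc |δx| ≤ b ^ m := hx
      _ ≤ 2 * (KK b c d + 1) * b ^ m := by nlinarith
      _ ≤ η * b ^ l := hsm
      _ ≤ η * c ^ l := by gcongr
  have b2 : |(δy - dd b c d l i * (δx / c ^ l)) / b ^ l| ≤ η := by
    rw [abs_div, abs_of_pos hbl, div_le_iff₀ hbl]
    refine (abs_sub _ _).trans (le_trans ?_ hsm)
    have : |dd b c d l i * (δx / c ^ l)| ≤ KK b c d * b ^ m := by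
      rw [abs_mul, abs_div, abs_of_pos hcl, ← mul_div_assoc, div_le_iff₀ hcl]
      have := mul_le_mul (H.dd_le l i) hx (abs_nonneg _) (by positivity)
      linarith
    linarith
  rw [abs_le] at b1 b2
  refine ⟨((Pi (sh l i)).1 + δx / c ^ l,
    (Pi (sh l i)).2 + (δy - dd b c d l i * (δx / c ^ l)) / b ^ l), ?_, ?_⟩
  · rw [unitSq_iff]
    simp only
    refine ⟨⟨?_, ?_⟩, ?_, ?_⟩ <;> linarith
  · rw [Sword_formula]
    have hf := H.Pi_formula l i
    have hf1 := congrArg Prod.fst hf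
    have hf2 := congrArg Prod.snd hf
    simp only at hf1 hf2
    have e1 : c ^ l * (δx / c ^ l) = δx := by field_simp
    have e2 : b ^ l * ((δy - dd b c d l i * (δx / c ^ l)) / b ^ l) = δy - dd b c d l i * (δx / c ^ l) := by
      field_simp
    ext
    · simp only
      rw [mul_add, e1, hδx]; linarith
    · simp only
      rw [mul_add (b ^ l), e2, hδy]; linarith

theorem TE_bound (H : Sys N b c u v d Pi μ) {z : ℕ → Fin N} {p : ℕ} {η : ℝ} (hI : InnerWord b c d Pi z p η)
    {c₃ : ℝ} (hc₃ : 0 < c₃) (hT : ∀ (n : ℕ) (i j : ℕ → Fin N), i 0 ≠ j 0 →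
    Metric.diam (Prod.fst '' (Sword c b u v d (prefixWord i n) '' unitSq ∩
      Sword c b u v d (prefixWord j n) '' unitSq)) < c₃ * b ^ n)
    {θ C : ℝ} (hC : 0 ≤ C)
    (hfr : ∀ a r : ℝ, 0 ≤ r → μ.real {i | a ≤ (Pi i).1 ∧ (Pi i).1 ≤ a + r} ≤ C * r ^ θ)
    {h m : ℕ} (h1 : 1 ≤ h) (hm : h ≤ m) {ρ : ℝ} (hρ0 : 0 ≤ ρ) (hρ : ρ ≤ b ^ m) :
    (μ.prod μ).real (TE b c d Pi z p h m ρ) ≤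
      ((C * (2 * (c₃ * b ^ (m - h)) / c ^ m) ^ θ) * (C * (2 * (ρ / c ^ m)) ^ θ)) *
        (μ.prod μ).real (DE Pi z p h m (3 * (KK b c d + 1) * c ^ m)) := by
  have := H.isProb
  have hK := H.KK_nonneg
  have hcm := pow_pos H.hc0 m
  have hbm := pow_pos H.hb0 m
  have hbcm : b ^ m ≤ c ^ m := pow_le_pow_left₀ H.hb0.le H.hbc.le _
  have hbmh := pow_pos H.hb0 (m - h)
  refine bern_active H.hμ m ?_ _ (by positivity) ?_
  · rintro ⟨i0, j0⟩ ⟨a1, a2, a3, a4⟩ ⟨i, j⟩ e1 e2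
    simp only at a1 a2 a3 a4 e1 e2
    rw [pre_eq_iff] at e1 e2
    obtain ⟨i1, i2⟩ := H.Pi_close e1
    obtain ⟨j1, j2⟩ := H.Pi_close e2
    refine ⟨?_, a2.congr fun k hk => (e1 k hk).symm, ?_, ?_⟩
    · simp only
      rw [e1 0 (by omega), e2 0 (by omega)]; exact a1
    · simp only
      rw [abs_le] at *
      constructor <;> nlinarith
    · simp only
      have : (KK b c d + 1) * b ^ m ≤ (KK b c d + 1) * c ^ m := by gcongr
      rw [abs_le] at *
      constructor <;> nlinarith
  · intro w w'
    rcases Set.eq_empty_or_nonempty (TE b c d Pi z p h m ρ ∩ cyl m w ×ˢ cyl m w') with he | ⟨⟨i0, j0⟩, ⟨a1, a2, a3, a4⟩, hi0, hj0⟩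
    · rw [he]; simp; positivity
    simp only [mem_cyl] at a1 a2 a3 a4 hi0 hj0
    set L0 := c₃ * b ^ (m - h) with hL0
    set U := (Sword c b u v d (prefixWord i0 m) 0).1 with hU
    set U' := (Sword c b u v d (prefixWord j0 m) 0).1 with hU'
    obtain ⟨l, l1, l2, l3⟩ := a2 m hm le_rfl
    obtain ⟨hAm, hA⟩ := pair_bound (μ := μ) (measurable_fst.comp H.measurable_Pi) hC hfr
      (a := ((Pi j0).1 - L0 - U') / c ^ m) (L := 2 * L0 / c ^ m) (κ := (U' - U) / c ^ m)
      (ρ := ρ / c ^ m) (by positivity) (by positivity)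
    refine le_trans ?_ (mul_le_mul_of_nonneg_left hA (by positivity))
    rw [← bern_shift2 H.hμ m w w' hAm]
    refine measureReal_mono ?_ (measure_ne_top _ _)
    rintro ⟨i, j⟩ ⟨⟨b1, b2, b3, b4⟩, hi, hj⟩
    refine ⟨⟨hi, hj⟩, ?_⟩
    simp only [mem_cyl] at b1 b2 b3 b4 hi hj
    have ei : ∀ k < m, i k = i0 k := pre_eq_iff.1 (hi.trans hi0.symm)
    have ej : ∀ k < m, j k = j0 k := pre_eq_iff.1 (hj.trans hj0.symm)
    have m1 : Pi j0 ∈ Sword c b u v d (prefixWord i0 l) '' unitSq := by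
      refine H.mem_par hI l3 l2 ?_ ?_ <;> rw [abs_sub_comm]
      · exact a3.trans hρ
      · exact a4
    have m2 : Pi j ∈ Sword c b u v d (prefixWord i0 l) '' unitSq := by
      have : prefixWord i0 l = prefixWord i l := prefixWord_congr fun k hk => (ei k (by omega)).symm
      rw [this]
      refine H.mem_par hI (m := m) (fun k hk => ?_) l2 ?_ ?_
      · rw [ei _ (by omega)]; exact l3 k hk
      · rw [abs_sub_comm]; exact b3.trans hρ
      · rw [abs_sub_comm]; exact b4
    have m3 : Pi j0 ∈ Sword c b u v d (prefixWord j0 l) '' unitSq :=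
      ⟨_, H.Pi_mem (sh l j0), (H.Pi_shift l j0).symm⟩
    have m4 : Pi j ∈ Sword c b u v d (prefixWord j0 l) '' unitSq := by
      have : prefixWord j0 l = prefixWord j l := prefixWord_congr fun k hk => (ej k (by omega)).symm
      rw [this]
      exact ⟨_, H.Pi_mem (sh l j), (H.Pi_shift l j).symm⟩
    have hd0 := H.trans_mem hT a1 m2 m4 m1 m3
    have hd1 : |(Pi j).1 - (Pi j0).1| ≤ L0 := by
      refine hd0.le.trans ?_
      rw [hL0]
      have : b ^ l ≤ b ^ (m - h) := pow_le_pow_of_le_one H.hb0.le H.hb1.le (by omega)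
      gcongr
    have fj := congrArg Prod.fst (H.Pi_formula m j)
    have fi := congrArg Prod.fst (H.Pi_formula m i)
    simp only at fi fj
    rw [prefixWord_congr ej, ← hU'] at fj
    rw [prefixWord_congr ei, ← hU] at fi
    simp only [Set.mem_preimage, Set.mem_ofPred_eq, Prod.map_apply, Function.comp]
    rw [abs_le] at hd1
    refine ⟨⟨?_, ?_⟩, ?_⟩
    · rw [div_le_iff₀ hcm]; linarith
    · rw [← add_div, le_div_iff₀ hcm]; linarith
    · rw [le_div_iff₀ hcm]
      nth_rewrite 2 [← abs_of_pos hcm]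
      rw [← abs_mul]
      refine le_trans (le_of_eq ?_) b3
      congr 1
      have : (U' - U) / c ^ m * c ^ m = U' - U := by field_simp
      rw [sub_mul, this]
      linarith

end Sys

theorem rec_bound {b c θ θ' K C2 : ℝ} (hb0 : 0 < b) (hb1 : b < 1) (hc0 : 0 < c) (hbc : b < c)
    (hθ0 : 0 < θ') (hθ1 : θ' ≤ 1) (hC2 : 1 ≤ C2) (hK : 0 ≤ K) {L0 : ℕ} (D : ℕ → ℝ → ℝ)
    (hD1 : ∀ m r, D m r ≤ 1) (hmono : ∀ m r r', r ≤ r' → D (m + 1) r ≤ D m r')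
    (hrec : ∀ m, L0 ≤ m → D m (b ^ m) ≤ K * ((b / c) ^ m) ^ (2 * θ) * D m (C2 * c ^ m))
    (hcond : ∀ m, L0 ≤ m → K * C2 ^ 2 * ((b / c) ^ m) ^ (2 * (θ - θ')) ≤ b ^ 2) :
    ∀ m r, b ^ m ≤ r → D m r ≤ (b ^ (2 * (L0 + 1)))⁻¹ * r ^ (2 * θ') := by
  have hA : 1 ≤ (b ^ (2 * (L0 + 1)))⁻¹ :=
    (one_le_inv₀ (by positivity)).2 (pow_le_one₀ hb0.le hb1.le)
  have hbpos : ∀ m : ℕ, 0 < b ^ m := fun m => pow_pos hb0 m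
  have hble : ∀ m : ℕ, b ^ m ≤ 1 := fun m => pow_le_one₀ hb0.le hb1.le
  have hsq : ∀ x : ℝ, 0 < x → x ≤ 1 → x ^ 2 ≤ x ^ (2 * θ') := by
    intro x hx hx1
    rw [← Real.rpow_natCast]
    exact Real.rpow_le_rpow_of_exponent_ge hx hx1 (by push_cast; linarith)
  intro m
  induction m with
  | zero =>
    intro r hr
    rw [pow_zero] at hr
    have : 1 ≤ r ^ (2 * θ') := Real.one_le_rpow hr (by positivity)
    nlinarith [hD1 0 r]
  | succ m ih =>
    intro r hr
    rcases le_or_gt (b ^ m) r with h1 | h1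
    · exact (hmono m r r le_rfl).trans (ih r h1)
    have hr0 : 0 < r := (hbpos _).trans_le hr
    rcases lt_or_ge m L0 with h2 | h2
    · have e1 : b ^ (L0 + 1) ≤ r :=
        (pow_le_pow_of_le_one hb0.le hb1.le (by omega)).trans hr
      have e2 : (b ^ (L0 + 1)) ^ 2 ≤ r ^ (2 * θ') :=
        (hsq _ (hbpos _) (hble _)).trans (Real.rpow_le_rpow (hbpos _).le e1 (by positivity))
      have e3 : (b ^ (2 * (L0 + 1)))⁻¹ * (b ^ (L0 + 1)) ^ 2 = 1 := by
        rw [← pow_mul, mul_comm (L0 + 1) 2]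
        exact inv_mul_cancel₀ (hbpos _).ne'
      calc D (m + 1) r ≤ 1 := hD1 _ _
        _ = _ := e3.symm
        _ ≤ _ := by gcongr
    · have hcm : 0 < c ^ m := pow_pos hc0 m
      have hq : 0 < (b / c) ^ m := by positivity
      have hge : b ^ m ≤ C2 * c ^ m := by
        have : b ^ m ≤ c ^ m := pow_le_pow_left₀ hb0.le hbc.le _
        nlinarith
      calc D (m + 1) r ≤ D m (b ^ m) := hmono _ _ _ h1.le
        _ ≤ K * ((b / c) ^ m) ^ (2 * θ) * D m (C2 * c ^ m) := hrec m h2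
        _ ≤ K * ((b / c) ^ m) ^ (2 * θ) * ((b ^ (2 * (L0 + 1)))⁻¹ * (C2 * c ^ m) ^ (2 * θ')) := by
          gcongr
          exact ih _ hge
        _ = (b ^ (2 * (L0 + 1)))⁻¹ * (K * C2 ^ (2 * θ') * ((b / c) ^ m) ^ (2 * (θ - θ')) * (b ^ m) ^ (2 * θ')) := by
          have a1 : ((b / c) ^ m) ^ (2 * θ) = ((b / c) ^ m) ^ (2 * (θ - θ')) * ((b / c) ^ m) ^ (2 * θ') := by
            rw [← Real.rpow_add hq]; congr 1; ring
          have a2 : (b ^ m) ^ (2 * θ') = ((b / c) ^ m) ^ (2 * θ') * (c ^ m) ^ (2 * θ') := by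
            rw [← Real.mul_rpow hq.le hcm.le, ← mul_pow, div_mul_cancel₀ _ hc0.ne']
          rw [a1, a2, Real.mul_rpow (by linarith) hcm.le]
          ring
        _ ≤ (b ^ (2 * (L0 + 1)))⁻¹ * (K * C2 ^ 2 * ((b / c) ^ m) ^ (2 * (θ - θ')) * (b ^ m) ^ (2 * θ')) := by
          gcongr
          rw [← Real.rpow_natCast]
          exact Real.rpow_le_rpow_of_exponent_le hC2 (by push_cast; linarith)
        _ ≤ (b ^ (2 * (L0 + 1)))⁻¹ * (b ^ 2 * (b ^ m) ^ (2 * θ')) := by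
          gcongr
          exact hcond m h2
        _ ≤ (b ^ (2 * (L0 + 1)))⁻¹ * (b ^ (2 * θ') * (b ^ m) ^ (2 * θ')) := by
          gcongr
          exact hsq b hb0 hb1.le
        _ = (b ^ (2 * (L0 + 1)))⁻¹ * (b ^ (m + 1)) ^ (2 * θ') := by
          rw [← Real.mul_rpow hb0.le (hbpos _).le, pow_succ']
        _ ≤ _ := by gcongr

namespace Sys

variable {N : ℕ} {b c : ℝ} {u v d : Fin N → ℝ} {Pi : (ℕ → Fin N) → ℝ × ℝ}
    {μ : Measure (ℕ → Fin N)}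

theorem TE_bound2 (H : Sys N b c u v d Pi μ) {z : ℕ → Fin N} {p : ℕ} {η : ℝ} (hI : InnerWord b c d Pi z p η)
    {c₃ : ℝ} (hc₃ : 0 < c₃) (hT : ∀ (n : ℕ) (i j : ℕ → Fin N), i 0 ≠ j 0 →
    Metric.diam (Prod.fst '' (Sword c b u v d (prefixWord i n) '' unitSq ∩
      Sword c b u v d (prefixWord j n) '' unitSq)) < c₃ * b ^ n)
    {θ C : ℝ} (hC : 0 ≤ C) (hθ0 : 0 < θ) (hθ1 : θ < 1)
    (hfr : ∀ a r : ℝ, 0 ≤ r → μ.real {i | a ≤ (Pi i).1 ∧ (Pi i).1 ≤ a + r} ≤ C * r ^ θ)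
    {h m : ℕ} (h1 : 1 ≤ h) (hm : h ≤ m) {ρ : ℝ} (hρ0 : 0 ≤ ρ) (hρ : ρ ≤ b ^ m) :
    (μ.prod μ).real (TE b c d Pi z p h m ρ) ≤
      (C ^ 2 * (4 * c₃) ^ θ) * (b ^ h)⁻¹ * (b ^ m * ρ / (c ^ m) ^ 2) ^ θ *
        (μ.prod μ).real (DE Pi z p h m (3 * (KK b c d + 1) * c ^ m)) := by
  refine (H.TE_bound hI hc₃ hT hC hfr h1 hm hρ0 hρ).trans ?_
  have hcm := pow_pos H.hc0 m
  have hbm := pow_pos H.hb0 m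
  have hbh := pow_pos H.hb0 h
  have hbmh := pow_pos H.hb0 (m - h)
  have e : b ^ (m - h) = b ^ m * (b ^ h)⁻¹ := by
    rw [eq_mul_inv_iff_mul_eq₀ hbh.ne', ← pow_add]; congr 1; omega
  refine mul_le_mul_of_nonneg_right ?_ measureReal_nonneg
  calc (C * (2 * (c₃ * b ^ (m - h)) / c ^ m) ^ θ) * (C * (2 * (ρ / c ^ m)) ^ θ)
      = C ^ 2 * ((2 * (c₃ * b ^ (m - h)) / c ^ m) * (2 * (ρ / c ^ m))) ^ θ := by
        rw [Real.mul_rpow (x := 2 * (c₃ * b ^ (m - h)) / c ^ m) (by positivity) (by positivity)]; ring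
    _ = C ^ 2 * ((4 * c₃) * (b ^ h)⁻¹ * (b ^ m * ρ / (c ^ m) ^ 2)) ^ θ := by
        rw [e]; congr 2; field_simp; ring
    _ = C ^ 2 * (4 * c₃) ^ θ * ((b ^ h)⁻¹) ^ θ * (b ^ m * ρ / (c ^ m) ^ 2) ^ θ := by
        rw [Real.mul_rpow (by positivity) (by positivity), Real.mul_rpow (by positivity) (by positivity)]; ring
    _ ≤ _ := by
        gcongr
        have : 1 ≤ (b ^ h)⁻¹ := (one_le_inv₀ hbh).2 (pow_le_one₀ H.hb0.le H.hb1.le)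
        calc ((b ^ h)⁻¹) ^ θ ≤ ((b ^ h)⁻¹) ^ (1 : ℝ) := Real.rpow_le_rpow_of_exponent_le this hθ1.le
          _ = _ := Real.rpow_one _

theorem DE_bound (H : Sys N b c u v d Pi μ) {z : ℕ → Fin N} {p : ℕ} {η : ℝ} (hI : InnerWord b c d Pi z p η)
    {c₃ : ℝ} (hc₃ : 0 < c₃) (hT : ∀ (n : ℕ) (i j : ℕ → Fin N), i 0 ≠ j 0 →
    Metric.diam (Prod.fst '' (Sword c b u v d (prefixWord i n) '' unitSq ∩
      Sword c b u v d (prefixWord j n) '' unitSq)) < c₃ * b ^ n)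
    {θ θ' C : ℝ} (hC : 0 ≤ C) (hθ0 : 0 < θ) (hθ1 : θ < 1) (hθ'0 : 0 < θ') (hθ'1 : θ' ≤ 1)
    (hfr : ∀ a r : ℝ, 0 ≤ r → μ.real {i | a ≤ (Pi i).1 ∧ (Pi i).1 ≤ a + r} ≤ C * r ^ θ)
    {h L0 : ℕ} (h1 : 1 ≤ h) (hL : h ≤ L0)
    (hcond : ∀ m, L0 ≤ m → (C ^ 2 * (4 * c₃) ^ θ) * (b ^ h)⁻¹ * (3 * (KK b c d + 1)) ^ 2 *
      ((b / c) ^ m) ^ (2 * (θ - θ')) ≤ b ^ 2) :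
    ∀ m r, b ^ m ≤ r → (μ.prod μ).real (DE Pi z p h m r) ≤
      (b ^ (2 * (L0 + 1)))⁻¹ * r ^ (2 * θ') := by
  have := H.isProb
  have hK := H.KK_nonneg
  have hbh := pow_pos H.hb0 h
  refine rec_bound (K := (C ^ 2 * (4 * c₃) ^ θ) * (b ^ h)⁻¹) (C2 := 3 * (KK b c d + 1)) (θ := θ) H.hb0 H.hb1 H.hc0 H.hbc hθ'0 hθ'1 (by linarith)
    (by positivity) _ (fun m r => measureReal_le_one) ?_ ?_ hcond
  · intro m r r' hr
    refine measureReal_mono ?_ (measure_ne_top _ _)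
    rintro x ⟨a1, a2, a3, a4⟩
    exact ⟨a1, a2.mono (by omega), a3.trans hr, a4.trans hr⟩
  · intro m hm
    have hbm := pow_pos H.hb0 m
    refine le_trans (measureReal_mono (s₂ := TE b c d Pi z p h m (b ^ m)) ?_ (measure_ne_top _ _)) ?_
    · rintro x ⟨a1, a2, a3, a4⟩
      exact ⟨a1, a2, a3, a4.trans (by nlinarith)⟩
    · refine (H.TE_bound2 hI hc₃ hT hC hθ0 hθ1 hfr h1 (hL.trans hm) hbm.le le_rfl).trans (le_of_eq ?_)
      congr 2
      have hcm := pow_pos H.hc0 m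
      rw [Real.rpow_mul (by have := H.hb0; have := H.hc0; positivity)]
      congr 1
      rw [div_pow]
      norm_cast
      field_simp

end Sys

theorem measurableSet_Good {N : ℕ} (z : ℕ → Fin N) (p h n : ℕ) : MeasurableSet {i | Good z p h n i} := by
  have : {i | Good z p h n i} = pre n ⁻¹' (pre n '' {i | Good z p h n i}) := by
    apply subset_antisymm (Set.subset_preimage_image _ _)
    rintro i ⟨j, hj, hij⟩
    exact Good.congr hj (pre_eq_iff.1 hij)
  rw [this]
  exact measurable_pre (Set.toFinite _).measurableSet

/-- close pairs with good first component -/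
def PE {N : ℕ} (b : ℝ) (Pi : (ℕ → Fin N) → ℝ × ℝ)
    (z : ℕ → Fin N) (p h n : ℕ) : Set ((ℕ → Fin N) × (ℕ → Fin N)) :=
  {x | Good z p h n x.1 ∧ |(Pi x.1).1 - (Pi x.2).1| ≤ b ^ n ∧
    |(Pi x.1).2 - (Pi x.2).2| ≤ b ^ n}

theorem rpow_le_mul_rpow {x y θ : ℝ} (hy : 0 < y) (hxy : y ≤ x) (hθ : θ ≤ 1) :
    x ^ θ ≤ x * y ^ (θ - 1) := by
  have hx : 0 < x := hy.trans_le hxy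
  have : x ^ θ = x * x ^ (θ - 1) := by
    rw [Real.rpow_sub_one hx.ne']; field_simp
  rw [this]
  exact mul_le_mul_of_nonneg_left (Real.rpow_le_rpow_of_nonpos hy hxy (by linarith)) hx.le

namespace Sys

variable {N : ℕ} {b c : ℝ} {u v d : Fin N → ℝ} {Pi : (ℕ → Fin N) → ℝ × ℝ}
    {μ : Measure (ℕ → Fin N)}

theorem unshift (H : Sys N b c u v d Pi μ) {i j : ℕ → Fin N} {k n : ℕ} (hk : k ≤ n)
    (hij : ∀ l < k, i l = j l)
    (hx : |(Pi i).1 - (Pi j).1| ≤ b ^ n) (hy : |(Pi i).2 - (Pi j).2| ≤ b ^ n) :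
    |(Pi (sh k i)).1 - (Pi (sh k j)).1| ≤ b ^ n / c ^ k ∧
    |(Pi (sh k i)).2 - (Pi (sh k j)).2| ≤ (KK b c d + 1) * b ^ (n - k) := by
  have hck := pow_pos H.hc0 k
  have hbk := pow_pos H.hb0 k
  have hK := H.KK_nonneg
  have fi1 := congrArg Prod.fst (H.Pi_formula k i)
  have fj1 := congrArg Prod.fst (H.Pi_formula k j)
  have fi2 := congrArg Prod.snd (H.Pi_formula k i)
  have fj2 := congrArg Prod.snd (H.Pi_formula k j)
  simp only at fi1 fj1 fi2 fj2
  rw [prefixWord_congr hij] at fi1 fi2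
  rw [dd_congr b c d hij] at fi2
  set X := (Pi (sh k i)).1 - (Pi (sh k j)).1 with hX
  set Y := (Pi (sh k i)).2 - (Pi (sh k j)).2 with hY
  have e1 : (Pi i).1 - (Pi j).1 = c ^ k * X := by rw [fi1, fj1, hX]; ring
  have e2 : (Pi i).2 - (Pi j).2 = dd b c d k j * X + b ^ k * Y := by rw [fi2, fj2, hX, hY]; ring
  rw [e1, abs_mul, abs_of_pos hck] at hx
  rw [e2] at hy
  refine ⟨by rw [le_div_iff₀ hck]; linarith, ?_⟩
  have h1 : |dd b c d k j * X| ≤ KK b c d * b ^ n := by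
    rw [abs_mul]
    calc _ ≤ KK b c d * c ^ k * |X| := by gcongr; exact H.dd_le k j
      _ = KK b c d * (c ^ k * |X|) := by ring
      _ ≤ _ := by gcongr
  have h2 : |b ^ k * Y| ≤ (KK b c d + 1) * b ^ n := by
    have : b ^ k * Y = (dd b c d k j * X + b ^ k * Y) - dd b c d k j * X := by ring
    rw [this]
    refine (abs_sub _ _).trans ?_
    linarith
  rw [abs_mul, abs_of_pos hbk] at h2
  have e3 : b ^ n = b ^ k * b ^ (n - k) := by rw [← pow_add]; congr 1; omega
  rw [e3] at h2
  refine le_of_mul_le_mul_left ?_ hbk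
  linarith

theorem P_split (H : Sys N b c u v d Pi μ) (z : ℕ → Fin N) (p : ℕ)
    {θ C : ℝ} (hC : 0 ≤ C)
    (hfr : ∀ a r : ℝ, 0 ≤ r → μ.real {i | a ≤ (Pi i).1 ∧ (Pi i).1 ≤ a + r} ≤ C * r ^ θ)
    {h n : ℕ} (hn : h ≤ n) :
    (μ.prod μ).real (PE b Pi z p h n) ≤
      (∑ k ∈ Finset.range (n - h), ((N : ℝ) ^ k)⁻¹ * (μ.prod μ).real (TE b c d Pi z p h (n - k) (b ^ n / c ^ k)))
        + ((N : ℝ) ^ (n - h))⁻¹ * ((C * 1 ^ θ) * (C * (2 * (b ^ n / c ^ (n - h))) ^ θ)) := by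
  have := H.isProb
  have hb0 := H.hb0
  have hc0 := H.hc0
  let B : ℕ → Set ((ℕ → Fin N) × (ℕ → Fin N)) := fun k =>
    {x | x ∈ PE b Pi z p h n ∧ (∀ l < k, x.1 l = x.2 l) ∧ x.1 k ≠ x.2 k}
  let E : Set ((ℕ → Fin N) × (ℕ → Fin N)) :=
    {x | x ∈ PE b Pi z p h n ∧ (∀ l < n - h, x.1 l = x.2 l)}
  have hsub : PE b Pi z p h n ⊆ (⋃ k ∈ Finset.range (n - h), B k) ∪ E := by
    intro x hx
    by_cases hE : ∀ l < n - h, x.1 l = x.2 l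
    · exact Or.inr ⟨hx, hE⟩
    · left
      push Not at hE
      classical
      have hs := Nat.find_spec hE
      have hm := fun l => Nat.find_min hE (m := l)
      set k := Nat.find hE
      simp only [Set.mem_iUnion]
      refine ⟨k, Finset.mem_range.2 hs.1, hx, fun l hl => ?_, hs.2⟩
      by_contra hne
      exact hm l hl ⟨by omega, hne⟩
  refine (measureReal_mono hsub (measure_ne_top _ _)).trans ((measureReal_union_le _ _).trans (add_le_add ((measureReal_biUnion_finset_le _ _).trans ?_) ?_))
  · refine Finset.sum_le_sum fun k hk => ?_
    rw [Finset.mem_range] at hk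
    have hm : (μ.prod μ).real (toMeasurable (μ.prod μ) (TE b c d Pi z p h (n - k) (b ^ n / c ^ k)))
        = (μ.prod μ).real (TE b c d Pi z p h (n - k) (b ^ n / c ^ k)) := by
      simp only [Measure.real, measure_toMeasurable]
    rw [← hm]
    refine bern_common H.hN H.hμ k (measurableSet_toMeasurable _ _) ?_
    rintro ⟨i, j⟩ ⟨⟨g, h1, h2⟩, h3, h4⟩
    refine ⟨pre_eq_iff.2 h3, subset_toMeasurable _ _ ?_⟩
    obtain ⟨q1, q2⟩ := H.unshift (by omega) h3 h1 h2
    refine ⟨?_, g.shift (by omega), q1, q2⟩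
    simpa [sh] using h4
  · obtain ⟨hAm, hA⟩ := pair_bound (μ := μ) (measurable_fst.comp H.measurable_Pi) hC hfr
      (a := 0) (L := 1) (κ := 0) (ρ := b ^ n / c ^ (n - h)) (by positivity) (by positivity)
    refine le_trans (bern_common H.hN H.hμ (n - h) hAm ?_) (mul_le_mul_of_nonneg_left hA (by positivity))
    rintro ⟨i, j⟩ ⟨⟨g, h1, h2⟩, h3⟩
    refine ⟨pre_eq_iff.2 h3, ?_⟩
    obtain ⟨q1, q2⟩ := H.unshift (by omega) h3 h1 h2
    have hmem := (unitSq_iff _).1 (H.Pi_mem (sh (n - h) j))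
    simp only [Set.mem_ofPred_eq, Function.comp]
    refine ⟨⟨hmem.1.1, by linarith [hmem.1.2]⟩, by simpa using q1⟩

theorem scal (H : Sys N b c u v d Pi μ) {τ s : ℝ} (hτ : b ^ τ = ((N : ℝ) * c)⁻¹) (hs2 : s ≤ 2) (hs1 : s ≤ 1 + τ)
    {k n : ℕ} (hk : k ≤ n) :
    ((N : ℝ) ^ k)⁻¹ * (b ^ (n - k) * (b ^ n / c ^ k)) ≤ (b ^ n) ^ s := by
  have hb0 := H.hb0
  have hc0 := H.hc0
  have hNc := H.hNc
  have hN : (0 : ℝ) < N := by have := H.hN; positivity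
  have hbn := pow_pos hb0 n
  have hbn1 : b ^ n ≤ 1 := pow_le_one₀ hb0.le H.hb1.le
  have e0 : b ^ n = b ^ (n - k) * b ^ k := by rw [← pow_add]; congr 1; omega
  have e1 : ((N : ℝ) ^ k)⁻¹ * (b ^ (n - k) * (b ^ n / c ^ k)) = (b ^ n) ^ 2 * ((N * c * b) ^ k)⁻¹ := by
    rw [mul_pow, mul_pow, e0]; field_simp
  rw [e1]
  rcases le_or_gt 1 (N * c * b) with h | h
  · calc (b ^ n) ^ 2 * ((N * c * b) ^ k)⁻¹ ≤ (b ^ n) ^ 2 * 1 := by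
          gcongr
          exact inv_le_one_of_one_le₀ (one_le_pow₀ h)
      _ = (b ^ n) ^ (2 : ℝ) := by rw [mul_one]; norm_cast
      _ ≤ _ := Real.rpow_le_rpow_of_exponent_ge hbn hbn1 hs2
  · calc (b ^ n) ^ 2 * ((N * c * b) ^ k)⁻¹ ≤ (b ^ n) ^ 2 * ((N * c * b) ^ n)⁻¹ := by
          gcongr ?_ * ?_⁻¹
          exact pow_le_pow_of_le_one (by positivity) h.le hk
      _ = b ^ n * (((N : ℝ) * c)⁻¹) ^ n := by rw [mul_pow (N * c : ℝ) b, inv_pow]; field_simp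
      _ = (b ^ n) ^ (1 + τ) := by
          rw [← hτ, Real.rpow_add hbn, Real.rpow_one, ← Real.rpow_natCast, ← Real.rpow_natCast, ← Real.rpow_mul hb0.le, ← Real.rpow_mul hb0.le]
          congr 2; ring
      _ ≤ _ := Real.rpow_le_rpow_of_exponent_ge hbn hbn1 hs1

theorem P_bound (H : Sys N b c u v d Pi μ) {z : ℕ → Fin N} {p : ℕ} {η : ℝ} (hI : InnerWord b c d Pi z p η)
    {c₃ : ℝ} (hc₃ : 0 < c₃) (hT : ∀ (n : ℕ) (i j : ℕ → Fin N), i 0 ≠ j 0 →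
    Metric.diam (Prod.fst '' (Sword c b u v d (prefixWord i n) '' unitSq ∩
      Sword c b u v d (prefixWord j n) '' unitSq)) < c₃ * b ^ n)
    {θ θ' C : ℝ} (hC : 0 ≤ C) (hθ1 : θ < 1) (hθ'0 : 0 < θ') (hθ'1 : θ' < θ)
    (hfr : ∀ a r : ℝ, 0 ≤ r → μ.real {i | a ≤ (Pi i).1 ∧ (Pi i).1 ≤ a + r} ≤ C * r ^ θ)
    {h L0 : ℕ} (h1 : 1 ≤ h) (hL : h ≤ L0)
    (hcond : ∀ m, L0 ≤ m → (C ^ 2 * (4 * c₃) ^ θ) * (b ^ h)⁻¹ * (3 * (KK b c d + 1)) ^ 2 *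
      ((b / c) ^ m) ^ (2 * (θ - θ')) ≤ b ^ 2)
    {τ s : ℝ} (hτ : b ^ τ = ((N : ℝ) * c)⁻¹) (hs2 : s ≤ 2) (hs1 : s ≤ 1 + τ)
    {n : ℕ} (hn : h ≤ n) :
    (μ.prod μ).real (PE b Pi z p h n) ≤
      (n * ((C ^ 2 * (4 * c₃) ^ θ) * (b ^ h)⁻¹ * (b ^ (2 * (L0 + 1)))⁻¹ * (3 * (KK b c d + 1)) ^ 2) +
        2 * C ^ 2 * (N * c) ^ h) * (b ^ n) ^ (s + (2 * θ' - 2)) := by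
  have hb0 := H.hb0
  have hc0 := H.hc0
  have hK := H.KK_nonneg
  have hN : (0 : ℝ) < N := by have := H.hN; positivity
  have hbn := pow_pos hb0 n
  have hbn1 : b ^ n ≤ 1 := pow_le_one₀ hb0.le H.hb1.le
  have hbh := pow_pos hb0 h
  have hbL := pow_pos hb0 (2 * (L0 + 1))
  set K1 := C ^ 2 * (4 * c₃) ^ θ with hK1
  have hK1' : 0 ≤ K1 := by positivity
  set C2 := 3 * (KK b c d + 1) with hC2
  have hC2' : 1 ≤ C2 := by linarith
  have hD := H.DE_bound hI hc₃ hT hC (hθ'0.trans hθ'1) hθ1 hθ'0 (by linarith) hfr h1 hL hcond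
  refine (H.P_split z p hC hfr hn).trans ?_
  rw [add_mul]
  refine add_le_add ?_ ?_
  · have hterm : ∀ k ∈ Finset.range (n - h), ((N : ℝ) ^ k)⁻¹ * (μ.prod μ).real (TE b c d Pi z p h (n - k) (b ^ n / c ^ k))
        ≤ (K1 * (b ^ h)⁻¹ * (b ^ (2 * (L0 + 1)))⁻¹ * C2 ^ 2) * (b ^ n) ^ (s + (2 * θ' - 2)) := by
      intro k hk
      rw [Finset.mem_range] at hk
      obtain ⟨m, hm⟩ : ∃ m, m = n - k := ⟨_, rfl⟩
      have hck := pow_pos hc0 k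
      have hcm := pow_pos hc0 m
      have hbm := pow_pos hb0 m
      have hbcm : b ^ m ≤ c ^ m := pow_le_pow_left₀ hb0.le H.hbc.le _
      have hbck : b ^ k ≤ c ^ k := pow_le_pow_left₀ hb0.le H.hbc.le _
      have hck1 : c ^ k ≤ 1 := pow_le_one₀ hc0.le H.hc1.le
      have e0 : b ^ n = b ^ m * b ^ k := by rw [← pow_add]; congr 1; omega
      have hρ0 : 0 ≤ b ^ n / c ^ k := by positivity
      have hρ : b ^ n / c ^ k ≤ b ^ m := by
        rw [div_le_iff₀ hck, e0]; gcongr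
      have hρ2 : b ^ n ≤ b ^ n / c ^ k := by
        rw [le_div_iff₀ hck]; nlinarith
      have hbnm : b ^ n ≤ b ^ m := pow_le_pow_of_le_one hb0.le H.hb1.le (by omega)
      have hT1 := H.TE_bound2 (p := p) hI hc₃ hT hC (hθ'0.trans hθ'1) hθ1 hfr h1 (show h ≤ m by omega) hρ0 hρ
      have hD1 := hD m (C2 * c ^ m) (by nlinarith)
      rw [← hm]
      set X := b ^ m * (b ^ n / c ^ k) with hX
      have hX0 : (b ^ n) * b ^ n ≤ X := by rw [hX]; gcongr
      have hXpos : 0 < X := by positivity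
      have hsc := H.scal hτ hs2 hs1 (show k ≤ n by omega)
      rw [← hm, ← hX] at hsc
      have q1 : X ^ θ ≤ X * (b ^ n) ^ (2 * (θ - 1)) := by
        refine (rpow_le_mul_rpow (by positivity) hX0 hθ1.le).trans (le_of_eq ?_)
        rw [Real.rpow_mul hbn.le]; norm_cast; rw [sq]
      have q2 : (c ^ m) ^ (2 * θ' - 2 * θ) ≤ (b ^ n) ^ (2 * θ' - 2 * θ) :=
        Real.rpow_le_rpow_of_nonpos hbn (by linarith) (by linarith)
      have q3 : (X / (c ^ m) ^ 2) ^ θ * (c ^ m) ^ (2 * θ') = X ^ θ * (c ^ m) ^ (2 * θ' - 2 * θ) := by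
        rw [Real.div_rpow hXpos.le (by positivity), Real.rpow_sub hcm, Real.rpow_mul hcm.le 2 θ]
        norm_cast
        ring
      have q4 : (C2 * c ^ m) ^ (2 * θ') ≤ C2 ^ 2 * (c ^ m) ^ (2 * θ') := by
        rw [Real.mul_rpow (by linarith) hcm.le]
        gcongr
        rw [← Real.rpow_natCast]
        exact Real.rpow_le_rpow_of_exponent_le hC2' (by push_cast; linarith)
      calc ((N : ℝ) ^ k)⁻¹ * (μ.prod μ).real (TE b c d Pi z p h m (b ^ n / c ^ k))
          ≤ ((N : ℝ) ^ k)⁻¹ * (K1 * (b ^ h)⁻¹ * (X / (c ^ m) ^ 2) ^ θ * ((b ^ (2 * (L0 + 1)))⁻¹ * (C2 ^ 2 * (c ^ m) ^ (2 * θ')))) := by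
            refine mul_le_mul_of_nonneg_left (hT1.trans ?_) (by positivity)
            refine mul_le_mul_of_nonneg_left (hD1.trans ?_) (by positivity)
            gcongr
        _ = (K1 * (b ^ h)⁻¹ * (b ^ (2 * (L0 + 1)))⁻¹ * C2 ^ 2) * (((N : ℝ) ^ k)⁻¹ * ((X / (c ^ m) ^ 2) ^ θ * (c ^ m) ^ (2 * θ'))) := by ring
        _ = (K1 * (b ^ h)⁻¹ * (b ^ (2 * (L0 + 1)))⁻¹ * C2 ^ 2) * (((N : ℝ) ^ k)⁻¹ * (X ^ θ * (c ^ m) ^ (2 * θ' - 2 * θ))) := by rw [q3]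
        _ ≤ (K1 * (b ^ h)⁻¹ * (b ^ (2 * (L0 + 1)))⁻¹ * C2 ^ 2) * (((N : ℝ) ^ k)⁻¹ * ((X * (b ^ n) ^ (2 * (θ - 1))) * (b ^ n) ^ (2 * θ' - 2 * θ))) := by gcongr
        _ = (K1 * (b ^ h)⁻¹ * (b ^ (2 * (L0 + 1)))⁻¹ * C2 ^ 2) * ((((N : ℝ) ^ k)⁻¹ * X) * ((b ^ n) ^ (2 * θ' - 2))) := by
            have : (b ^ n) ^ (2 * θ' - 2) = (b ^ n) ^ (2 * (θ - 1)) * (b ^ n) ^ (2 * θ' - 2 * θ) := by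
              rw [← Real.rpow_add hbn]; congr 1; ring
            rw [this]; ring
        _ ≤ (K1 * (b ^ h)⁻¹ * (b ^ (2 * (L0 + 1)))⁻¹ * C2 ^ 2) * ((b ^ n) ^ s * ((b ^ n) ^ (2 * θ' - 2))) := by gcongr
        _ = _ := by rw [← Real.rpow_add hbn]
    refine (Finset.sum_le_sum hterm).trans ?_
    rw [Finset.sum_const, Finset.card_range, nsmul_eq_mul, mul_assoc (n : ℝ)]
    have hnh : ((n - h : ℕ) : ℝ) ≤ n := by exact_mod_cast Nat.sub_le n h
    exact mul_le_mul_of_nonneg_right hnh (by positivity)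
  · obtain ⟨k, hk⟩ : ∃ k, k = n - h := ⟨_, rfl⟩
    rw [← hk]
    have hck := pow_pos hc0 k
    have hck1 : c ^ k ≤ 1 := pow_le_one₀ hc0.le H.hc1.le
    set Y := b ^ n / c ^ k with hY
    have hY0 : b ^ n ≤ Y := by rw [hY, le_div_iff₀ hck]; nlinarith
    have hYpos : 0 < Y := by positivity
    have q1 := rpow_le_mul_rpow hbn hY0 hθ1.le
    have q2 : (2 : ℝ) ^ θ ≤ 2 := by
      calc (2 : ℝ) ^ θ ≤ 2 ^ (1 : ℝ) := Real.rpow_le_rpow_of_exponent_le (by norm_num) hθ1.le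
        _ = 2 := Real.rpow_one _
    have q3 : (b ^ n) ^ (θ - 1) ≤ (b ^ n) ^ (2 * θ' - 2) :=
      Real.rpow_le_rpow_of_exponent_ge hbn hbn1 (by linarith)
    have q4 : ((N : ℝ) ^ k)⁻¹ * Y ≤ (N * c) ^ h * (b ^ n) ^ s := by
      have hsc := H.scal hτ hs2 hs1 (le_refl n)
      have : ((N : ℝ) ^ k)⁻¹ * Y = (N * c) ^ h * (((N : ℝ) ^ n)⁻¹ * (b ^ (n - n) * (b ^ n / c ^ n))) := by
        have en : n = k + h := by omega
        rw [hY, Nat.sub_self, pow_zero, one_mul]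
        have : ((N : ℝ) * c) ^ n = (N * c) ^ k * (N * c) ^ h := by rw [en, pow_add]
        rw [mul_pow, mul_pow, mul_pow] at this
        rw [mul_pow]
        field_simp
        linarith
      rw [this]
      have := H.hNc
      gcongr
    calc ((N : ℝ) ^ k)⁻¹ * ((C * 1 ^ θ) * (C * (2 * Y) ^ θ)) = ((N : ℝ) ^ k)⁻¹ * (C ^ 2 * (2 ^ θ * Y ^ θ)) := by
          rw [Real.one_rpow, Real.mul_rpow (by norm_num) hYpos.le]; ring
      _ ≤ ((N : ℝ) ^ k)⁻¹ * (C ^ 2 * (2 * (Y * (b ^ n) ^ (2 * θ' - 2)))) := by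
          gcongr
          exact q1.trans (by gcongr)
      _ = 2 * C ^ 2 * (b ^ n) ^ (2 * θ' - 2) * (((N : ℝ) ^ k)⁻¹ * Y) := by ring
      _ ≤ 2 * C ^ 2 * (b ^ n) ^ (2 * θ' - 2) * ((N * c) ^ h * (b ^ n) ^ s) := by gcongr
      _ = _ := by rw [Real.rpow_add hbn]; ring

end Sys

namespace Sys

variable {N : ℕ} {b c : ℝ} {u v d : Fin N → ℝ} {Pi : (ℕ → Fin N) → ℝ × ℝ}
    {μ : Measure (ℕ → Fin N)}

set_option maxHeartbeats 1000000 in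
theorem P_asymp (H : Sys N b c u v d Pi μ) {z : ℕ → Fin N} {p : ℕ} {η : ℝ} (hI : InnerWord b c d Pi z p η)
    {c₃ : ℝ} (hc₃ : 0 < c₃) (hT : ∀ (n : ℕ) (i j : ℕ → Fin N), i 0 ≠ j 0 →
    Metric.diam (Prod.fst '' (Sword c b u v d (prefixWord i n) '' unitSq ∩
      Sword c b u v d (prefixWord j n) '' unitSq)) < c₃ * b ^ n)
    (hfr : ∀ θ : ℝ, 0 < θ → θ < 1 → ∃ C : ℝ, 1 ≤ C ∧ ∀ a r : ℝ, 0 ≤ r →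
      μ.real {i | a ≤ (Pi i).1 ∧ (Pi i).1 ≤ a + r} ≤ C * r ^ θ)
    {τ s t : ℝ} (hτ0 : 0 < τ) (hτ : b ^ τ = ((N : ℝ) * c)⁻¹) (hs2 : s ≤ 2) (hs1 : s ≤ 1 + τ) (ht : t < s) :
    ∃ ζ > 0, ∃ δ > 0, ∃ M : ℝ, ∀ᶠ n : ℕ in atTop,
      (μ.prod μ).real (PE b Pi z p ⌊ζ * (n : ℝ)⌋₊ n) ≤ M * (n + 1) * b ^ ((n : ℝ) * (t + δ)) := by
  have hb0 := H.hb0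
  have hb1 := H.hb1
  have hc0 := H.hc0
  have hc1 := H.hc1
  have hbc := H.hbc
  have hK := H.KK_nonneg
  obtain ⟨ε, hε0, hε1, hε2⟩ : ∃ ε : ℝ, 0 < ε ∧ ε ≤ 1 / 2 ∧ (5 + τ) * ε ≤ (s - t) / 2 := by
    refine ⟨min (1 / 2) ((s - t) / 2 / (5 + τ)), lt_min (by norm_num) (by have := sub_pos.2 ht; positivity),
      min_le_left _ _, ?_⟩
    have := min_le_right (1 / 2) ((s - t) / 2 / (5 + τ))
    rw [le_div_iff₀ (by linarith)] at this
    linarith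
  obtain ⟨C, hC, hfrC⟩ := hfr (1 - ε / 2) (by linarith) (by linarith)
  -- `b / c = b ^ ω`
  obtain ⟨ω, hω0, hω⟩ : ∃ ω : ℝ, 0 < ω ∧ b / c = b ^ ω := by
    refine ⟨Real.logb b (b / c), Real.logb_pos_of_base_lt_one hb0 hb1 (by positivity) ?_, ?_⟩
    · rw [div_lt_one hc0]; exact hbc
    · rw [Real.rpow_logb hb0 (by linarith) (by positivity)]
  obtain ⟨ζ, hζ0, hζ1, hζ2⟩ : ∃ ζ : ℝ, 0 < ζ ∧ ζ ≤ ε ∧ 2 * ζ ≤ ε * ε * ω := by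
    refine ⟨min ε (ε * ε * ω / 2), lt_min hε0 (by positivity), min_le_left _ _, ?_⟩
    linarith [min_le_right ε (ε * ε * ω / 2)]
  set K1 := C ^ 2 * (4 * c₃) ^ (1 - ε / 2) with hK1
  set C2 := 3 * (KK b c d + 1) with hC2
  have hK1' : 0 ≤ K1 := by positivity
  refine ⟨ζ, hζ0, (s - t) / 2, by linarith, K1 * C2 ^ 2 * b ^ (-4 : ℝ) + 2 * C ^ 2, ?_⟩
  have ev1 : ∀ᶠ n : ℕ in atTop, 1 ≤ ζ * (n : ℝ) :=
    (tendsto_natCast_atTop_atTop.const_mul_atTop hζ0).eventually_ge_atTop 1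
  have ev2 : ∀ᶠ n : ℕ in atTop, K1 * C2 ^ 2 * b ^ (ζ * (n : ℝ)) ≤ b ^ 2 := by
    have h1 : Tendsto (fun n : ℕ => K1 * C2 ^ 2 * b ^ (ζ * (n : ℝ))) atTop (𝓝 (K1 * C2 ^ 2 * 0)) := by
      refine Tendsto.const_mul _ ?_
      exact (tendsto_rpow_atTop_of_base_lt_one b (by linarith) hb1).comp
        (tendsto_natCast_atTop_atTop.const_mul_atTop hζ0)
    rw [mul_zero] at h1
    exact h1.eventually_le_const (by positivity)
  filter_upwards [ev1, ev2] with n hn1 hn2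
  have hh1 : 1 ≤ ⌊ζ * (n : ℝ)⌋₊ := Nat.le_floor (by exact_mod_cast hn1)
  have hh2 : (⌊ζ * (n : ℝ)⌋₊ : ℝ) ≤ ζ * n := Nat.floor_le (by positivity)
  set h := ⌊ζ * (n : ℝ)⌋₊ with hh
  have hL1 : ε * n ≤ (⌈ε * (n : ℝ)⌉₊ : ℝ) := Nat.le_ceil _
  have hL2 : (⌈ε * (n : ℝ)⌉₊ : ℝ) < ε * n + 1 := Nat.ceil_lt_add_one (by positivity)
  set L0 := ⌈ε * (n : ℝ)⌉₊ with hL0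
  have hn0 : (0 : ℝ) ≤ n := Nat.cast_nonneg n
  have hhL : h ≤ L0 := by
    have : (h : ℝ) ≤ L0 := by nlinarith
    exact_mod_cast this
  have hhn : h ≤ n := by
    have : (h : ℝ) ≤ n := by nlinarith
    exact_mod_cast this
  have hbh : (b ^ h)⁻¹ ≤ b ^ (-(ζ * n)) := by
    rw [← Real.rpow_natCast, ← Real.rpow_neg hb0.le]
    exact Real.rpow_le_rpow_of_exponent_ge hb0 hb1.le (by linarith)
  have hbL : (b ^ (2 * (L0 + 1)))⁻¹ ≤ b ^ (-(2 * ε * n)) * b ^ (-4 : ℝ) := by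
    rw [← Real.rpow_natCast, ← Real.rpow_neg hb0.le, ← Real.rpow_add hb0]
    apply Real.rpow_le_rpow_of_exponent_ge hb0 hb1.le
    push_cast
    linarith
  have hcond : ∀ m, L0 ≤ m → K1 * (b ^ h)⁻¹ * C2 ^ 2 *
      ((b / c) ^ m) ^ (2 * ((1 - ε / 2) - (1 - ε))) ≤ b ^ 2 := by
    intro m hm
    refine le_trans ?_ hn2
    have e1 : ((b / c) ^ m) ^ (2 * ((1 - ε / 2) - (1 - ε))) = b ^ (ω * m * ε) := by
      rw [hω, ← Real.rpow_natCast, ← Real.rpow_mul hb0.le, ← Real.rpow_mul hb0.le]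
      congr 1; ring
    rw [e1]
    have hm' : ε * n ≤ m := hL1.trans (by exact_mod_cast hm)
    have e2 : b ^ (ω * m * ε) ≤ b ^ (2 * ζ * n) := by
      apply Real.rpow_le_rpow_of_exponent_ge hb0 hb1.le
      calc 2 * ζ * n ≤ ε * ε * ω * n := by gcongr
        _ = ω * (ε * n) * ε := by ring
        _ ≤ _ := by gcongr
    calc K1 * (b ^ h)⁻¹ * C2 ^ 2 * b ^ (ω * m * ε) ≤ K1 * b ^ (-(ζ * n)) * C2 ^ 2 * b ^ (2 * ζ * n) := by
          gcongr
      _ = K1 * C2 ^ 2 * (b ^ (-(ζ * n)) * b ^ (2 * ζ * n)) := by ring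
      _ = _ := by rw [← Real.rpow_add hb0]; congr 2; ring
  refine (H.P_bound hI hc₃ hT (by linarith) (by linarith) (show 0 < 1 - ε by linarith) (by linarith) hfrC hh1 hhL hcond hτ hs2 hs1 hhn).trans ?_
  have hNc : ((N : ℝ) * c) ^ h ≤ b ^ (-(3 + τ) * ε * n) := by
    have e1 : (N : ℝ) * c = b ^ (-τ) := by rw [Real.rpow_neg hb0.le, hτ, inv_inv]
    rw [e1, ← Real.rpow_natCast, ← Real.rpow_mul hb0.le]
    apply Real.rpow_le_rpow_of_exponent_ge hb0 hb1.le
    have : τ * h ≤ τ * (ε * n) := by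
      gcongr
      exact hh2.trans (by gcongr)
    nlinarith [mul_nonneg hε0.le hn0]
  have hmain : (b ^ h)⁻¹ * (b ^ (2 * (L0 + 1)))⁻¹ ≤ b ^ (-4 : ℝ) * b ^ (-(3 + τ) * ε * n) := by
    calc (b ^ h)⁻¹ * (b ^ (2 * (L0 + 1)))⁻¹ ≤ b ^ (-(ζ * n)) * (b ^ (-(2 * ε * n)) * b ^ (-4 : ℝ)) := by gcongr
      _ = b ^ (-4 : ℝ) * b ^ (-(ζ * n) + -(2 * ε * n)) := by rw [Real.rpow_add hb0]; ring
      _ ≤ _ := by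
        gcongr ?_ * ?_
        apply Real.rpow_le_rpow_of_exponent_ge hb0 hb1.le
        have : ζ * n ≤ ε * n := by gcongr
        nlinarith [mul_nonneg (mul_nonneg hτ0.le hε0.le) hn0]
  set W := b ^ (-(3 + τ) * ε * n) with hW
  have hW0 : 0 < W := by positivity
  calc (n * (K1 * (b ^ h)⁻¹ * (b ^ (2 * (L0 + 1)))⁻¹ * C2 ^ 2) + 2 * C ^ 2 * (N * c) ^ h) * (b ^ n) ^ (s + (2 * (1 - ε) - 2))
      = (n * (K1 * C2 ^ 2 * ((b ^ h)⁻¹ * (b ^ (2 * (L0 + 1)))⁻¹)) + 2 * C ^ 2 * (N * c) ^ h) * (b ^ n) ^ (s + (2 * (1 - ε) - 2)) := by ring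
    _ ≤ (n * (K1 * C2 ^ 2 * (b ^ (-4 : ℝ) * W)) + 2 * C ^ 2 * W) * (b ^ n) ^ (s + (2 * (1 - ε) - 2)) := by gcongr
    _ ≤ ((K1 * C2 ^ 2 * b ^ (-4 : ℝ) + 2 * C ^ 2) * (n + 1) * W) * (b ^ n) ^ (s + (2 * (1 - ε) - 2)) := by
        gcongr
        have a1 : 0 ≤ K1 * C2 ^ 2 * b ^ (-4 : ℝ) * W := by positivity
        have a2 : 0 ≤ C ^ 2 * W * n := by positivity
        nlinarith
    _ = (K1 * C2 ^ 2 * b ^ (-4 : ℝ) + 2 * C ^ 2) * (n + 1) * b ^ (n * (s - (5 + τ) * ε)) := by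
        rw [mul_assoc _ W]
        congr 1
        rw [hW, ← Real.rpow_natCast, ← Real.rpow_mul hb0.le, ← Real.rpow_add hb0]
        congr 1; ring
    _ ≤ _ := by
        refine mul_le_mul_of_nonneg_left ?_ (by positivity)
        apply Real.rpow_le_rpow_of_exponent_ge hb0 hb1.le
        gcongr
        linarith

end Sys

theorem bern_shift_finset {N : ℕ} {μ : Measure (ℕ → Fin N)} (hμ : IsUniformBernoulli N μ) (m : ℕ)
    (S : Finset (Fin m → Fin N)) {A : Set (ℕ → Fin N)} (hA : MeasurableSet A) :
    μ.real ({i | pre m i ∈ S} ∩ sh m ⁻¹' A) ≤ S.card * (((N : ℝ) ^ m)⁻¹ * μ.real A) := by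
  have := hμ.1
  have hsub : {i | pre m i ∈ S} ∩ sh m ⁻¹' A ⊆ ⋃ w ∈ S, (cyl m w ∩ sh m ⁻¹' A) := by
    rintro i ⟨h1, h2⟩
    simp only [Set.mem_iUnion]
    exact ⟨pre m i, h1, mem_cyl.2 rfl, h2⟩
  refine (measureReal_mono hsub (measure_ne_top _ _)).trans ((measureReal_biUnion_finset_le _ _).trans ?_)
  rw [Finset.sum_congr rfl fun w _ => bern_shift_apply hμ m w hA, Finset.sum_const, nsmul_eq_mul]

/-- no occurrence of `z|p` in the first `g` blocks -/
def FB {N : ℕ} (z : ℕ → Fin N) (p g : ℕ) : Set (ℕ → Fin N) :=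
  {i | ∀ t < g, ∃ k < p, i (p * t + k) ≠ z k}

theorem measurableSet_FB {N : ℕ} (z : ℕ → Fin N) (p g : ℕ) : MeasurableSet (FB z p g) := by
  have : FB z p g = ⋂ t ∈ Set.Iio g, ⋃ k ∈ Set.Iio p, (fun i : ℕ → Fin N => i (p * t + k)) ⁻¹' {z k}ᶜ := by
    ext i; simp [FB]
  rw [this]
  refine MeasurableSet.biInter (Set.to_countable _) fun t _ => MeasurableSet.biUnion (Set.to_countable _) fun k _ => ?_
  exact measurable_pi_apply _ (MeasurableSet.of_discrete)

theorem FB_bound {N : ℕ} (hN : 2 ≤ N) {μ : Measure (ℕ → Fin N)} (hμ : IsUniformBernoulli N μ)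
    (z : ℕ → Fin N) (p g : ℕ) : μ.real (FB z p g) ≤ (1 - ((N : ℝ) ^ p)⁻¹) ^ g := by
  classical
  have := hμ.1
  have hN0 : (0 : ℝ) < N := by positivity
  have hNp : (1 : ℝ) ≤ (N : ℝ) ^ p := one_le_pow₀ (by exact_mod_cast (by omega : 1 ≤ N))
  induction g with
  | zero => simp
  | succ g ih =>
    have hsub : FB z p (g + 1) ⊆ {i | pre p i ∈ Finset.univ.erase (pre p z)} ∩ sh p ⁻¹' (FB z p g) := by
      intro i hi
      refine ⟨?_, ?_⟩
      · simp only [Set.mem_ofPred_eq, Finset.mem_erase, Finset.mem_univ, and_true]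
        intro h
        obtain ⟨k, hk, hne⟩ := hi 0 (by omega)
        rw [pre_eq_iff] at h
        exact hne (by simpa using h k hk)
      · intro t ht
        obtain ⟨k, hk, hne⟩ := hi (t + 1) (by omega)
        refine ⟨k, hk, ?_⟩
        unfold sh
        convert hne using 2
        ring
    refine (measureReal_mono hsub (measure_ne_top _ _)).trans ((bern_shift_finset hμ p _ (measurableSet_FB z p g)).trans ?_)
    rw [Finset.card_erase_of_mem (Finset.mem_univ _), Finset.card_univ, Fintype.card_fun, Fintype.card_fin, Fintype.card_fin,
      Nat.cast_sub (by exact_mod_cast hNp), ← mul_assoc, pow_succ']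
    push_cast
    have e : ((N : ℝ) ^ p - 1) * ((N : ℝ) ^ p)⁻¹ = 1 - ((N : ℝ) ^ p)⁻¹ := by field_simp
    rw [e]
    have : ((N : ℝ) ^ p)⁻¹ ≤ 1 := inv_le_one_of_one_le₀ hNp
    gcongr

theorem bad_bound {N : ℕ} (hN : 2 ≤ N) {μ : Measure (ℕ → Fin N)} (hμ : IsUniformBernoulli N μ)
    (z : ℕ → Fin N) (p h n : ℕ) (hp : 1 ≤ p) :
    μ.real {i | ¬ Good z p h n i} ≤ (n + 1) * (1 - ((N : ℝ) ^ p)⁻¹) ^ (h / p) := by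
  classical
  have := hμ.1
  have hN0 : (0 : ℝ) < N := by positivity
  have hsub : {i | ¬ Good z p h n i} ⊆ ⋃ a ∈ Finset.range (n + 1), ({i | pre a i ∈ Finset.univ} ∩ sh a ⁻¹' (FB z p (h / p))) := by
    intro i hi
    simp only [Set.mem_ofPred_eq, Good] at hi
    push Not at hi
    obtain ⟨q, h1, h2, h3⟩ := hi
    simp only [Set.mem_iUnion]
    refine ⟨q - h, Finset.mem_range.2 (by omega), by simp, fun t ht => ?_⟩
    have hpt : p * t + p ≤ h := by
      calc p * t + p = p * (t + 1) := by ring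
        _ ≤ p * (h / p) := Nat.mul_le_mul_left _ ht
        _ ≤ h := Nat.mul_div_le h p
    obtain ⟨k, hk, hne⟩ := h3 (q - h + p * t) (by omega) (by omega)
    refine ⟨k, hk, ?_⟩
    unfold sh
    convert hne using 2
    ring
  refine (measureReal_mono hsub (measure_ne_top _ _)).trans ((measureReal_biUnion_finset_le _ _).trans ?_)
  refine (Finset.sum_le_sum (g := fun _ => (1 - ((N : ℝ) ^ p)⁻¹) ^ (h / p)) fun a _ => ?_).trans (le_of_eq (by simp))
  refine (bern_shift_finset hμ a Finset.univ (measurableSet_FB z p (h / p))).trans ?_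
  rw [Finset.card_univ, Fintype.card_fun, Fintype.card_fin, Fintype.card_fin, ← mul_assoc]
  push_cast
  rw [mul_inv_cancel₀ (by positivity), one_mul]
  exact FB_bound hN hμ z p _

theorem ae_good {N : ℕ} (hN : 2 ≤ N) {μ : Measure (ℕ → Fin N)} (hμ : IsUniformBernoulli N μ)
    (z : ℕ → Fin N) (p : ℕ) (hp : 1 ≤ p) {ζ : ℝ} (hζ : 0 < ζ) :
    ∀ᵐ i ∂μ, ∀ᶠ n : ℕ in atTop, Good z p ⌊ζ * (n : ℝ)⌋₊ n i := by
  have := hμ.1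
  have hN0 : (0 : ℝ) < N := by positivity
  have hNp : (1 : ℝ) < (N : ℝ) ^ p := one_lt_pow₀ (by exact_mod_cast (by omega : 1 < N)) (by omega)
  have hp0 : (0 : ℝ) < p := by exact_mod_cast hp
  set β := 1 - ((N : ℝ) ^ p)⁻¹ with hβ
  have hβ0 : 0 < β := by have := inv_lt_one_of_one_lt₀ hNp; linarith
  have hβ1 : β < 1 := by have : 0 < ((N : ℝ) ^ p)⁻¹ := by positivity
                         linarith
  have hbd : ∀ n : ℕ, μ.real {i | ¬ Good z p ⌊ζ * (n : ℝ)⌋₊ n i} ≤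
      β ^ (-(2 : ℝ)) * ((n : ℝ) ^ 1 * (β ^ (ζ / p)) ^ n) + β ^ (-(2 : ℝ)) * (β ^ (ζ / p)) ^ n := by
    intro n
    refine (bad_bound hN hμ z p _ n hp).trans ?_
    have h1 : β ^ (⌊ζ * (n : ℝ)⌋₊ / p) ≤ β ^ (-(2 : ℝ)) * (β ^ (ζ / p)) ^ n := by
      rw [← Real.rpow_natCast, ← Real.rpow_natCast, ← Real.rpow_mul hβ0.le, ← Real.rpow_add hβ0]
      apply Real.rpow_le_rpow_of_exponent_ge hβ0 hβ1.le
      have h2 : ζ * n < ⌊ζ * (n : ℝ)⌋₊ + 1 := Nat.lt_floor_add_one _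
      have h3 : ⌊ζ * (n : ℝ)⌋₊ < p * (⌊ζ * (n : ℝ)⌋₊ / p) + p := Nat.lt_mul_div_succ _ (by omega)
      have h4 : (⌊ζ * (n : ℝ)⌋₊ : ℝ) + 1 ≤ p * ((⌊ζ * (n : ℝ)⌋₊ / p : ℕ) : ℝ) + p := by exact_mod_cast h3
      have h5 : ζ / p * n = ζ * n / p := by ring
      have h6 : ζ * n / p ≤ ((⌊ζ * (n : ℝ)⌋₊ / p : ℕ) : ℝ) + 1 := by
        rw [div_le_iff₀ hp0]; nlinarith
      linarith
    calc _ ≤ ((n : ℝ) + 1) * (β ^ (-(2 : ℝ)) * (β ^ (ζ / p)) ^ n) := by gcongr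
      _ = _ := by ring
  have hr0 : 0 < β ^ (ζ / p) := by positivity
  have hr1 : β ^ (ζ / p) < 1 := Real.rpow_lt_one hβ0.le hβ1 (by positivity)
  have hsum : Summable fun n : ℕ => μ.real {i | ¬ Good z p ⌊ζ * (n : ℝ)⌋₊ n i} := by
    refine Summable.of_nonneg_of_le (fun _ => measureReal_nonneg) hbd ?_
    refine Summable.add (Summable.mul_left _ ?_) (Summable.mul_left _ ?_)
    · exact summable_pow_mul_geometric_of_norm_lt_one 1 (by rw [Real.norm_of_nonneg hr0.le]; exact hr1)
    · exact summable_geometric_of_lt_one hr0.le hr1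
  have hne : ∑' n : ℕ, μ {i | ¬ Good z p ⌊ζ * (n : ℝ)⌋₊ n i} ≠ ∞ := by
    have := hsum.tsum_ofReal_ne_top
    have e : ∀ n : ℕ, ENNReal.ofReal (μ.real {i | ¬ Good z p ⌊ζ * (n : ℝ)⌋₊ n i}) = μ {i | ¬ Good z p ⌊ζ * (n : ℝ)⌋₊ n i} :=
      fun n => ofReal_measureReal (measure_ne_top _ _)
    simpa only [e] using this
  filter_upwards [ae_eventually_notMem hne] with i hi
  filter_upwards [hi] with n hn
  simpa using hn

namespace Sys

variable {N : ℕ} {b c : ℝ} {u v d : Fin N → ℝ} {Pi : (ℕ → Fin N) → ℝ × ℝ}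
    {μ : Measure (ℕ → Fin N)}

theorem measurableSet_PE (H : Sys N b c u v d Pi μ) (z : ℕ → Fin N) (p h n : ℕ) :
    MeasurableSet (PE b Pi z p h n) := by
  have h1 : Measurable fun x : (ℕ → Fin N) × (ℕ → Fin N) => Pi x.1 := H.measurable_Pi.comp measurable_fst
  have h2 : Measurable fun x : (ℕ → Fin N) × (ℕ → Fin N) => Pi x.2 := H.measurable_Pi.comp measurable_snd
  refine MeasurableSet.inter (measurable_fst (measurableSet_Good z p h n)) (MeasurableSet.inter ?_ ?_)
  · exact measurableSet_le ((h1.fst.sub h2.fst).abs) measurable_const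
  · exact measurableSet_le ((h1.snd.sub h2.snd).abs) measurable_const

theorem local_dim (H : Sys N b c u v d Pi μ) {z : ℕ → Fin N} {p : ℕ} {ζ δ t M : ℝ} (hδ : 0 < δ)
    (hgood : ∀ᵐ i ∂μ, ∀ᶠ n : ℕ in atTop, Good z p ⌊ζ * (n : ℝ)⌋₊ n i)
    (hP : ∀ᶠ n : ℕ in atTop,
      (μ.prod μ).real (PE b Pi z p ⌊ζ * (n : ℝ)⌋₊ n) ≤ M * (n + 1) * b ^ ((n : ℝ) * (t + δ))) :
    ∀ᵐ i ∂μ, ∀ᶠ n : ℕ in atTop,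
      μ (Pi ⁻¹' Metric.closedBall (Pi i) (b ^ n)) ≤ ENNReal.ofReal (b ^ ((n : ℝ) * t)) := by
  have := H.isProb
  have hb0 := H.hb0
  have hb1 := H.hb1
  let h : ℕ → ℕ := fun n => ⌊ζ * (n : ℝ)⌋₊
  let Bad : ℕ → Set (ℕ → Fin N) := fun n =>
    {i | ENNReal.ofReal (b ^ ((n : ℝ) * t)) ≤ μ (Prod.mk i ⁻¹' PE b Pi z p (h n) n)}
  have hbad : ∀ᶠ n : ℕ in atTop, μ.real (Bad n) ≤ M * ((n : ℝ) ^ 1 * (b ^ δ) ^ n) + M * (b ^ δ) ^ n := by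
    filter_upwards [hP] with n hn
    have hpos : 0 < b ^ ((n : ℝ) * t) := by positivity
    have h1 := mul_meas_ge_le_lintegral (μ := μ) (measurable_measure_prodMk_left (ν := μ) (H.measurableSet_PE z p (h n) n))
      (ENNReal.ofReal (b ^ ((n : ℝ) * t)))
    rw [← Measure.prod_apply (H.measurableSet_PE z p (h n) n)] at h1
    have h2 : b ^ ((n : ℝ) * t) * μ.real (Bad n) ≤ (μ.prod μ).real (PE b Pi z p (h n) n) := by
      have := ENNReal.toReal_mono (measure_ne_top _ _) h1
      rwa [ENNReal.toReal_mul, ENNReal.toReal_ofReal hpos.le] at this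
    have h3 : b ^ ((n : ℝ) * (t + δ)) = b ^ ((n : ℝ) * t) * (b ^ δ) ^ n := by
      rw [← Real.rpow_natCast, ← Real.rpow_mul hb0.le, ← Real.rpow_add hb0]; congr 1; ring
    have h4 := h2.trans hn
    rw [h3] at h4
    refine le_of_mul_le_mul_left ?_ hpos
    linarith
  have hr0 : 0 < b ^ δ := by positivity
  have hr1 : b ^ δ < 1 := Real.rpow_lt_one hb0.le hb1 hδ
  have hsum : Summable fun n : ℕ => μ.real (Bad n) := by
    have hs : Summable fun n : ℕ => M * ((n : ℝ) ^ 1 * (b ^ δ) ^ n) + M * (b ^ δ) ^ n := by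
      refine Summable.add (Summable.mul_left _ ?_) (Summable.mul_left _ ?_)
      · exact summable_pow_mul_geometric_of_norm_lt_one 1 (by rw [Real.norm_of_nonneg hr0.le]; exact hr1)
      · exact summable_geometric_of_lt_one hr0.le hr1
    refine summable_of_isBigO_nat hs ?_
    refine Asymptotics.IsBigO.of_bound 1 ?_
    filter_upwards [hbad] with n hn
    rw [one_mul, Real.norm_of_nonneg measureReal_nonneg]
    exact hn.trans (le_abs_self _)
  have hne : ∑' n : ℕ, μ (Bad n) ≠ ∞ := by
    have := hsum.tsum_ofReal_ne_top
    have e : ∀ n : ℕ, ENNReal.ofReal (μ.real (Bad n)) = μ (Bad n) :=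
      fun n => ofReal_measureReal (measure_ne_top _ _)
    simpa only [e] using this
  filter_upwards [ae_eventually_notMem hne, hgood] with i hi hg
  filter_upwards [hi, hg] with n hn hgn
  have hn' : μ (Prod.mk i ⁻¹' PE b Pi z p (h n) n) < ENNReal.ofReal (b ^ ((n : ℝ) * t)) := not_le.1 hn
  refine (measure_mono ?_).trans hn'.le
  intro j hj
  rw [Set.mem_preimage, Metric.mem_closedBall, dist_comm, Prod.dist_eq, max_le_iff, Real.dist_eq, Real.dist_eq] at hj
  exact ⟨hgn, hj.1, hj.2⟩

theorem dim_lower (H : Sys N b c u v d Pi μ) {t : ℝ} (ht : 0 < t)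
    (hae : ∀ᵐ i ∂μ, ∀ᶠ n : ℕ in atTop,
      μ (Pi ⁻¹' Metric.closedBall (Pi i) (b ^ n)) ≤ ENNReal.ofReal (b ^ ((n : ℝ) * t)))
    {A : Set (ℝ × ℝ)} (hA : μ.map Pi Aᶜ = 0) : ENNReal.ofReal t ≤ dimH A := by
  have := H.isProb
  have hb0 := H.hb0
  have hb1 := H.hb1
  have hPm := H.measurable_Pi
  set ν := μ.map Pi with hν
  have : IsProbabilityMeasure ν := Measure.isProbabilityMeasure_map hPm.aemeasurable
  have hνb : ∀ x r, ν (Metric.closedBall x r) = μ (Pi ⁻¹' Metric.closedBall x r) := fun x r =>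
    Measure.map_apply hPm Metric.isClosed_closedBall.measurableSet
  let G : ℕ → Set (ℝ × ℝ) := fun k =>
    {x | ∀ n ≥ k, ν (Metric.closedBall x (b ^ n)) ≤ ENNReal.ofReal (b ^ ((n : ℝ) * t))}
  have hG : ν (⋃ k, G k) ≠ 0 := by
    have h1 : μ (Pi ⁻¹' (⋃ k, G k)) = 1 := by
      have h3 : ∀ᵐ i ∂μ, i ∈ Pi ⁻¹' (⋃ k, G k) := by
        filter_upwards [hae] with i hi
        obtain ⟨k, hk⟩ := eventually_atTop.1 hi
        rw [Set.mem_preimage, Set.mem_iUnion]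
        refine ⟨k, fun n hn => ?_⟩
        rw [hνb]
        exact hk n hn
      have h4 : μ (Pi ⁻¹' (⋃ k, G k)) = μ Set.univ := measure_congr (eventuallyEq_univ.2 h3)
      rw [h4, measure_univ]
    have h2 := Measure.le_map_apply (μ := μ) hPm.aemeasurable (⋃ k, G k)
    rw [h1] at h2
    intro h0
    rw [← hν, h0] at h2
    simp at h2
  obtain ⟨k, hk⟩ : ∃ k, ν (A ∩ G k) ≠ 0 := by
    by_contra hcon
    push Not at hcon
    apply hG
    rw [measure_iUnion_null_iff]
    intro k
    refine le_antisymm ?_ zero_le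
    calc ν (G k) ≤ ν ((A ∩ G k) ∪ Aᶜ) := measure_mono fun x hx => by
          by_cases hxA : x ∈ A
          · exact Or.inl ⟨hxA, hx⟩
          · exact Or.inr hxA
      _ ≤ ν (A ∩ G k) + ν Aᶜ := measure_union_le _ _
      _ = 0 := by rw [hcon k, hA, add_zero]
  set S := A ∩ G k with hS
  have hle : ENNReal.ofReal (b ^ t) • ν.restrict S ≤ μH[t] := by
    refine Measure.le_hausdorffMeasure t _ (ENNReal.ofReal (b ^ k)) (by simp; positivity) fun U hU => ?_
    rw [Measure.smul_apply, smul_eq_mul]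
    rw [← Metric.ediam_closure] at hU ⊢
    refine le_trans (mul_le_mul_right (measure_mono (subset_closure (s := U))) _) ?_
    have hcl : IsClosed (closure U) := isClosed_closure
    generalize closure U = V at *
    rcases Set.eq_empty_or_nonempty (V ∩ S) with he | ⟨x, hxV, hxS⟩
    · rw [Measure.restrict_apply hcl.measurableSet, he]; simp
    have hfin : Metric.ediam V ≠ ∞ := ne_top_of_le_ne_top ENNReal.ofReal_ne_top hU
    have hD : Metric.diam V ≤ b ^ k := ENNReal.toReal_le_of_le_ofReal (by positivity) hU
    have hVsub : ∀ r, Metric.diam V ≤ r → V ⊆ Metric.closedBall x r := fun r hr y hy =>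
      Metric.mem_closedBall.2 ((Metric.dist_le_diam_of_mem' hfin hy hxV).trans hr)
    have hbound : ∀ n ≥ k, Metric.diam V ≤ b ^ n → ν.restrict S V ≤ ENNReal.ofReal (b ^ ((n : ℝ) * t)) :=
      fun n hn hd => (Measure.restrict_apply_le _ _).trans ((measure_mono (hVsub _ hd)).trans (hxS.2 n hn))
    rcases Metric.diam_nonneg (s := V) |>.eq_or_lt with h0 | h0
    · have hz : ν.restrict S V = 0 := by
        refine le_antisymm ?_ zero_le
        have hlim : Tendsto (fun n : ℕ => ENNReal.ofReal (b ^ ((n : ℝ) * t))) atTop (𝓝 (ENNReal.ofReal 0)) := by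
          refine ENNReal.tendsto_ofReal ?_
          exact (tendsto_rpow_atTop_of_base_lt_one b (by linarith) hb1).comp
            (tendsto_natCast_atTop_atTop.atTop_mul_const ht)
        rw [ENNReal.ofReal_zero] at hlim
        refine ge_of_tendsto hlim ?_
        filter_upwards [eventually_ge_atTop k] with n hn
        exact hbound n hn (by rw [← h0]; positivity)
      rw [hz]; simp
    · have hD1 : Metric.diam V ≤ 1 := hD.trans (pow_le_one₀ hb0.le hb1.le)
      obtain ⟨n, n1, n2⟩ := exists_nat_pow_near_of_lt_one h0 hD1 hb0 hb1
      have hkn : k ≤ n := by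
        by_contra hcon
        have : b ^ k ≤ b ^ (n + 1) := pow_le_pow_of_le_one hb0.le hb1.le (by omega)
        linarith
      have e : Metric.ediam V = ENNReal.ofReal (Metric.diam V) := (ENNReal.ofReal_toReal hfin).symm
      rw [e, ENNReal.ofReal_rpow_of_pos h0]
      refine le_trans (mul_le_mul_right (hbound n hkn n2) _) ?_
      rw [← ENNReal.ofReal_mul (by positivity)]
      apply ENNReal.ofReal_le_ofReal
      have : b ^ t * b ^ ((n : ℝ) * t) = (b ^ (n + 1)) ^ t := by
        rw [← Real.rpow_natCast, ← Real.rpow_mul hb0.le, ← Real.rpow_add hb0]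
        congr 1; push_cast; ring
      rw [this]
      exact Real.rpow_le_rpow (by positivity) n1.le ht.le
  have hμH : μH[t] A ≠ 0 := by
    intro h0
    have h1 : μH[t] S = 0 := measure_mono_null Set.inter_subset_left h0
    have h2 := hle S
    rw [h1, Measure.smul_apply, Measure.restrict_apply_self, smul_eq_mul] at h2
    have h3 := le_antisymm h2 zero_le
    rw [mul_eq_zero] at h3
    rcases h3 with h3 | h3
    · rw [ENNReal.ofReal_eq_zero] at h3
      have : 0 < b ^ t := by positivity
      linarith
    · exact hk h3
  have := le_dimH_of_hausdorffMeasure_ne_zero (s := A) (d := t.toNNReal) (by rwa [Real.coe_toNNReal _ ht.le])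
  exact this

end Sys

namespace Sys

variable {N : ℕ} {b c : ℝ} {u v d : Fin N → ℝ} {Pi : (ℕ → Fin N) → ℝ × ℝ}
    {μ : Measure (ℕ → Fin N)}

theorem slice_dist (H : Sys N b c u v d Pi μ) {i j : ℕ → Fin N} {n : ℕ}
    (hij : ∀ l < n, i l = j l)
    (hx : |(Pi (sh n i)).1 - (Pi (sh n j)).1| ≤ (b / c) ^ n) :
    dist (Pi i) (Pi j) ≤ (KK b c d + 1) * b ^ n := by
  have hcn := pow_pos H.hc0 n
  have hbn := pow_pos H.hb0 n
  have hK := H.KK_nonneg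
  have fi1 := congrArg Prod.fst (H.Pi_formula n i)
  have fj1 := congrArg Prod.fst (H.Pi_formula n j)
  have fi2 := congrArg Prod.snd (H.Pi_formula n i)
  have fj2 := congrArg Prod.snd (H.Pi_formula n j)
  simp only at fi1 fj1 fi2 fj2
  rw [prefixWord_congr hij] at fi1 fi2
  rw [dd_congr b c d hij] at fi2
  have hi := (unitSq_iff _).1 (H.Pi_mem (sh n i))
  have hj := (unitSq_iff _).1 (H.Pi_mem (sh n j))
  have hY1 : |(Pi (sh n i)).2 - (Pi (sh n j)).2| ≤ 1 := by
    rw [abs_le]; constructor <;> linarith [hi.2.1, hi.2.2, hj.2.1, hj.2.2]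
  set X := (Pi (sh n i)).1 - (Pi (sh n j)).1 with hX
  set Y := (Pi (sh n i)).2 - (Pi (sh n j)).2 with hY
  have e1 : (Pi i).1 - (Pi j).1 = c ^ n * X := by rw [fi1, fj1, hX]; ring
  have e2 : (Pi i).2 - (Pi j).2 = dd b c d n j * X + b ^ n * Y := by rw [fi2, fj2, hX, hY]; ring
  rw [div_pow, le_div_iff₀ hcn] at hx
  rw [Prod.dist_eq, max_le_iff, Real.dist_eq, Real.dist_eq, e1, e2]
  constructor
  · rw [abs_mul, abs_of_pos hcn]
    nlinarith
  · refine (abs_add_le _ _).trans ?_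
    have h1 : |dd b c d n j * X| ≤ KK b c d * b ^ n := by
      rw [abs_mul]
      calc _ ≤ KK b c d * c ^ n * |X| := by gcongr; exact H.dd_le n j
        _ = KK b c d * (|X| * c ^ n) := by ring
        _ ≤ _ := by gcongr
    have h2 : |b ^ n * Y| ≤ b ^ n := by
      rw [abs_mul, abs_of_pos hbn]; nlinarith
    linarith

theorem dim_upper (H : Sys N b c u v d Pi μ) {τ : ℝ} (hτ0 : 0 < τ) (hτ : b ^ τ = ((N : ℝ) * c)⁻¹) :
    dimH (Set.range Pi) ≤ ENNReal.ofReal (1 + τ) := by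
  have hb0 := H.hb0
  have hb1 := H.hb1
  have hc0 := H.hc0
  have hK := H.KK_nonneg
  have hNc := H.hNc
  have hN : (0 : ℝ) < N := by have := H.hN; positivity
  let ι : ℕ → Type := fun n => (Fin n → Fin N) × Fin (⌊(c / b) ^ n⌋₊ + 1)
  let U : ∀ n, ι n → Set (ℝ × ℝ) := fun n x =>
    Pi '' {i | pre n i = x.1 ∧ ((x.2 : ℕ) : ℝ) * (b / c) ^ n ≤ (Pi (sh n i)).1 ∧
      (Pi (sh n i)).1 ≤ (((x.2 : ℕ) : ℝ) + 1) * (b / c) ^ n}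
  have hdiam : ∀ n (x : ι n), Metric.ediam (U n x) ≤ ENNReal.ofReal ((KK b c d + 1) * b ^ n) := by
    intro n x
    refine Metric.ediam_le ?_
    rintro _ ⟨i, ⟨i1, i2, i3⟩, rfl⟩ _ ⟨j, ⟨j1, j2, j3⟩, rfl⟩
    rw [edist_dist]
    apply ENNReal.ofReal_le_ofReal
    refine H.slice_dist (pre_eq_iff.1 (i1.trans j1.symm)) ?_
    rw [abs_le]; constructor <;> linarith
  have hcover : ∀ n, Set.range Pi ⊆ ⋃ x, U n x := by
    rintro n _ ⟨i, rfl⟩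
    have hi := (unitSq_iff _).1 (H.Pi_mem (sh n i))
    have hq : 0 < (b / c) ^ n := by positivity
    have h0 : 0 ≤ (Pi (sh n i)).1 / (b / c) ^ n := div_nonneg hi.1.1 hq.le
    have h1 : (Pi (sh n i)).1 / (b / c) ^ n ≤ (c / b) ^ n := by
      have e : (c / b) ^ n = ((b / c) ^ n)⁻¹ := by rw [← inv_pow, inv_div]
      rw [e, div_eq_mul_inv]
      have : 0 < ((b / c) ^ n)⁻¹ := by positivity
      nlinarith [hi.1.2]
    rw [Set.mem_iUnion]
    refine ⟨(pre n i, ⟨⌊(Pi (sh n i)).1 / (b / c) ^ n⌋₊, Nat.lt_succ_of_le (Nat.floor_le_floor h1)⟩), i, ⟨rfl, ?_, ?_⟩, rfl⟩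
    · exact (le_div_iff₀ hq).1 (Nat.floor_le h0)
    · exact (div_le_iff₀ hq).1 (Nat.lt_floor_add_one _).le
  have hr : Tendsto (fun n : ℕ => ENNReal.ofReal ((KK b c d + 1) * b ^ n)) atTop (𝓝 0) := by
    have := ENNReal.tendsto_ofReal ((tendsto_pow_atTop_nhds_zero_of_lt_one hb0.le hb1).const_mul (KK b c d + 1))
    simpa using this
  have hH := Measure.hausdorffMeasure_le_liminf_sum (1 + τ) (Set.range Pi) _ hr U
    (Eventually.of_forall hdiam) (Eventually.of_forall hcover)
  have hsum : ∀ n, ∑ x, Metric.ediam (U n x) ^ (1 + τ) ≤ ENNReal.ofReal (2 * (KK b c d + 1) ^ (1 + τ)) := by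
    intro n
    have hbn : 0 < b ^ n := by positivity
    calc ∑ x, Metric.ediam (U n x) ^ (1 + τ) ≤ ∑ x : ι n, ENNReal.ofReal (((KK b c d + 1) * b ^ n) ^ (1 + τ)) := by
          refine Finset.sum_le_sum fun x _ => ?_
          rw [← ENNReal.ofReal_rpow_of_pos (by positivity)]
          exact ENNReal.rpow_le_rpow (hdiam n x) (by linarith)
      _ = ENNReal.ofReal ((N : ℝ) ^ n * (⌊(c / b) ^ n⌋₊ + 1) * ((KK b c d + 1) * b ^ n) ^ (1 + τ)) := by
          rw [Finset.sum_const, Finset.card_univ, nsmul_eq_mul, ENNReal.ofReal_mul (by positivity)]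
          congr 1
          simp only [ι, Fintype.card_prod, Fintype.card_fun, Fintype.card_fin]
          rw [← ENNReal.ofReal_natCast]
          congr 1
          push_cast
          ring
      _ ≤ _ := by
          apply ENNReal.ofReal_le_ofReal
          have hcb : 1 ≤ (c / b) ^ n := one_le_pow₀ (by rw [one_le_div hb0]; exact H.hbc.le)
          have hfl : (⌊(c / b) ^ n⌋₊ : ℝ) ≤ (c / b) ^ n := Nat.floor_le (by positivity)
          have hbt : (b ^ n) ^ (1 + τ) = b ^ n * ((N * c : ℝ)⁻¹) ^ n := by
            rw [← hτ, Real.rpow_add hbn, Real.rpow_one, ← Real.rpow_natCast, ← Real.rpow_natCast, ← Real.rpow_mul hb0.le, ← Real.rpow_mul hb0.le]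
            congr 2; ring
          calc (N : ℝ) ^ n * (⌊(c / b) ^ n⌋₊ + 1) * ((KK b c d + 1) * b ^ n) ^ (1 + τ)
              ≤ (N : ℝ) ^ n * (2 * (c / b) ^ n) * ((KK b c d + 1) * b ^ n) ^ (1 + τ) := by
                gcongr; linarith
            _ = 2 * (KK b c d + 1) ^ (1 + τ) := by
                rw [Real.mul_rpow (by positivity) hbn.le, hbt, inv_pow, mul_pow, div_pow]
                field_simp
  have hfin : μH[1 + τ] (Set.range Pi) ≠ ∞ := by
    refine ne_top_of_le_ne_top (ENNReal.ofReal_ne_top (r := 2 * (KK b c d + 1) ^ (1 + τ))) (hH.trans ?_)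
    exact (liminf_le_liminf (Eventually.of_forall hsum)).trans (by simp)
  exact dimH_le_of_hausdorffMeasure_ne_top (d := (1 + τ).toNNReal) (by rwa [Real.coe_toNNReal _ (by linarith)])

end Sys

/-- under Assumption B, `dim_H Λ = dim_H ν = min(2, 1 + log(Nc)/(-log b))`. -/
theorem statement4 (N : ℕ) (hN : 2 ≤ N) (b c : ℝ)
    (hb0 : 0 < b) (hb1 : b < 1) (hc0 : 0 < c) (hc1 : c < 1)
    (u v d : Fin N → ℝ)
    (hmaps : ∀ i, Smap c b u v d i '' unitSq ⊆ unitSq)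
    (Pi : (ℕ → Fin N) → ℝ × ℝ)
    (hPi : ∀ i, Tendsto (fun n => Sword c b u v d (prefixWord i n) 0) atTop (nhds (Pi i)))
    (μ : Measure (ℕ → Fin N)) (hμ : IsUniformBernoulli N μ)
    (ν : Measure (ℝ × ℝ)) (hν : ν = μ.map Pi)
    (νx : Measure ℝ) (hνx : νx = ν.map Prod.fst)
    (hB1 : 1 / (N : ℝ) < c) (hB2 : b < c)
    (hB3 : ∀ q > (1 : ℝ), HasLqDensity νx q)
    (hB4 : Transversality N c b u v d) :
    dimH (Set.range Pi) =
      ENNReal.ofReal (min 2 (1 + Real.log ((N : ℝ) * c) / (-Real.log b))) ∧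
    measureDimH ν =
      ENNReal.ofReal (min 2 (1 + Real.log ((N : ℝ) * c) / (-Real.log b))) := by
  subst hν hνx
  have hN0 : (0 : ℝ) < N := by positivity
  have hNc : 1 < (N : ℝ) * c := by
    rw [div_lt_iff₀ hN0] at hB1
    linarith
  have H : Sys N b c u v d Pi μ := ⟨hN, hb0, hb1, hc0, hc1, hB2, hNc, hmaps, hPi, hμ⟩
  have hprob := H.isProb
  have hlb : 0 < -Real.log b := by
    have := Real.log_neg hb0 hb1
    linarith
  set τ := Real.log ((N : ℝ) * c) / (-Real.log b) with hτd
  have hτ0 : 0 < τ := div_pos (Real.log_pos hNc) hlb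
  have hτ : b ^ τ = ((N : ℝ) * c)⁻¹ := by
    rw [Real.rpow_def_of_pos hb0]
    have h1 : Real.log b * τ = -Real.log ((N : ℝ) * c) := by
      have h2 : τ * (-Real.log b) = Real.log ((N : ℝ) * c) := div_mul_cancel₀ _ hlb.ne'
      linarith
    rw [h1, Real.exp_neg, Real.exp_log (by linarith)]
  have hfr : ∀ θ : ℝ, 0 < θ → θ < 1 → ∃ C : ℝ, 1 ≤ C ∧ ∀ a r : ℝ, 0 ≤ r →
      μ.real {i | a ≤ (Pi i).1 ∧ (Pi i).1 ≤ a + r} ≤ C * r ^ θ := by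
    intro θ h0 h1
    refine frost_exists H.measurable_Pi h0 h1 (hB3 _ ?_)
    rw [gt_iff_lt, lt_div_iff₀] <;> linarith
  have hna : ∀ x : ℝ, μ {i | (Pi i).1 = x} = 0 := by
    intro x
    obtain ⟨C, -, hC⟩ := hfr (1 / 2) (by norm_num) (by norm_num)
    have h1 := hC x 0 le_rfl
    rw [Real.zero_rpow (by norm_num), mul_zero, add_zero] at h1
    have h2 : {i | (Pi i).1 = x} = {i | x ≤ (Pi i).1 ∧ (Pi i).1 ≤ x} := by
      ext i
      simp only [Set.mem_setOf_eq]
      constructor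
      · intro h
        exact ⟨h.ge, h.le⟩
      · rintro ⟨ha, hb⟩
        exact le_antisymm hb ha
    rw [h2, ← measureReal_eq_zero_iff]
    exact le_antisymm h1 measureReal_nonneg
  obtain ⟨z, p, η, hp, hI⟩ := H.exists_inner hB4 hna
  obtain ⟨c₃, hc₃, hT⟩ := hB4
  have hlow : ∀ A : Set (ℝ × ℝ), μ.map Pi Aᶜ = 0 → ENNReal.ofReal (min 2 (1 + τ)) ≤ dimH A := by
    intro A hA
    have key : ∀ t, 0 < t → t < min 2 (1 + τ) → ENNReal.ofReal t ≤ dimH A := by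
      intro t ht0 ht
      obtain ⟨ζ, hζ, δ, hδ, M, hP⟩ := H.P_asymp hI hc₃ hT hfr hτ0 hτ (min_le_left _ _) (min_le_right _ _) ht
      exact H.dim_lower ht0 (H.local_dim hδ (ae_good hN hμ z p hp hζ) hP) hA
    have hs0 : 0 < min 2 (1 + τ) := lt_min (by norm_num) (by linarith)
    refine le_of_tendsto (f := fun t => ENNReal.ofReal t) (x := 𝓝[<] (min 2 (1 + τ))) ?_ ?_
    · exact (ENNReal.continuous_ofReal.tendsto _).mono_left nhdsWithin_le_nhds
    · filter_upwards [Ioo_mem_nhdsLT hs0] with t ht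
      exact key t ht.1 ht.2
  have hup : dimH (Set.range Pi) ≤ ENNReal.ofReal (min 2 (1 + τ)) := by
    rcases le_total 2 (1 + τ) with h | h
    · rw [min_eq_left h]
      refine (dimH_mono (Set.subset_univ _)).trans ?_
      rw [Real.dimH_univ_eq_finrank (ℝ × ℝ)]
      simp
    · rw [min_eq_right h]
      exact H.dim_upper hτ0 hτ
  have hfull : μ.map Pi (Set.range Pi)ᶜ = 0 := by
    have hm : MeasurableSet (Set.range Pi) := (isCompact_range H.continuous_Pi).measurableSet
    rw [Measure.map_apply H.measurable_Pi hm.compl]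
    have : Pi ⁻¹' (Set.range Pi)ᶜ = ∅ := by
      ext i
      simp
    rw [this, measure_empty]
  refine ⟨le_antisymm hup (hlow _ hfull), le_antisymm ?_ ?_⟩
  · exact (iInf₂_le (Set.range Pi) hfull).trans hup
  · exact le_iInf₂ hlow

end
end

section
/- Under Assumption A, the set R₁ = {𝐢 ∈ Σ : there exists 𝐣 ≠ 𝐢 with Π(𝐢) = Π(𝐣)} satisfies μ(R₁) = 0; that is, the natural projection Π is injective off a set of μ-measure zero. -/
open MeasureTheory Filter Set Topology
open scoped ENNReal

noncomputable section

/-- shift -/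
def shf {N : ℕ} (n : ℕ) (i : ℕ → Fin N) : ℕ → Fin N := fun k => i (k + n)

/-- cylinder -/
def cylS {N n : ℕ} (w : Fin n → Fin N) : Set (ℕ → Fin N) := {x | ∀ k : Fin n, x (k : ℕ) = w k}

lemma measurable_shf {N : ℕ} (n : ℕ) : Measurable (shf (N := N) n) := by
  refine measurable_pi_lambda _ fun k => ?_
  exact measurable_pi_apply (k + n)

lemma measurableSet_cylS {N n : ℕ} (w : Fin n → Fin N) : MeasurableSet (cylS w) := by
  have : cylS w = ⋂ k : Fin n, (fun x : ℕ → Fin N => x k) ⁻¹' {w k} := by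
    ext x; simp [cylS]
  rw [this]
  exact MeasurableSet.iInter fun k => measurable_pi_apply _ (MeasurableSet.singleton _)

/-- the family of cylinders -/
def cylFam (N : ℕ) : Set (Set (ℕ → Fin N)) := {s | ∃ (n : ℕ) (w : Fin n → Fin N), s = cylS w}

lemma isPiSystem_cylFam (N : ℕ) : IsPiSystem (cylFam N) := by
  have key : ∀ (n m : ℕ) (w : Fin n → Fin N) (w' : Fin m → Fin N), n ≤ m →
      (cylS w ∩ cylS w').Nonempty → cylS w ∩ cylS w' = cylS w' := by
    rintro n m w w' hnm ⟨x, hx, hx'⟩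
    refine inter_eq_right.2 fun y hy k => ?_
    have h1 := hy (Fin.castLE hnm k)
    have h2 := hx' (Fin.castLE hnm k)
    have h3 := hx k
    simp only [Fin.val_castLE] at h1 h2
    rw [h1, ← h2, h3]
  rintro _ ⟨n, w, rfl⟩ _ ⟨m, w', rfl⟩ hne
  rcases le_total n m with h | h
  · exact ⟨m, w', key n m w w' h hne⟩
  · refine ⟨n, w, ?_⟩
    rw [inter_comm] at hne ⊢
    exact key m n w' w h hne

lemma generate_cylFam (N : ℕ) :
    (MeasurableSpace.pi : MeasurableSpace (ℕ → Fin N)) = MeasurableSpace.generateFrom (cylFam N) := by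
  apply le_antisymm
  · refine iSup_le fun k => ?_
    rintro _ ⟨s, -, rfl⟩
    have : (fun x : ℕ → Fin N => x k) ⁻¹' s =
        ⋃ w ∈ {w : Fin (k+1) → Fin N | w (Fin.last k) ∈ s}, cylS w := by
      ext x
      simp only [mem_preimage, mem_iUnion, mem_ofPred_eq, exists_prop]
      constructor
      · intro hx
        exact ⟨fun j => x j, by simpa using hx, fun j => rfl⟩
      · rintro ⟨w, hw, hxw⟩
        have := hxw (Fin.last k)
        simp only [Fin.val_last] at this
        rw [this]; exact hw
    rw [this]
    refine MeasurableSet.biUnion (Set.to_countable _) fun w _ => ?_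
    exact MeasurableSpace.measurableSet_generateFrom ⟨_, w, rfl⟩
  · refine MeasurableSpace.generateFrom_le ?_
    rintro _ ⟨n, w, rfl⟩
    exact measurableSet_cylS w

lemma cylS_ext {N : ℕ} (μ ρ : Measure (ℕ → Fin N)) [IsFiniteMeasure μ]
    (h : ∀ (n : ℕ) (w : Fin n → Fin N), μ (cylS w) = ρ (cylS w)) : μ = ρ := by
  refine ext_of_generate_finite (cylFam N) (generate_cylFam N) (isPiSystem_cylFam N) ?_ ?_
  · rintro _ ⟨n, w, rfl⟩; exact h n w
  · have := h 0 Fin.elim0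
    have hu : cylS (N := N) (n := 0) Fin.elim0 = univ := by
      ext x; simp [cylS]
    rwa [hu] at this

lemma cyl_shift {N : ℕ} (hN : 2 ≤ N) {μ : Measure (ℕ → Fin N)} (hμ : IsUniformBernoulli N μ) {n : ℕ}
    (w : Fin n → Fin N) {A : Set (ℕ → Fin N)} (hA : MeasurableSet A) :
    μ (cylS w ∩ shf n ⁻¹' A) = (1 / (N : ℝ≥0∞)) ^ n * μ A := by
  have := hμ.1
  have key : (μ.restrict (cylS w)).map (shf n) = (1 / (N : ℝ≥0∞)) ^ n • μ := by
    refine cylS_ext _ _ fun m w' => ?_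
    rw [Measure.map_apply (measurable_shf n) (measurableSet_cylS w'),
      Measure.restrict_apply (measurable_shf n (measurableSet_cylS w')), Measure.smul_apply,
      smul_eq_mul, show μ (cylS w') = _ from hμ.2 m w', ← pow_add, ← hμ.2 (n + m) (Fin.append w w')]
    congr 1
    ext x
    simp only [mem_inter_iff, mem_preimage, cylS, mem_ofPred_eq, shf]
    constructor
    · rintro ⟨h1, h2⟩ k
      refine Fin.addCases (fun k => ?_) (fun k => ?_) k
      · simpa using h2 k
      · have := h1 k
        simp only [Fin.val_natAdd, Fin.append_right]
        rw [add_comm]; exact this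
    · intro h
      refine ⟨fun k => ?_, fun k => ?_⟩
      · have := h (Fin.natAdd n k)
        simp only [Fin.val_natAdd, Fin.append_right] at this
        rw [add_comm]; exact this
      · simpa using h (Fin.castAdd m k)
  have := congrArg (fun ρ => ρ A) key
  simp only [Measure.smul_apply, smul_eq_mul] at this
  rw [Measure.map_apply (measurable_shf n) hA, Measure.restrict_apply (measurable_shf n hA)] at this
  rw [inter_comm]; exact this

lemma shf_mp {N : ℕ} (hN : 2 ≤ N) {μ : Measure (ℕ → Fin N)} (hμ : IsUniformBernoulli N μ) (n : ℕ) :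
    MeasurePreserving (shf n) μ μ := by
  refine ⟨measurable_shf n, ?_⟩
  ext A hA
  rw [Measure.map_apply (measurable_shf n) hA]
  have : shf n ⁻¹' A = ⋃ w : Fin n → Fin N, (cylS w ∩ shf n ⁻¹' A) := by
    ext x
    simp only [mem_iUnion, mem_inter_iff]
    exact ⟨fun h => ⟨fun k => x k, fun k => rfl, h⟩, fun ⟨_, _, h⟩ => h⟩
  rw [this, measure_iUnion]
  · simp_rw [cyl_shift hN hμ _ hA]
    rw [tsum_fintype, Finset.sum_const, Finset.card_univ, Fintype.card_fun, Fintype.card_fin,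
      Fintype.card_fin, nsmul_eq_mul, ← mul_assoc]
    push_cast
    rw [← mul_pow, one_div, ENNReal.mul_inv_cancel (by simp; omega) (by simp), one_pow, one_mul]
  · intro w w' hne
    refine Disjoint.mono inter_subset_left inter_subset_left ?_
    rw [Set.disjoint_left]
    intro x hx hx'
    exact hne (funext fun k => (hx k).symm.trans (hx' k))
  · intro w
    exact (measurableSet_cylS w).inter (measurable_shf n hA)

lemma prefix_succ {N : ℕ} (i : ℕ → Fin N) (n : ℕ) :
    prefixWord i (n + 1) = i 0 :: prefixWord (shf 1 i) n := by
  simp [prefixWord, List.ofFn_succ, shf]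

lemma shf_shf {N : ℕ} (i : ℕ → Fin N) (n : ℕ) : shf n (shf 1 i) = shf (n + 1) i := by
  funext k; simp [shf, add_assoc]

lemma length_prefixWord {N : ℕ} (i : ℕ → Fin N) (n : ℕ) : (prefixWord i n).length = n := by
  simp [prefixWord]

lemma prefix_congr {N : ℕ} {i j : ℕ → Fin N} {n : ℕ} (h : ∀ k < n, i k = j k) :
    prefixWord i n = prefixWord j n := by
  unfold prefixWord
  congr 1
  funext k
  exact h k k.2

section
variable {N : ℕ} {c b : ℝ} {u v d : Fin N → ℝ}

lemma continuous_Smap (i : Fin N) : Continuous (Smap c b u v d i) := by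
  unfold Smap; fun_prop

lemma Smap_inj (hb0 : 0 < b) (hc0 : 0 < c) (i : Fin N) : Function.Injective (Smap c b u v d i) := by
  rintro ⟨x, y⟩ ⟨x', y'⟩ h
  simp only [Smap, Prod.mk.injEq] at h
  obtain ⟨h1, h2⟩ := h
  have hx : x = x' := by
    have : c * x = c * x' := by linarith
    exact mul_left_cancel₀ hc0.ne' this
  subst hx
  have : b * y = b * y' := by linarith
  rw [mul_left_cancel₀ hb0.ne' this]

lemma Sword_inj (hb0 : 0 < b) (hc0 : 0 < c) (w : List (Fin N)) :
    Function.Injective (Sword c b u v d w) := by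
  induction w with
  | nil => exact Function.injective_id
  | cons i w ih => exact (Smap_inj hb0 hc0 i).comp ih

lemma Sword_fst (w : List (Fin N)) (p q : ℝ × ℝ) :
    (Sword c b u v d w p).1 - (Sword c b u v d w q).1 = c ^ w.length * (p.1 - q.1) := by
  induction w with
  | nil => simp [Sword]
  | cons i w ih =>
    simp only [Sword, Function.comp, Smap, List.length_cons, pow_succ]
    linear_combination c * ih

lemma Sword_maps (hmaps : ∀ i, Smap c b u v d i '' unitSq ⊆ unitSq) (w : List (Fin N)) :
    MapsTo (Sword c b u v d w) unitSq unitSq := by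
  induction w with
  | nil => exact mapsTo_id _
  | cons i w ih => exact MapsTo.comp (mapsTo_iff_image_subset.2 (hmaps i)) ih

lemma isCompact_unitSq : IsCompact unitSq := isCompact_Icc.prod isCompact_Icc

lemma zero_mem_unitSq : (0 : ℝ × ℝ) ∈ unitSq :=
  ⟨⟨le_refl _, zero_le_one⟩, ⟨le_refl _, zero_le_one⟩⟩

variable {P : (ℕ → Fin N) → ℝ × ℝ}

lemma P_mem (hmaps : ∀ i, Smap c b u v d i '' unitSq ⊆ unitSq)
    (hP : ∀ i, Tendsto (fun n => Sword c b u v d (prefixWord i n) 0) atTop (nhds (P i)))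
    (i : ℕ → Fin N) : P i ∈ unitSq :=
  isCompact_unitSq.isClosed.mem_of_tendsto (hP i)
    (Eventually.of_forall fun _ => Sword_maps hmaps _ zero_mem_unitSq)

lemma P_step
    (hP : ∀ i, Tendsto (fun n => Sword c b u v d (prefixWord i n) 0) atTop (nhds (P i)))
    (i : ℕ → Fin N) : P i = Smap c b u v d (i 0) (P (shf 1 i)) := by
  have h1 := (tendsto_add_atTop_iff_nat 1).2 (hP i)
  have h2 := ((continuous_Smap (c := c) (b := b) (u := u) (v := v) (d := d) (i 0)).tendsto _).comp
    (hP (shf 1 i))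
  refine tendsto_nhds_unique h1 (h2.congr fun n => ?_)
  rw [prefix_succ]; rfl

lemma P_word
    (hP : ∀ i, Tendsto (fun n => Sword c b u v d (prefixWord i n) 0) atTop (nhds (P i)))
    (n : ℕ) (i : ℕ → Fin N) : P i = Sword c b u v d (prefixWord i n) (P (shf n i)) := by
  induction n generalizing i with
  | zero => rfl
  | succ n ih =>
    rw [prefix_succ, ← shf_shf i n]
    simp only [Sword, Function.comp]
    rw [← ih, ← P_step hP]

lemma P_meas
    (hP : ∀ i, Tendsto (fun n => Sword c b u v d (prefixWord i n) 0) atTop (nhds (P i))) :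
    Measurable P := by
  refine measurable_of_tendsto_metrizable (f := fun n i => Sword c b u v d (prefixWord i n) 0) ?_
    (tendsto_pi_nhds.2 hP)
  intro n
  have : (fun i : ℕ → Fin N => Sword c b u v d (prefixWord i n) 0) =
      (fun w : Fin n → Fin N => Sword c b u v d (List.ofFn w) 0) ∘ (fun i k => i k) := rfl
  rw [this]
  refine Measurable.comp (measurable_of_finite _) ?_
  exact measurable_pi_lambda _ fun k => measurable_pi_apply _

end

lemma meas_ball (ν : Measure ℝ) [IsFiniteMeasure ν] (r : ℝ) :
    Measurable fun x => ν (Metric.closedBall x r) := by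
  have hs : MeasurableSet {p : ℝ × ℝ | dist p.2 p.1 ≤ r} :=
    measurableSet_le (by fun_prop) measurable_const
  exact measurable_measure_prodMk_left (ν := ν) hs

lemma ae_bdd (ν : Measure ℝ) [IsFiniteMeasure ν] (hac : ν ≪ volume) (A r : ℝ) (hA : 0 < A)
    (hr : 0 < r) (hr1 : r < 1) :
    ∀ᵐ x ∂ν, ∃ M : ℕ, ∀ n : ℕ, ν (Metric.closedBall x (A * r ^ n)) ≤ M * ENNReal.ofReal (r ^ n) := by
  have h1 := hac.ae_le (Besicovitch.ae_tendsto_rnDeriv ν volume)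
  have h2 := hac.ae_le (Measure.rnDeriv_lt_top ν volume)
  filter_upwards [h1, h2] with x hx hx2
  have hlim : Tendsto (fun n : ℕ => A * r ^ n) atTop (𝓝[>] 0) := by
    refine tendsto_nhdsWithin_iff.2 ⟨?_, Eventually.of_forall fun n => mem_Ioi.2 (by positivity)⟩
    simpa using (tendsto_pow_atTop_nhds_zero_of_lt_one hr.le hr1).const_mul A
  have h3 := hx.comp hlim
  have h4 := (ENNReal.tendsto_toReal hx2.ne).comp h3
  obtain ⟨K, hK⟩ := h4.bddAbove_range
  obtain ⟨M, hM⟩ := exists_nat_ge (K * (2 * A))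
  refine ⟨M, fun n => ?_⟩
  have h5 := hK (mem_range_self n)
  simp only [Function.comp, Real.volume_closedBall, ENNReal.toReal_div] at h5
  have hp : 0 < r ^ n := by positivity
  rw [ENNReal.toReal_ofReal (by positivity), div_le_iff₀ (by positivity)] at h5
  rw [← ENNReal.ofReal_toReal (measure_ne_top ν (Metric.closedBall x (A * r ^ n))),
    ← ENNReal.ofReal_natCast, ← ENNReal.ofReal_mul (by positivity)]
  refine ENNReal.ofReal_le_ofReal (h5.trans ?_)
  nlinarith

lemma fst_close {N : ℕ} {c b : ℝ} {u v d : Fin N → ℝ} (hc0 : 0 < c)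
    (hmaps : ∀ i, Smap c b u v d i '' unitSq ⊆ unitSq)
    {P : (ℕ → Fin N) → ℝ × ℝ}
    (hP : ∀ i, Tendsto (fun n => Sword c b u v d (prefixWord i n) 0) atTop (nhds (P i)))
    {n : ℕ} {w : Fin n → Fin N} {i j : ℕ → Fin N} (hi : i ∈ cylS w) (hj : j ∈ cylS w) :
    dist (P i).1 (P j).1 = c ^ n * dist (P (shf n i)).1 (P (shf n j)).1 ∧
    dist (P i).1 (P j).1 ≤ c ^ n := by
  have hpre : prefixWord i n = prefixWord j n :=
    prefix_congr fun k hk => (hi ⟨k, hk⟩).trans (hj ⟨k, hk⟩).symm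
  have h1 : dist (P i).1 (P j).1 = c ^ n * dist (P (shf n i)).1 (P (shf n j)).1 := by
    rw [P_word hP n i, P_word hP n j, hpre, Real.dist_eq, Sword_fst, length_prefixWord, abs_mul,
      abs_of_pos (by positivity), Real.dist_eq]
  refine ⟨h1, ?_⟩
  rw [h1]
  have h2 := (P_mem hmaps hP (shf n i)).1
  have h3 := (P_mem hmaps hP (shf n j)).1
  have := Real.dist_le_of_mem_Icc_01 h2 h3
  have : 0 < c ^ n := by positivity
  nlinarith

lemma core_est {N : ℕ} (hN : 2 ≤ N) {b c : ℝ} (hb0 : 0 < b) (hc0 : 0 < c)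
    {u v d : Fin N → ℝ}
    (hmaps : ∀ i, Smap c b u v d i '' unitSq ⊆ unitSq)
    {P : (ℕ → Fin N) → ℝ × ℝ}
    (hP : ∀ i, Tendsto (fun n => Sword c b u v d (prefixWord i n) 0) atTop (nhds (P i)))
    {μ : Measure (ℕ → Fin N)} (hμ : IsUniformBernoulli N μ)
    {ν : Measure ℝ} (hν : ν = μ.map (fun i => (P i).1))
    {c₃ : ℝ} (hA4 : ∀ (n : ℕ) (i j : ℕ → Fin N), i 0 ≠ j 0 →
      Metric.diam (Prod.fst '' (Sword c b u v d (prefixWord i n) '' unitSq ∩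
        Sword c b u v d (prefixWord j n) '' unitSq)) < c₃ * b ^ n)
    (E : Set ℝ) (M n : ℕ)
    (hE1 : ∀ x ∈ E, ν (Metric.closedBall x (2 * c ^ n)) ≤ M * ENNReal.ofReal (c ^ n))
    (hE2 : ∀ x ∈ E, ν (Metric.closedBall x (c₃ * (b / c) ^ n)) ≤ M * ENNReal.ofReal ((b / c) ^ n)) :
    μ {i | (∃ j, j 0 ≠ i 0 ∧ P j = P i) ∧ (P i).1 ∈ E ∧ (P (shf n i)).1 ∈ E} ≤
      M * M * ENNReal.ofReal ((N * b) ^ n) := by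
  classical
  have hPm : Measurable fun i => (P i).1 := (P_meas hP).fst
  have hνap : ∀ x r, ν (Metric.closedBall x r) = μ ((fun i => (P i).1) ⁻¹' Metric.closedBall x r) :=
    fun x r => by rw [hν, Measure.map_apply hPm Metric.isClosed_closedBall.measurableSet]
  set G : (Fin n → Fin N) → (Fin n → Fin N) → Set (ℕ → Fin N) := fun a w =>
    {i | i ∈ cylS a ∧ (∃ j, j ∈ cylS w ∧ j 0 ≠ i 0 ∧ P j = P i) ∧ (P i).1 ∈ E ∧
      (P (shf n i)).1 ∈ E} with hG
  have hG1 : ∀ a w, μ (G a w) ≤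
      (1 / (N : ℝ≥0∞)) ^ n * (M * ENNReal.ofReal ((b / c) ^ n)) := by
    intro a w
    rcases (G a w).eq_empty_or_nonempty with h | ⟨i₀, hi₀⟩
    · rw [h, measure_empty]; exact zero_le
    have hsub : G a w ⊆ cylS a ∩ shf n ⁻¹' ((fun i => (P i).1) ⁻¹'
        Metric.closedBall (P (shf n i₀)).1 (c₃ * (b / c) ^ n)) := by
      intro i hi
      refine ⟨hi.1, ?_⟩
      simp only [mem_preimage, Metric.mem_closedBall]
      obtain ⟨hia, ⟨j, hjw, hji, hPj⟩, -, -⟩ := hi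
      obtain ⟨hia₀, ⟨j₀, hjw₀, hji₀, hPj₀⟩, -, -⟩ := hi₀
      have hpre : prefixWord i₀ n = prefixWord i n :=
        prefix_congr fun k hk => (hia₀ ⟨k, hk⟩).trans (hia ⟨k, hk⟩).symm
      have hpre' : prefixWord j₀ n = prefixWord j n :=
        prefix_congr fun k hk => (hjw₀ ⟨k, hk⟩).trans (hjw ⟨k, hk⟩).symm
      have hd := hA4 n i j hji.symm
      have hm : (P i).1 ∈ Prod.fst '' (Sword c b u v d (prefixWord i n) '' unitSq ∩
        Sword c b u v d (prefixWord j n) '' unitSq) := by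
        refine ⟨P i, ⟨⟨_, P_mem hmaps hP (shf n i), (P_word hP n i).symm⟩, ?_⟩, rfl⟩
        rw [← hPj]
        exact ⟨_, P_mem hmaps hP (shf n j), (P_word hP n j).symm⟩
      have hm₀ : (P i₀).1 ∈ Prod.fst '' (Sword c b u v d (prefixWord i n) '' unitSq ∩
        Sword c b u v d (prefixWord j n) '' unitSq) := by
        rw [← hpre, ← hpre']
        refine ⟨P i₀, ⟨⟨_, P_mem hmaps hP (shf n i₀), (P_word hP n i₀).symm⟩, ?_⟩, rfl⟩
        rw [← hPj₀]
        exact ⟨_, P_mem hmaps hP (shf n j₀), (P_word hP n j₀).symm⟩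
      have hbdd : Bornology.IsBounded (Prod.fst '' (Sword c b u v d (prefixWord i n) '' unitSq ∩
          Sword c b u v d (prefixWord j n) '' unitSq)) := by
        refine (isCompact_unitSq.image continuous_fst).isBounded.subset (image_mono ?_)
        exact inter_subset_left.trans (Sword_maps hmaps _).image_subset
      have hle := (Metric.dist_le_diam_of_mem hbdd hm hm₀).trans hd.le
      rw [(fst_close hc0 hmaps hP hia hia₀).1] at hle
      have hcn : 0 < c ^ n := by positivity
      rw [div_pow, ← mul_div_assoc, le_div_iff₀ hcn]
      linarith
    refine (measure_mono hsub).trans ?_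
    rw [cyl_shift hN hμ a (hPm Metric.isClosed_closedBall.measurableSet), ← hνap]
    exact mul_le_mul_right (hE2 _ hi₀.2.2.2) _
  set T : (Fin n → Fin N) → Finset (Fin n → Fin N) := fun a =>
    Finset.univ.filter fun w => (G a w).Nonempty with hT
  have hcard : ∀ a, ((T a).card : ℝ≥0∞) * (1 / (N : ℝ≥0∞)) ^ n ≤ M * ENNReal.ofReal (c ^ n) := by
    intro a
    rcases (T a).eq_empty_or_nonempty with h | ⟨w₀, hw₀⟩
    · rw [h]; simp
    obtain ⟨i₀, hi₀⟩ := (Finset.mem_filter.1 hw₀).2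
    calc ((T a).card : ℝ≥0∞) * (1 / (N : ℝ≥0∞)) ^ n = ∑ w ∈ T a, μ (cylS w) := by
          have hcy : ∀ w : Fin n → Fin N, μ (cylS w) = (1 / (N : ℝ≥0∞)) ^ n := hμ.2 n
          simp_rw [hcy]
          rw [ Finset.sum_const, nsmul_eq_mul]
      _ = μ (⋃ w ∈ T a, cylS w) := by
          rw [measure_biUnion_finset _ fun w _ => measurableSet_cylS w]
          intro w _ w' _ hne
          refine Set.disjoint_left.2 fun x hx hx' => ?_
          exact hne (funext fun k => (hx k).symm.trans (hx' k))
      _ ≤ μ ((fun i => (P i).1) ⁻¹' Metric.closedBall (P i₀).1 (2 * c ^ n)) := by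
          refine measure_mono (iUnion₂_subset fun w hw x hx => ?_)
          obtain ⟨i, hia, ⟨j, hjw, hji, hPj⟩, -, -⟩ := (Finset.mem_filter.1 hw).2
          simp only [mem_preimage, Metric.mem_closedBall]
          have h1 := (fst_close hc0 hmaps hP hx hjw).2
          have h2 := (fst_close hc0 hmaps hP hia hi₀.1).2
          rw [hPj] at h1
          linarith [dist_triangle (P x).1 (P i).1 (P i₀).1]
      _ ≤ _ := by rw [← hνap]; exact hE1 _ hi₀.2.2.1
  have hcover : {i | (∃ j, j 0 ≠ i 0 ∧ P j = P i) ∧ (P i).1 ∈ E ∧ (P (shf n i)).1 ∈ E} ⊆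
      ⋃ a ∈ (Finset.univ : Finset (Fin n → Fin N)), ⋃ w ∈ T a, G a w := by
    rintro i ⟨⟨j, hj, hPj⟩, h1, h2⟩
    have hmem : i ∈ G (fun k => i k) (fun k => j k) :=
      ⟨fun k => rfl, ⟨j, fun k => rfl, hj, hPj⟩, h1, h2⟩
    simp only [mem_iUnion]
    exact ⟨fun k => i k, Finset.mem_univ _, fun k => j k,
      Finset.mem_filter.2 ⟨Finset.mem_univ _, ⟨i, hmem⟩⟩, hmem⟩
  calc _ ≤ μ (⋃ a ∈ (Finset.univ : Finset (Fin n → Fin N)), ⋃ w ∈ T a, G a w) := measure_mono hcover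
    _ ≤ ∑ a : Fin n → Fin N, μ (⋃ w ∈ T a, G a w) := measure_biUnion_finset_le _ _
    _ ≤ ∑ a : Fin n → Fin N, ∑ w ∈ T a, μ (G a w) :=
        Finset.sum_le_sum fun a _ => measure_biUnion_finset_le _ _
    _ ≤ ∑ a : Fin n → Fin N, ∑ w ∈ T a, (1 / (N : ℝ≥0∞)) ^ n * (M * ENNReal.ofReal ((b / c) ^ n)) :=
        Finset.sum_le_sum fun a _ => Finset.sum_le_sum fun w _ => hG1 a w
    _ ≤ ∑ a : Fin n → Fin N, (M * ENNReal.ofReal (c ^ n)) * (M * ENNReal.ofReal ((b / c) ^ n)) := by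
        refine Finset.sum_le_sum fun a _ => ?_
        rw [Finset.sum_const, nsmul_eq_mul, ← mul_assoc]
        exact mul_le_mul_left (hcard a) _
    _ = M * M * ENNReal.ofReal ((N * b) ^ n) := by
        rw [Finset.sum_const, Finset.card_univ, Fintype.card_fun, Fintype.card_fin, Fintype.card_fin,
          nsmul_eq_mul, ← ENNReal.ofReal_natCast (N ^ n)]
        have : ((N : ℝ) * b) ^ n = ((N ^ n : ℕ) : ℝ) * (c ^ n * (b / c) ^ n) := by
          push_cast
          rw [← mul_pow, ← mul_pow, mul_div_cancel₀ _ hc0.ne']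
        rw [this, ENNReal.ofReal_mul (by positivity), ENNReal.ofReal_mul (by positivity)]
        ring

/-- under Assumption A, the natural projection `Π` is injective off a set of
`μ`-measure zero. -/
theorem statement9 (N : ℕ) (hN : 2 ≤ N) (b c : ℝ)
    (hb0 : 0 < b) (hb1 : b < 1) (hc0 : 0 < c) (hc1 : c < 1)
    (u v d : Fin N → ℝ)
    (hmaps : ∀ i, Smap c b u v d i '' unitSq ⊆ unitSq)
    (Pi : (ℕ → Fin N) → ℝ × ℝ)
    (hPi : ∀ i, Tendsto (fun n => Sword c b u v d (prefixWord i n) 0) atTop (nhds (Pi i)))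
    (μ : Measure (ℕ → Fin N)) (hμ : IsUniformBernoulli N μ)
    (νx : Measure ℝ) (hνx : νx = μ.map (fun i => (Pi i).1))
    (hA1 : 1 / (N : ℝ) < c) (hA2 : b < 1 / (N : ℝ))
    (hA3 : ∃ q > (1 : ℝ), HasLqDensity νx q)
    (hA4 : Transversality N c b u v d) :
    μ {i | ∃ j, j ≠ i ∧ Pi j = Pi i} = 0 := by
  obtain ⟨c₃, hc₃, hA4⟩ := hA4
  have hprob := hμ.1
  have hPm : Measurable fun i => (Pi i).1 := (P_meas hPi).fst
  have hN0 : (0 : ℝ) < N := by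
    have : 0 < N := by omega
    exact_mod_cast this
  have hbc : b / c < 1 := (div_lt_one hc0).2 (hA2.trans hA1)
  have hbc0 : 0 < b / c := div_pos hb0 hc0
  have hνp : IsProbabilityMeasure νx := hνx ▸ Measure.isProbabilityMeasure_map hPm.aemeasurable
  have hac : νx ≪ volume := by
    obtain ⟨q, -, φ, hφ, -⟩ := hA3
    rw [hφ]; exact withDensity_absolutelyContinuous _ _
  -- good sets
  set E : ℕ → Set ℝ := fun M => {x | (∀ n : ℕ, νx (Metric.closedBall x (2 * c ^ n)) ≤
      M * ENNReal.ofReal (c ^ n)) ∧ (∀ n : ℕ, νx (Metric.closedBall x (c₃ * (b / c) ^ n)) ≤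
      M * ENNReal.ofReal ((b / c) ^ n))} with hE
  have hEm : ∀ M, MeasurableSet (E M) := by
    intro M
    have : E M = (⋂ n : ℕ, {x | νx (Metric.closedBall x (2 * c ^ n)) ≤
      M * ENNReal.ofReal (c ^ n)}) ∩ (⋂ n : ℕ, {x | νx (Metric.closedBall x (c₃ * (b / c) ^ n)) ≤
      M * ENNReal.ofReal ((b / c) ^ n)}) := by
      ext x; simp [hE]
    rw [this]
    exact (MeasurableSet.iInter fun n => measurableSet_le (meas_ball _ _) measurable_const).inter
      (MeasurableSet.iInter fun n => measurableSet_le (meas_ball _ _) measurable_const)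
  have hEmono : Monotone E := by
    intro M M' h x hx
    have h' : (M : ℝ≥0∞) ≤ M' := by exact_mod_cast h
    exact ⟨fun n => (hx.1 n).trans (mul_le_mul_left h' _),
      fun n => (hx.2 n).trans (mul_le_mul_left h' _)⟩
  have hElim : Tendsto (fun M => νx (E M)ᶜ) atTop (𝓝 0) := by
    have h0 : νx (⋂ M, (E M)ᶜ) = 0 := by
      rw [← compl_iUnion]
      have : ∀ᵐ x ∂νx, x ∈ ⋃ M, E M := by
        filter_upwards [ae_bdd νx hac 2 c two_pos hc0 hc1, ae_bdd νx hac c₃ (b / c) hc₃ hbc0 hbc]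
          with x ⟨M1, h1⟩ ⟨M2, h2⟩
        refine mem_iUnion.2 ⟨max M1 M2, fun n => (h1 n).trans (mul_le_mul_left ?_ _),
          fun n => (h2 n).trans (mul_le_mul_left ?_ _)⟩
        · exact_mod_cast le_max_left M1 M2
        · exact_mod_cast le_max_right M1 M2
      exact this
    rw [← h0]
    exact tendsto_measure_iInter_atTop (fun M => (hEm M).compl.nullMeasurableSet)
      (fun M M' h => compl_subset_compl.2 (hEmono h)) ⟨0, measure_ne_top _ _⟩
  have hR' : μ {i | ∃ j, j 0 ≠ i 0 ∧ Pi j = Pi i} = 0 := by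
    have hb : ∀ M n : ℕ, μ {i | ∃ j, j 0 ≠ i 0 ∧ Pi j = Pi i} ≤
        M * M * ENNReal.ofReal ((N * b) ^ n) + 2 * νx (E M)ᶜ := by
      intro M n
      have hc1 : μ ((fun i => (Pi i).1) ⁻¹' (E M)ᶜ) = νx (E M)ᶜ := by
        rw [hνx, Measure.map_apply hPm (hEm M).compl]
      have hc2 : μ (shf n ⁻¹' ((fun i => (Pi i).1) ⁻¹' (E M)ᶜ)) = νx (E M)ᶜ := by
        rw [← hc1]
        exact (shf_mp hN hμ n).measure_preimage (hPm (hEm M).compl).nullMeasurableSet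
      have hsub : {i | ∃ j, j 0 ≠ i 0 ∧ Pi j = Pi i} ⊆
          {i | (∃ j, j 0 ≠ i 0 ∧ Pi j = Pi i) ∧ (Pi i).1 ∈ E M ∧ (Pi (shf n i)).1 ∈ E M} ∪
          (((fun i => (Pi i).1) ⁻¹' (E M)ᶜ) ∪ (shf n ⁻¹' ((fun i => (Pi i).1) ⁻¹' (E M)ᶜ))) := by
        intro i hi
        by_cases h1 : (Pi i).1 ∈ E M
        · by_cases h2 : (Pi (shf n i)).1 ∈ E M
          · exact Or.inl ⟨hi, h1, h2⟩
          · exact Or.inr (Or.inr h2)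
        · exact Or.inr (Or.inl h1)
      refine (measure_mono hsub).trans ((measure_union_le _ _).trans (add_le_add ?_ ?_))
      · exact core_est hN hb0 hc0 hmaps hPi hμ hνx hA4 (E M) M n (fun x hx => hx.1 n)
          (fun x hx => hx.2 n)
      · refine (measure_union_le _ _).trans ?_
        rw [hc1, hc2, two_mul]
    have hb2 : ∀ M : ℕ, μ {i | ∃ j, j 0 ≠ i 0 ∧ Pi j = Pi i} ≤ 2 * νx (E M)ᶜ := by
      intro M
      have hNb : (N : ℝ) * b < 1 := by
        rw [lt_div_iff₀ hN0] at hA2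
        linarith
      have h1 := ENNReal.tendsto_ofReal
        (tendsto_pow_atTop_nhds_zero_of_lt_one (by positivity : 0 ≤ (N : ℝ) * b) hNb)
      have h2 := (ENNReal.Tendsto.const_mul (a := (M : ℝ≥0∞) * M) h1
        (Or.inr (ENNReal.mul_ne_top (by simp) (by simp)))).add_const (2 * νx (E M)ᶜ)
      have h3 := ge_of_tendsto' h2 (hb M)
      simpa using h3
    have h4 := ENNReal.Tendsto.const_mul (a := 2) hElim (Or.inr (by simp))
    have h5 := ge_of_tendsto' h4 hb2
    simpa using h5
  have hsub : {i | ∃ j, j ≠ i ∧ Pi j = Pi i} ⊆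
      ⋃ k : ℕ, shf k ⁻¹' {i | ∃ j, j 0 ≠ i 0 ∧ Pi j = Pi i} := by
    classical
    rintro i ⟨j, hne, hj⟩
    have hex : ∃ k, j k ≠ i k := Function.ne_iff.1 hne
    refine mem_iUnion.2 ⟨Nat.find hex, shf (Nat.find hex) j, ?_, ?_⟩
    · simpa [shf] using Nat.find_spec hex
    · have hpre : prefixWord j (Nat.find hex) = prefixWord i (Nat.find hex) :=
        prefix_congr fun k hk => not_not.1 (Nat.find_min hex hk)
      rw [P_word hPi (Nat.find hex) j, P_word hPi (Nat.find hex) i, hpre] at hj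
      exact Sword_inj hb0 hc0 _ hj
  refine measure_mono_null hsub (measure_iUnion_null fun k => ?_)
  exact (shf_mp hN hμ k).quasiMeasurePreserving.preimage_null hR'

end
end

section
/- Assume ν_x is absolutely continuous with an L^q density for every q > 1. Then for every K > 0 and every q > 1 there exists a constant C = C(K,q) such that for every ℓ > 0, every interval I of length K·c^ℓ intersects at most C·(Nc)^ℓ·c^{−ℓ/q} of the intervals h_τ([0,1]) with τ a word of length ℓ. -/
open MeasureTheory Filter Set Topology
open scoped ENNReal

noncomputable section

/-- Composition of the maps `hᵢ(x) = c x + uᵢ` along a finite word: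
`hword [i₁,…,iₙ] = h_{i₁} ∘ ⋯ ∘ h_{iₙ}`. -/
def hword {N : ℕ} (c : ℝ) (u : Fin N → ℝ) : List (Fin N) → ℝ → ℝ
  | [] => id
  | i :: w => fun x => c * hword c u w x + u i

lemma aux_holder (φ : ℝ → ℝ≥0∞) (q : ℝ) (hq : 1 < q) (J : Set ℝ) :
    ∫⁻ t in J, φ t ≤ (∫⁻ t, φ t ^ q) ^ (1 / q) * (volume J) ^ (1 - 1 / q) := by
  obtain ⟨g, hg, hle, heq⟩ := exists_measurable_le_lintegral_eq (volume.restrict J) φ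
  have hpq : q.HolderConjugate (q.conjExponent) := Real.HolderConjugate.conjExponent hq
  have h := ENNReal.lintegral_mul_le_Lp_mul_Lq (volume.restrict J) hpq hg.aemeasurable
    (g := fun _ => 1) aemeasurable_const
  have h1 : 1 / q.conjExponent = 1 - 1 / q := by
    have := hpq.inv_add_inv_eq_one
    simp only [one_div]; linarith
  rw [h1] at h
  simp only [Pi.mul_apply, mul_one, ENNReal.one_rpow, lintegral_const, one_mul,
    Measure.restrict_apply_univ] at h
  rw [heq]
  refine h.trans ?_
  gcongr
  · exact Measure.restrict_le_self
  · exact hle _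

lemma hword_append {N : ℕ} (c : ℝ) (u : Fin N → ℝ) (w v : List (Fin N)) (x : ℝ) :
    hword c u (w ++ v) x = hword c u w (hword c u v x) := by
  induction w with
  | nil => simp [hword]
  | cons a w ih => simp [hword, ih]

lemma hword_sub {N : ℕ} (c : ℝ) (u : Fin N → ℝ) (w : List (Fin N)) (x y : ℝ) :
    hword c u w x - hword c u w y = c ^ w.length * (x - y) := by
  induction w with
  | nil => simp [hword]
  | cons a w ih =>
    simp only [hword, List.length_cons, pow_succ]
    linear_combination c * ih

lemma hword_mem {N : ℕ} (c : ℝ) (u : Fin N → ℝ)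
    (hmaps : ∀ i, (fun x => c * x + u i) '' Set.Icc (0 : ℝ) 1 ⊆ Set.Icc (0 : ℝ) 1)
    (w : List (Fin N)) (x : ℝ) (hx : x ∈ Set.Icc (0 : ℝ) 1) :
    hword c u w x ∈ Set.Icc (0 : ℝ) 1 := by
  induction w with
  | nil => simpa [hword] using hx
  | cons a w ih => exact hmaps a ⟨_, ih, rfl⟩

lemma PiH_near {N : ℕ} (c : ℝ) (hc0 : 0 < c) (u : Fin N → ℝ)
    (hmaps : ∀ i, (fun x => c * x + u i) '' Set.Icc (0 : ℝ) 1 ⊆ Set.Icc (0 : ℝ) 1)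
    (i : ℕ → Fin N) (p : ℝ)
    (hp : Tendsto (fun n => hword c u (prefixWord i n) 0) atTop (nhds p))
    (ℓ : ℕ) (y : ℝ) (hy : y ∈ Set.Icc (0 : ℝ) 1) :
    |p - hword c u (prefixWord i ℓ) y| ≤ c ^ ℓ := by
  have h1 : Tendsto (fun n : ℕ => ℓ + n) atTop atTop :=
    tendsto_atTop_mono (fun n => Nat.le_add_left n ℓ) tendsto_id
  have h2 := ((hp.comp h1).sub_const (hword c u (prefixWord i ℓ) y)).abs
  refine le_of_tendsto h2 (Eventually.of_forall fun n => ?_)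
  have h3 : prefixWord i (ℓ + n) = prefixWord i ℓ ++ List.ofFn (fun k : Fin n => i (ℓ + k)) := by
    simp [prefixWord, List.ofFn_add]
  have hm := hword_mem c u hmaps (List.ofFn (fun k : Fin n => i (ℓ + k))) 0 (by simp)
  simp only [Function.comp, h3, hword_append, hword_sub]
  have hl : (prefixWord i ℓ).length = ℓ := by simp [prefixWord]
  rw [hl, abs_mul, abs_of_pos (pow_pos hc0 ℓ)]
  have : |hword c u (List.ofFn (fun k : Fin n => i (ℓ + k))) 0 - y| ≤ 1 := by
    rw [abs_le]; constructor <;> linarith [hm.1, hm.2, hy.1, hy.2]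
  nlinarith [pow_pos hc0 ℓ]

lemma PiH_measurable {N : ℕ} (c : ℝ) (u : Fin N → ℝ) (PiH : (ℕ → Fin N) → ℝ)
    (hPiH : ∀ i, Tendsto (fun n => hword c u (prefixWord i n) 0) atTop (nhds (PiH i))) :
    Measurable PiH := by
  refine measurable_of_tendsto_metrizable (f := fun n i => hword c u (prefixWord i n) 0)
    (fun n => ?_) (tendsto_pi_nhds.2 hPiH)
  have h : Measurable (fun w : Fin n → Fin N => hword c u (List.ofFn w) 0) :=
    measurable_of_countable _
  exact h.comp (g := fun w : Fin n → Fin N => hword c u (List.ofFn w) 0)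
    (f := fun (i : ℕ → Fin N) (k : Fin n) => i k) (by fun_prop)

lemma card_bound {N : ℕ} (μ : Measure (ℕ → Fin N)) (hμ : IsUniformBernoulli N μ) (ℓ : ℕ)
    (P : (Fin ℓ → Fin N) → Prop) (B : Set (ℕ → Fin N))
    (hB : ∀ τ, P τ → ∀ x : ℕ → Fin N, (∀ k : Fin ℓ, x k = τ k) → x ∈ B) :
    (Nat.card {τ // P τ} : ℝ≥0∞) * (1 / (N : ℝ≥0∞)) ^ ℓ ≤ μ B := by
  classical
  have hm : ∀ τ : Fin ℓ → Fin N, MeasurableSet {x : ℕ → Fin N | ∀ k : Fin ℓ, x k = τ k} := by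
    intro τ
    rw [setOf_forall]
    exact MeasurableSet.iInter fun k => measurableSet_eq_fun (by fun_prop) (by fun_prop)
  have h := measure_biUnion_finset (μ := μ) (s := Finset.univ.filter P)
    (f := fun τ => {x : ℕ → Fin N | ∀ k : Fin ℓ, x k = τ k}) (by
      intro a _ b _ hab
      refine Set.disjoint_left.2 fun x hx hy => hab ?_
      funext k
      exact (hx k).symm.trans (hy k)) (fun τ _ => hm τ)
  simp only [hμ.2, Finset.sum_const, nsmul_eq_mul] at h
  rw [Nat.card_eq_fintype_card, Fintype.card_subtype, ← h]
  refine measure_mono ?_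
  intro x hx
  simp only [Set.mem_iUnion] at hx
  obtain ⟨τ, hτ, hx⟩ := hx
  exact hB τ (Finset.mem_filter.1 hτ).2 x hx

/-- if `ν_x` has an `L^q` density for every `q > 1`, then for all `K > 0`
and `q > 1` there is `C = C(K,q)` such that every interval of length `K c^ℓ` intersects
at most `C (Nc)^ℓ c^{-ℓ/q}` of the level-`ℓ` cylinder intervals `h_τ([0,1])`. -/
theorem statement19 (N : ℕ) (hN : 2 ≤ N) (c : ℝ) (hc0 : 0 < c) (hc1 : c < 1)
    (u : Fin N → ℝ)
    (hmaps : ∀ i, (fun x => c * x + u i) '' Set.Icc (0 : ℝ) 1 ⊆ Set.Icc (0 : ℝ) 1)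
    (PiH : (ℕ → Fin N) → ℝ)
    (hPiH : ∀ i, Tendsto (fun n => hword c u (prefixWord i n) 0) atTop (nhds (PiH i)))
    (μ : Measure (ℕ → Fin N)) (hμ : IsUniformBernoulli N μ)
    (νx : Measure ℝ) (hνx : νx = μ.map PiH)
    (hLq : ∀ q > (1 : ℝ), HasLqDensity νx q) :
    ∀ K > (0 : ℝ), ∀ q > (1 : ℝ), ∃ C > (0 : ℝ), ∀ ℓ : ℕ, 1 ≤ ℓ → ∀ x : ℝ,
      (Nat.card {τ : Fin ℓ → Fin N //
          (hword c u (List.ofFn τ) '' Set.Icc (0 : ℝ) 1 ∩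
            Set.Icc x (x + K * c ^ ℓ)).Nonempty} : ℝ) ≤
        C * ((N : ℝ) * c) ^ ℓ * c ^ (-(ℓ : ℝ) / q) := by
  intro K hK q hq
  obtain ⟨φ, hφ, hfin⟩ := hLq q hq
  set A : ℝ≥0∞ := (∫⁻ t, φ t ^ q) ^ (1 / q) with hA
  have hAfin : A ≠ ⊤ := ENNReal.rpow_ne_top_of_nonneg (by positivity) hfin.ne
  have hK2 : 0 < (K + 2) ^ (1 - 1 / q) := Real.rpow_pos_of_pos (by linarith) _
  refine ⟨(A.toReal + 1) * (K + 2) ^ (1 - 1 / q), by positivity, fun ℓ _ x => ?_⟩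
  have hcl : 0 < c ^ ℓ := pow_pos hc0 ℓ
  have hmeas := PiH_measurable c u PiH hPiH
  have h1 := card_bound μ hμ ℓ (fun τ => (hword c u (List.ofFn τ) '' Set.Icc (0 : ℝ) 1 ∩
            Set.Icc x (x + K * c ^ ℓ)).Nonempty)
    (PiH ⁻¹' Set.Icc (x - c ^ ℓ) (x + (K + 1) * c ^ ℓ)) (by
      rintro τ ⟨_, ⟨y, hy, rfl⟩, hz⟩ i hi
      have hpre : prefixWord i ℓ = List.ofFn τ := by
        unfold prefixWord
        congr 1
        funext k
        exact hi k
      have h := PiH_near c hc0 u hmaps i (PiH i) (hPiH i) ℓ y hy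
      rw [hpre, abs_le] at h
      simp only [Set.mem_preimage, Set.mem_Icc] at hz ⊢
      constructor <;> nlinarith [h.1, h.2, hz.1, hz.2])
  rw [← Measure.map_apply hmeas measurableSet_Icc, ← hνx, hφ,
    withDensity_apply _ measurableSet_Icc] at h1
  have h2 := h1.trans (aux_holder φ q hq _)
  rw [← hA, Real.volume_Icc] at h2
  have hlen : x + (K + 1) * c ^ ℓ - (x - c ^ ℓ) = (K + 2) * c ^ ℓ := by ring
  have hq1 : 0 < 1 - 1 / q := by
    have : 1 / q < 1 := by rw [div_lt_one (by linarith)]; exact hq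
    linarith
  rw [hlen, ENNReal.ofReal_rpow_of_pos (by positivity)] at h2
  have h3 := ENNReal.toReal_mono (ENNReal.mul_ne_top hAfin ENNReal.ofReal_ne_top) h2
  rw [ENNReal.toReal_mul, ENNReal.toReal_mul, ENNReal.toReal_ofReal (by positivity),
    Real.mul_rpow (by linarith) hcl.le] at h3
  simp only [ENNReal.toReal_natCast, ENNReal.toReal_pow, ENNReal.toReal_div,
    ENNReal.toReal_one] at h3
  have h4 : (c ^ ℓ) ^ (1 - 1 / q) = c ^ ℓ * c ^ (-(ℓ : ℝ) / q) := by
    rw [← Real.rpow_natCast, ← Real.rpow_mul hc0.le, ← Real.rpow_add hc0]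
    congr 1; ring
  rw [h4] at h3
  have hNpos : (0 : ℝ) < N := by positivity
  have hr : 0 < c ^ (-(ℓ : ℝ) / q) := Real.rpow_pos_of_pos hc0 _
  rw [one_div, inv_pow, ← div_eq_mul_inv, div_le_iff₀ (by positivity)] at h3
  refine h3.trans ?_
  rw [mul_pow]
  have : 0 ≤ (K + 2) ^ (1 - 1 / q) * (c ^ ℓ * c ^ (-(ℓ : ℝ) / q)) * (N : ℝ) ^ ℓ := by positivity
  nlinarith

end
end
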